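/- arXiv:0806.0914 — 2 statements merged into one kernel-verified Lean document; each statement's English description precedes it below -/
import Mathlib

section
/- Continuity of entropy in (u,v). Let k ≥ 2 and let u, v ∈ A^ℕ satisfy u ≼ σⁿu ≼ v and u ≼ σⁿv ≼ v for all n ≥ 0. For every ε > 0 there exists N such that for every pair u′, v′ ∈ A^ℕ satisfying u′ ≼ σⁿu′ ≼ v′ and u′ ≼ σⁿv′ ≼ v′ for all n ≥ 0, if u′ₘ = uₘ and v′ₘ = vₘ for all m < N, then |h(Σ(u′,v′)) − h(Σ(u,v))| ≤ ε. -/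
open Filter Set

/-- The shift map on one-sided sequences. -/
def shft (x : ℕ → ℕ) : ℕ → ℕ := fun n => x (n + 1)

/-- Strict lexicographic order on one-sided sequences:
`x ≺ y` iff they differ and `x m < y m` at the first index `m` where they differ. -/
def lexLt (x y : ℕ → ℕ) : Prop := ∃ m, (∀ i, i < m → x i = y i) ∧ x m < y m

/-- Lexicographic order `x ≼ y` on one-sided sequences. -/
def lexLe (x y : ℕ → ℕ) : Prop := x = y ∨ lexLt x y

/-- The map `φ̄^{α,β} : ℝ → [0,1]`:  `0` for `t ≤ α`, `(t-α)/β` for `α ≤ t ≤ α+β`,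
`1` for `t ≥ α+β`. -/
noncomputable def phiB (α β t : ℝ) : ℝ :=
  if t ≤ α then 0 else if α + β ≤ t then 1 else (t - α) / β

/-- `φ̄ₙ^{α,β}(x) = φ̄^{α,β}(x₀ + φ̄^{α,β}(x₁ + ⋯ + φ̄^{α,β}(x_{n-1})⋯))`. -/
noncomputable def phiBN (α β : ℝ) : ℕ → (ℕ → ℕ) → ℝ
  | 0, _ => 0
  | n + 1, x => phiB α β (x 0 + phiBN α β n (shft x))

/-- `φ̄_∞^{α,β}(x) = limₙ φ̄ₙ^{α,β}(x)`; the sequence `φ̄ₙ^{α,β}(x)` is nondecreasing in `n`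
and bounded, so its limit is its supremum. -/
noncomputable def phiBInf (α β : ℝ) (x : ℕ → ℕ) : ℝ := ⨆ n, phiBN α β n x

/-- `T̂_{α,β}(x) = βx + α − ⌊βx + α⌋`. -/
noncomputable def Tlow (α β x : ℝ) : ℝ := β * x + α - ⌊β * x + α⌋

/-- `Ť_{α,β}(x) = βx + α + 1 − ⌈βx + α⌉`. -/
noncomputable def Thigh (α β x : ℝ) : ℝ := β * x + α + 1 - ⌈β * x + α⌉

/-- `k = ⌈α + β⌉`, the size of the alphabet `A = {0, …, k-1}`. -/
noncomputable def kAB (α β : ℝ) : ℕ := (⌈α + β⌉).toNat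

/-- The string `u^{α,β}`, the coding of the orbit of `0`:
`u^{α,β}ₙ = ⌊β T̂ⁿ_{α,β}(0) + α⌋`. -/
noncomputable def uItin (α β : ℝ) : ℕ → ℕ := fun n => (⌊β * (Tlow α β)^[n] 0 + α⌋).toNat

/-- The string `v^{α,β}`, the coding of the orbit of `1`:
`v^{α,β}ₙ = ⌈β Ťⁿ_{α,β}(1) + α⌉ − 1`. -/
noncomputable def vItin (α β : ℝ) : ℕ → ℕ := fun n => (⌈β * (Thigh α β)^[n] 1 + α⌉ - 1).toNat

/-- The shift space `Σ(u,v) = {x ∈ A^ℕ : u ≼ σⁿx ≼ v for all n ≥ 0}`, `A = {0,…,k-1}`. -/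
def SigSet (k : ℕ) (u v : ℕ → ℕ) : Set (ℕ → ℕ) :=
  {x | (∀ i, x i < k) ∧ ∀ n, lexLe u (shft^[n] x) ∧ lexLe (shft^[n] x) v}

/-- The number of words of length `n` in the language of `Σ(u,v)` (prefixes of elements). -/
noncomputable def nWords (k : ℕ) (u v : ℕ → ℕ) (n : ℕ) : ℕ :=
  Nat.card {w : Fin n → ℕ // ∃ x ∈ SigSet k u v, ∀ i : Fin n, x i.1 = w i}

/-- The topological entropy (base 2) of `Σ(u,v)`:
`h = limₙ (1/n) log₂ card(Lₙ)` (the limit exists by subadditivity, so it equals the limsup;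
it is `0` when `Σ(u,v) = ∅`). -/
noncomputable def entS (k : ℕ) (u v : ℕ → ℕ) : ℝ :=
  Filter.limsup (fun n : ℕ => Real.logb 2 (nWords k u v n) / (n : ℝ)) Filter.atTop

/-- Concatenation of the word `w₀ ⋯ w_{p-1}` (the first `p` letters of `w`) with the
string `y`. -/
def wcat (p : ℕ) (w y : ℕ → ℕ) : ℕ → ℕ := fun n => if n < p then w n else y (n - p)


/-- prefix of length `n` as a list -/
def pre (n : ℕ) (x : ℕ → ℕ) : List ℕ := List.ofFn (fun i : Fin n => x i.1)

lemma pre_succ (n : ℕ) (x : ℕ → ℕ) : pre (n+1) x = x 0 :: pre n (shft x) := by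
  simp [pre, List.ofFn_succ, shft]

lemma pre_zero (x : ℕ → ℕ) : pre 0 x = [] := by simp [pre]

lemma pre_add (m n : ℕ) (x : ℕ → ℕ) : pre (m+n) x = pre m x ++ pre n (shft^[m] x) := by
  induction m generalizing x with
  | zero => simp [pre_zero]
  | succ m ih =>
    rw [show m + 1 + n = (m + n) + 1 by ring, pre_succ, pre_succ, ih]
    simp

lemma lexLt_step (x y : ℕ → ℕ) :
    lexLt x y ↔ x 0 < y 0 ∨ (x 0 = y 0 ∧ lexLt (shft x) (shft y)) := by
  constructor
  · rintro ⟨m, h1, h2⟩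
    cases m with
    | zero => exact Or.inl h2
    | succ m =>
      exact Or.inr ⟨h1 0 (by omega), m, fun i hi => h1 (i+1) (by omega), h2⟩
  · rintro (h | ⟨h0, m, h1, h2⟩)
    · exact ⟨0, by simp, h⟩
    · refine ⟨m+1, fun i hi => ?_, h2⟩
      cases i with
      | zero => exact h0
      | succ i => exact h1 i (by omega)

lemma lexLt_of_pre (n : ℕ) (x y : ℕ → ℕ) (h : pre n x < pre n y) : lexLt x y := by
  induction n generalizing x y with
  | zero => simp [pre_zero] at h
  | succ n ih =>
    rw [pre_succ, pre_succ, List.cons_lt_cons_iff] at h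
    rw [lexLt_step]
    rcases h with h | ⟨h, h'⟩
    · exact Or.inl h
    · exact Or.inr ⟨h, ih _ _ h'⟩

lemma pre_le_of_lexLt (n : ℕ) (x y : ℕ → ℕ) (h : lexLt x y) : pre n x ≤ pre n y := by
  induction n generalizing x y with
  | zero => simp [pre_zero]
  | succ n ih =>
    rw [pre_succ, pre_succ, ← not_lt, List.cons_lt_cons_iff]
    rw [lexLt_step] at h
    rcases h with h | ⟨h, h'⟩
    · rintro (g | ⟨g, g'⟩) <;> omega
    · rintro (g | ⟨g, g'⟩)
      · omega
      · exact absurd g' (not_lt.mpr (ih _ _ h'))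

lemma pre_le_of_lexLe (n : ℕ) (x y : ℕ → ℕ) (h : lexLe x y) : pre n x ≤ pre n y := by
  rcases h with rfl | h
  · exact le_refl _
  · exact pre_le_of_lexLt n x y h

lemma shft_mem {k : ℕ} {u v x : ℕ → ℕ} (hx : x ∈ SigSet k u v) : shft x ∈ SigSet k u v :=
  ⟨fun i => hx.1 (i+1), fun n => by simpa using hx.2 (n+1)⟩

lemma shft_iter_mem {k : ℕ} {u v x : ℕ → ℕ} (hx : x ∈ SigSet k u v) (m : ℕ) :
    shft^[m] x ∈ SigSet k u v := by
  induction m with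
  | zero => exact hx
  | succ m ih => rw [Function.iterate_succ_apply']; exact shft_mem ih

/-- prepend a letter -/
def scons (c : ℕ) (y : ℕ → ℕ) : ℕ → ℕ := fun n => Nat.casesOn n c y

lemma shft_scons (c : ℕ) (y : ℕ → ℕ) : shft (scons c y) = y := rfl

/-- language -/
def lang (k : ℕ) (u v : ℕ → ℕ) (n : ℕ) : Set (List ℕ) := pre n '' SigSet k u v

lemma lang_finite (k : ℕ) (u v : ℕ → ℕ) (n : ℕ) : (lang k u v n).Finite := by
  have h : (Set.pi Set.univ (fun _ : Fin n => Set.Iio k)).Finite :=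
    Set.Finite.pi' (fun _ => Set.finite_Iio k) |>.subset (by intro f hf i; exact hf i trivial)
  refine (h.image (fun f => List.ofFn f)).subset ?_
  rintro _ ⟨x, hx, rfl⟩
  exact ⟨fun i => x i.1, fun i _ => hx.1 _, rfl⟩

lemma nWords_eq (k : ℕ) (u v : ℕ → ℕ) (n : ℕ) : nWords k u v n = (lang k u v n).ncard := by
  have : lang k u v n = List.ofFn '' {w : Fin n → ℕ | ∃ x ∈ SigSet k u v, ∀ i : Fin n, x i.1 = w i} := by
    ext l; constructor
    · rintro ⟨x, hx, rfl⟩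
      exact ⟨fun i => x i.1, ⟨x, hx, fun i => rfl⟩, rfl⟩
    · rintro ⟨w, ⟨x, hx, h⟩, rfl⟩
      exact ⟨x, hx, by simp [pre, h]⟩
  rw [this, Set.ncard_image_of_injective _ List.ofFn_injective]
  rfl

/-- language as a finset -/
noncomputable def langF (k : ℕ) (u v : ℕ → ℕ) (n : ℕ) : Finset (List ℕ) :=
  (lang_finite k u v n).toFinset

lemma mem_langF {k : ℕ} {u v : ℕ → ℕ} {n : ℕ} {l : List ℕ} :
    l ∈ langF k u v n ↔ ∃ x ∈ SigSet k u v, pre n x = l := by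
  simp [langF, lang]

lemma nWords_eq_card (k : ℕ) (u v : ℕ → ℕ) (n : ℕ) : nWords k u v n = (langF k u v n).card := by
  rw [nWords_eq, langF, Set.ncard_eq_toFinset_card _ (lang_finite k u v n)]

lemma cons_mem_langF {k : ℕ} {u v : ℕ → ℕ} (hu : u ∈ SigSet k u v) (hv : v ∈ SigSet k u v)
    (n : ℕ) (c : ℕ) (w : List ℕ) :
    c :: w ∈ langF k u v (n+1) ↔
      w ∈ langF k u v n ∧ pre (n+1) u ≤ c :: w ∧ c :: w ≤ pre (n+1) v := by
  simp only [mem_langF]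
  constructor
  · rintro ⟨x, hx, h⟩
    rw [← h]
    refine ⟨⟨shft x, shft_mem hx, ?_⟩, pre_le_of_lexLe _ _ _ (hx.2 0).1,
      pre_le_of_lexLe _ _ _ (hx.2 0).2⟩
    rw [pre_succ] at h
    exact (List.cons.inj h).2
  · rintro ⟨⟨y, hy, rfl⟩, h1, h2⟩
    rcases h1.eq_or_lt with h1 | h1
    · exact ⟨u, hu, h1⟩
    rcases h2.eq_or_lt with h2 | h2
    · exact ⟨v, hv, h2.symm⟩
    have e : c :: pre n y = pre (n+1) (scons c y) := by rw [pre_succ, shft_scons]; rfl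
    rw [e] at h1 h2
    have l1 := lexLt_of_pre _ _ _ h1
    have l2 := lexLt_of_pre _ _ _ h2
    refine ⟨scons c y, ⟨?_, ?_⟩, e.symm⟩
    · intro i
      cases i with
      | zero =>
        rw [lexLt_step] at l2
        have := hv.1 0
        have : scons c y 0 ≤ v 0 := by omega
        omega
      | succ i => exact hy.1 i
    · intro m
      cases m with
      | zero => exact ⟨Or.inr l1, Or.inr l2⟩
      | succ m => rw [Function.iterate_succ_apply, shft_scons]; exact hy.2 m

/-- words below `x` -/
noncomputable def below (k : ℕ) (u v : ℕ → ℕ) (n : ℕ) (x : ℕ → ℕ) : Finset (List ℕ) :=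
  (langF k u v n).filter (· < pre n x)

/-- extended words below `x` -/
noncomputable def extw (k : ℕ) (u v : ℕ → ℕ) (n : ℕ) (x : ℕ → ℕ) : Finset (List ℕ) :=
  ((Finset.range (x 0) ×ˢ langF k u v n) ∪ ({x 0} ×ˢ below k u v n (shft x))).image
    (fun p => p.1 :: p.2)

lemma card_ext (k : ℕ) (u v : ℕ → ℕ) (n : ℕ) (x : ℕ → ℕ) :
    (extw k u v n x).card = x 0 * (langF k u v n).card + (below k u v n (shft x)).card := by
  rw [extw, Finset.card_image_of_injective, Finset.card_union_of_disjoint]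
  · simp
  · rw [Finset.disjoint_left]
    rintro ⟨a, b⟩ h1 h2
    simp at h1 h2
    omega
  · rintro ⟨a, b⟩ ⟨c, d⟩ h
    simpa using h

lemma mem_ext {k : ℕ} {u v : ℕ → ℕ} {n : ℕ} {x : ℕ → ℕ} {c : ℕ} {w : List ℕ} :
    c :: w ∈ extw k u v n x ↔ w ∈ langF k u v n ∧ c :: w < pre (n+1) x := by
  rw [pre_succ, List.cons_lt_cons_iff]
  simp only [extw, Finset.mem_image, Finset.mem_union, Finset.mem_product, Finset.mem_range,
    Finset.mem_singleton, below, Finset.mem_filter, Prod.exists, List.cons.injEq]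
  constructor
  · rintro ⟨a, b, h, rfl, rfl⟩; tauto
  · rintro h; exact ⟨c, w, by tauto, rfl, rfl⟩

lemma nil_ext {k : ℕ} {u v : ℕ → ℕ} {n : ℕ} {x : ℕ → ℕ} : [] ∉ extw k u v n x := by
  simp [extw]

lemma nil_langF {k : ℕ} {u v : ℕ → ℕ} {n : ℕ} : [] ∉ langF k u v (n+1) := by
  simp [mem_langF, pre_succ]

lemma below_succ {k : ℕ} {u v : ℕ → ℕ} (hu : u ∈ SigSet k u v) (hv : v ∈ SigSet k u v)
    (n : ℕ) {x : ℕ → ℕ} (hx : x ∈ SigSet k u v) :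
    below k u v (n+1) x = extw k u v n x \ extw k u v n u := by
  ext l
  cases l with
  | nil => simp [below, nil_ext, nil_langF]
  | cons c w =>
    have := pre_le_of_lexLe (n+1) _ _ (hx.2 0).2
    simp only [below, Finset.mem_filter, Finset.mem_sdiff, mem_ext, cons_mem_langF hu hv]
    constructor
    · rintro ⟨⟨h1, h2, h3⟩, h4⟩
      exact ⟨⟨h1, h4⟩, fun h => absurd h.2 (not_lt.mpr h2)⟩
    · rintro ⟨⟨h1, h4⟩, h5⟩
      refine ⟨⟨h1, not_lt.mp fun h => h5 ⟨h1, h⟩, (h4.trans_le this).le⟩, h4⟩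

lemma card_below_succ {k : ℕ} {u v : ℕ → ℕ} (hu : u ∈ SigSet k u v) (hv : v ∈ SigSet k u v)
    (n : ℕ) {x : ℕ → ℕ} (hx : x ∈ SigSet k u v) :
    ((below k u v (n+1) x).card : ℝ) = ((x 0 : ℝ) - u 0) * nWords k u v n
      + (below k u v n (shft x)).card - (below k u v n (shft u)).card := by
  have hsub : extw k u v n u ⊆ extw k u v n x := by
    intro l
    cases l with
    | nil => simp [nil_ext]
    | cons c w =>
      rw [mem_ext, mem_ext]
      rintro ⟨h1, h2⟩
      exact ⟨h1, h2.trans_le (pre_le_of_lexLe (n+1) _ _ (hx.2 0).1)⟩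
  rw [below_succ hu hv n hx, Finset.cast_card_sdiff hsub, card_ext, card_ext, nWords_eq_card]
  push_cast
  ring

lemma card_below {k : ℕ} {u v : ℕ → ℕ} (hu : u ∈ SigSet k u v) (hv : v ∈ SigSet k u v)
    (n : ℕ) {x : ℕ → ℕ} (hx : x ∈ SigSet k u v) :
    ((below k u v n x).card : ℝ) =
      ∑ p ∈ Finset.range n, ((x p : ℝ) - u p) * nWords k u v (n - 1 - p) := by
  induction n generalizing x with
  | zero => simp [below, pre_zero]
  | succ n ih =>
    rw [card_below_succ hu hv n hx, ih (shft_mem hx), ih (shft_mem hu), Finset.sum_range_succ',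
      add_sub_assoc, ← Finset.sum_sub_distrib, add_comm]
    congr 1
    refine Finset.sum_congr rfl fun i _ => ?_
    rw [show n + 1 - 1 - (i+1) = n - 1 - i by omega]
    simp only [shft]
    ring

lemma nWords_below {k : ℕ} {u v : ℕ → ℕ} (hv : v ∈ SigSet k u v) (n : ℕ) :
    nWords k u v n = 1 + (below k u v n v).card := by
  have : langF k u v n = insert (pre n v) (below k u v n v) := by
    ext l
    simp only [below, Finset.mem_insert, Finset.mem_filter]
    constructor
    · intro h
      obtain ⟨x, hx, rfl⟩ := mem_langF.mp h
      rcases (pre_le_of_lexLe n _ _ (hx.2 0).2).eq_or_lt with h' | h'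
      · exact Or.inl h'
      · exact Or.inr ⟨h, h'⟩
    · rintro (rfl | h)
      · exact mem_langF.mpr ⟨v, hv, rfl⟩
      · exact h.1
  rw [nWords_eq_card, this, Finset.card_insert_of_notMem (by simp [below]), add_comm]

lemma nWords_rec {k : ℕ} {u v : ℕ → ℕ} (hu : u ∈ SigSet k u v) (hv : v ∈ SigSet k u v) (n : ℕ) :
    (nWords k u v n : ℝ) =
      1 + ∑ p ∈ Finset.range n, ((v p : ℝ) - u p) * nWords k u v (n - 1 - p) := by
  rw [← card_below hu hv n hv, nWords_below hv n]; push_cast; rfl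

lemma nWords_mul (k : ℕ) (u v : ℕ → ℕ) (m n : ℕ) :
    nWords k u v (m+n) ≤ nWords k u v m * nWords k u v n := by
  simp only [nWords_eq_card]
  refine le_trans (Finset.card_le_card ?_)
    (Finset.card_image₂_le (fun a b => a ++ b) (langF k u v m) (langF k u v n))
  intro l hl
  obtain ⟨x, hx, rfl⟩ := mem_langF.mp hl
  rw [pre_add]
  exact Finset.mem_image₂_of_mem (mem_langF.mpr ⟨x, hx, rfl⟩)
    (mem_langF.mpr ⟨_, shft_iter_mem hx m, rfl⟩)

lemma one_le_nWords {k : ℕ} {u v : ℕ → ℕ} (hv : v ∈ SigSet k u v) (n : ℕ) :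
    1 ≤ nWords k u v n := by
  rw [nWords_below hv]; omega

/-- kneading coefficients -/
def kn (u v : ℕ → ℕ) : ℕ → ℝ
  | 0 => 1
  | j+1 => (u j : ℝ) - v j

lemma kn_conv {k : ℕ} {u v : ℕ → ℕ} (hu : u ∈ SigSet k u v) (hv : v ∈ SigSet k u v) (n : ℕ) :
    ∑ p ∈ Finset.HasAntidiagonal.antidiagonal n, kn u v p.1 * nWords k u v p.2 = 1 := by
  rw [Finset.Nat.sum_antidiagonal_eq_sum_range_succ (fun i j => kn u v i * (nWords k u v j : ℝ)),
    Finset.sum_range_succ']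
  simp only [kn, Nat.sub_zero, one_mul]
  rw [nWords_rec hu hv n, add_comm, add_assoc, ← Finset.sum_add_distrib]
  rw [Finset.sum_eq_zero, add_zero]
  intro i _
  rw [show n - (i+1) = n - 1 - i by omega]
  ring

lemma kn_abs {k : ℕ} (hk : 2 ≤ k) {u v : ℕ → ℕ} (hu : u ∈ SigSet k u v) (hv : v ∈ SigSet k u v)
    (n : ℕ) : |kn u v n| ≤ k := by
  have hk' : (2:ℝ) ≤ k := by exact_mod_cast hk
  cases n with
  | zero => simp [kn]; linarith
  | succ n =>
    have h1 : (u n : ℝ) < k := by exact_mod_cast hu.1 n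
    have h2 : (v n : ℝ) < k := by exact_mod_cast hv.1 n
    have h3 : (0:ℝ) ≤ u n := by positivity
    have h4 : (0:ℝ) ≤ v n := by positivity
    simp only [kn, abs_le]; constructor <;> linarith

section analysis

lemma summ_bdd {a : ℕ → ℝ} {K : ℝ} (ha : ∀ n, |a n| ≤ K) {t : ℝ} (ht0 : 0 ≤ t) (ht : t < 1) :
    Summable (fun n => ‖a n * t ^ n‖) := by
  refine Summable.of_nonneg_of_le (fun _ => norm_nonneg _) (fun n => ?_)
    ((summable_geometric_of_lt_one ht0 ht).mul_left K)
  rw [norm_mul, Real.norm_eq_abs, Real.norm_of_nonneg (pow_nonneg ht0 n)]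
  exact mul_le_mul_of_nonneg_right (ha n) (pow_nonneg ht0 n)

/-- the function `(1-t) * ∑ a_n t^n` -/
noncomputable def Dfun (a : ℕ → ℝ) (t : ℝ) : ℝ := (1 - t) * ∑' n, a n * t ^ n

lemma Dfun_mul {a W : ℕ → ℝ} {K : ℝ} (ha : ∀ n, |a n| ≤ K)
    (hc : ∀ n, ∑ p ∈ Finset.HasAntidiagonal.antidiagonal n, a p.1 * W p.2 = 1)
    {t : ℝ} (ht0 : 0 ≤ t) (ht : t < 1) (hW : ∀ n, 1 ≤ W n) (hs : Summable (fun n => W n * t ^ n)) :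
    Dfun a t * ∑' n, W n * t ^ n = 1 := by
  have hs' : Summable (fun n => ‖W n * t ^ n‖) := hs.norm
  rw [Dfun, mul_assoc, tsum_mul_tsum_eq_tsum_sum_antidiagonal_of_summable_norm
    (summ_bdd ha ht0 ht) hs']
  have : ∀ n, ∑ p ∈ Finset.HasAntidiagonal.antidiagonal n, a p.1 * t ^ p.1 * (W p.2 * t ^ p.2) = t ^ n := by
    intro n
    rw [← one_mul (t ^ n), ← hc n, Finset.sum_mul]
    refine Finset.sum_congr rfl fun p hp => ?_
    rw [← Finset.HasAntidiagonal.mem_antidiagonal.mp hp, pow_add]; ring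
  simp_rw [this]
  rw [tsum_geometric_of_lt_one ht0 ht]
  exact mul_inv_cancel₀ (by linarith)

lemma Dfun_cont {a : ℕ → ℝ} {K : ℝ} (ha : ∀ n, |a n| ≤ K) {q : ℝ} (hq0 : 0 ≤ q) (hq : q < 1) :
    ContinuousOn (Dfun a) (Set.Icc 0 q) := by
  have hK : 0 ≤ K := (abs_nonneg _).trans (ha 0)
  refine ContinuousOn.mul (by fun_prop) ?_
  refine continuousOn_tsum (u := fun n => K * q ^ n) (fun i => by fun_prop)
    ((summable_geometric_of_lt_one hq0 hq).mul_left K) ?_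
  intro n x hx
  rw [norm_mul, Real.norm_eq_abs, Real.norm_of_nonneg (pow_nonneg hx.1 n)]
  exact mul_le_mul (ha n) (pow_le_pow_left₀ hx.1 hx.2 n) (pow_nonneg hx.1 n) hK

lemma Dfun_close {a b : ℕ → ℝ} {K : ℝ} (ha : ∀ n, |a n| ≤ K) (hb : ∀ n, |b n| ≤ K)
    {N : ℕ} (hab : ∀ n, n < N → a n = b n) {t : ℝ} (ht0 : 0 ≤ t) (ht : t < 1) :
    |Dfun a t - Dfun b t| ≤ 2 * K * t ^ N := by
  have hK : 0 ≤ K := (abs_nonneg _).trans (ha 0)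
  have sa := (summ_bdd ha ht0 ht).of_norm
  have sb := (summ_bdd hb ht0 ht).of_norm
  have hg : HasSum (fun n => 2 * K * t ^ N * t ^ n) (2 * K * t ^ N * (1 - t)⁻¹) :=
    (hasSum_geometric_of_lt_one ht0 ht).mul_left _
  have key : |∑' n, a n * t ^ n - ∑' n, b n * t ^ n| ≤ 2 * K * t ^ N * (1 - t)⁻¹ := by
    rw [← sa.tsum_sub sb, ← (sa.sub sb).sum_add_tsum_nat_add N, Finset.sum_eq_zero, zero_add]
    · rw [← Real.norm_eq_abs]
      refine tsum_of_norm_bounded hg fun n => ?_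
      rw [← sub_mul, norm_mul, Real.norm_eq_abs, Real.norm_of_nonneg (pow_nonneg ht0 _), pow_add,
        mul_comm (t ^ n), ← mul_assoc]
      refine mul_le_mul_of_nonneg_right (mul_le_mul_of_nonneg_right ?_ (pow_nonneg ht0 _))
        (pow_nonneg ht0 _)
      refine (abs_sub (a (n+N)) (b (n+N))).trans ?_
      linarith [ha (n+N), hb (n+N)]
    · intro i hi
      rw [hab i (Finset.mem_range.mp hi), sub_self]
  have h1 : 0 < 1 - t := by linarith
  rw [Dfun, Dfun, ← mul_sub, abs_mul, abs_of_pos h1]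
  calc _ ≤ (1 - t) * (2 * K * t ^ N * (1 - t)⁻¹) := mul_le_mul_of_nonneg_left key h1.le
    _ = _ := by field_simp

lemma exists_Dfun_ne {a : ℕ → ℝ} {K : ℝ} (ha : ∀ n, |a n| ≤ K) (ha0 : a 0 = 1)
    {r s : ℝ} (hr : 0 < r) (hrs : r < s) (hs : s < 1) :
    ∃ ρ, r < ρ ∧ ρ < s ∧ Dfun a ρ ≠ 0 := by
  by_contra! hcon
  have hK : 0 ≤ K := (abs_nonneg _).trans (ha 0)
  let F : ℂ → ℂ := fun z => ∑' n, (a n : ℂ) * z ^ n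
  have hd : DifferentiableOn ℂ F (Metric.ball 0 s) := by
    refine Complex.differentiableOn_tsum_of_summable_norm (u := fun n => K * s ^ n)
      ((summable_geometric_of_lt_one (hr.trans hrs).le hs).mul_left K) (fun i => by fun_prop)
      Metric.isOpen_ball ?_
    intro n z hz
    rw [mem_ball_zero_iff] at hz
    rw [norm_mul, norm_pow, Complex.norm_real]
    exact mul_le_mul (ha n) (pow_le_pow_left₀ (norm_nonneg _) hz.le n) (by positivity) hK
  have han := hd.analyticOnNhd Metric.isOpen_ball
  have hz : ∀ ρ : ℝ, r < ρ → ρ < s → F ρ = 0 := by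
    intro ρ h1 h2
    have := hcon ρ h1 h2
    rw [Dfun, mul_eq_zero] at this
    rcases this with h | h
    · linarith
    · have : F ρ = ((∑' n, a n * ρ ^ n : ℝ) : ℂ) := by
        simp only [F]; push_cast; rfl
      rw [this, h]; simp
  set m : ℝ := (r + s) / 2 with hm
  have hmem : (m : ℂ) ∈ Metric.ball (0:ℂ) s := by
    rw [mem_ball_zero_iff, Complex.norm_real, Real.norm_of_nonneg (by linarith)]; linarith
  have hfr : ∃ᶠ z in nhdsWithin (m : ℂ) {(m:ℂ)}ᶜ, F z = 0 := by
    have ht : Tendsto (fun x : ℝ => (x : ℂ)) (nhdsWithin m (Set.Ioi m)) (nhdsWithin (m : ℂ) {(m:ℂ)}ᶜ) := by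
      refine tendsto_nhdsWithin_iff.mpr ⟨?_, ?_⟩
      · exact (Complex.continuous_ofReal.tendsto m).mono_left nhdsWithin_le_nhds
      · filter_upwards [self_mem_nhdsWithin] with x hx
        simp only [Set.mem_compl_iff, Set.mem_singleton_iff, Complex.ofReal_inj]
        exact ne_of_gt hx
    refine ht.frequently (Eventually.frequently ?_)
    filter_upwards [Ioo_mem_nhdsGT (show m < s by linarith)] with x hx
    exact hz x (by linarith [hx.1]) hx.2
  have h0 := han.eqOn_zero_of_preconnected_of_frequently_eq_zero
    (convex_ball (0:ℂ) s).isPreconnected hmem hfr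
    (show (0:ℂ) ∈ Metric.ball (0:ℂ) s by simp; linarith)
  have : F 0 = 1 := by
    simp only [F]
    rw [tsum_eq_single 0]
    · simp [ha0]
    · intro n hn; simp [hn]
  rw [this] at h0
  simp at h0

end analysis

section entropy

variable {k : ℕ} {u v : ℕ → ℕ}

lemma logW_subadd (hv : v ∈ SigSet k u v) :
    Subadditive (fun n => Real.logb 2 (nWords k u v n)) := by
  intro m n
  have h1 : (0:ℝ) < nWords k u v m := by exact_mod_cast one_le_nWords hv m
  have h2 : (0:ℝ) < nWords k u v n := by exact_mod_cast one_le_nWords hv n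
  have h3 : (0:ℝ) < nWords k u v (m+n) := by exact_mod_cast one_le_nWords hv (m+n)
  change Real.logb 2 _ ≤ Real.logb 2 _ + Real.logb 2 _
  rw [← Real.logb_mul h1.ne' h2.ne']
  refine Real.logb_le_logb_of_le (by norm_num) h3 ?_
  exact_mod_cast nWords_mul k u v m n

lemma logW_nonneg (hv : v ∈ SigSet k u v) (n : ℕ) : 0 ≤ Real.logb 2 (nWords k u v n) :=
  Real.logb_nonneg (by norm_num) (by exact_mod_cast one_le_nWords hv n)

lemma logW_bdd (hv : v ∈ SigSet k u v) :
    BddBelow (Set.range fun n : ℕ => Real.logb 2 (nWords k u v n) / n) :=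
  ⟨0, by rintro _ ⟨n, rfl⟩; exact div_nonneg (logW_nonneg hv n) (by positivity)⟩

lemma ent_tendsto (hv : v ∈ SigSet k u v) :
    Tendsto (fun n : ℕ => Real.logb 2 (nWords k u v n) / n) atTop (nhds (entS k u v)) := by
  have := (logW_subadd hv).tendsto_lim (logW_bdd hv)
  rw [entS, this.limsup_eq]
  exact this

lemma ent_le (hv : v ∈ SigSet k u v) {n : ℕ} (hn : n ≠ 0) :
    entS k u v ≤ Real.logb 2 (nWords k u v n) / n := by
  have := (logW_subadd hv).tendsto_lim (logW_bdd hv)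
  rw [entS, this.limsup_eq]
  exact (logW_subadd hv).lim_le_div (logW_bdd hv) hn

lemma ent_nonneg (hv : v ∈ SigSet k u v) : 0 ≤ entS k u v :=
  ge_of_tendsto' (ent_tendsto hv) fun n => div_nonneg (logW_nonneg hv n) (by positivity)

lemma W_lower (hv : v ∈ SigSet k u v) (n : ℕ) :
    ((2:ℝ) ^ entS k u v) ^ n ≤ nWords k u v n := by
  have h1 : (0:ℝ) < nWords k u v n := by exact_mod_cast one_le_nWords hv n
  rcases Nat.eq_zero_or_pos n with rfl | hn
  · simpa using one_le_nWords hv 0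
  · rw [← Real.rpow_natCast, ← Real.rpow_mul (by norm_num), ← Real.le_logb_iff_rpow_le (by norm_num) h1]
    have := ent_le hv hn.ne'
    rwa [le_div_iff₀ (by exact_mod_cast hn)] at this

/-- Summability below the radius of convergence. -/
lemma W_summable (hv : v ∈ SigSet k u v) {h t : ℝ} (hh : entS k u v < h) (ht0 : 0 ≤ t)
    (ht : t < 2 ^ (-h)) : Summable (fun n => (nWords k u v n : ℝ) * t ^ n) := by
  have hpos : (0:ℝ) < 2 ^ (-h) := by positivity
  have hev : ∀ᶠ n in atTop, (nWords k u v n : ℝ) ≤ ((2:ℝ) ^ h) ^ n := by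
    filter_upwards [(ent_tendsto hv).eventually (gt_mem_nhds hh), eventually_gt_atTop 0] with n hn hn0
    have h1 : (0:ℝ) < nWords k u v n := by exact_mod_cast one_le_nWords hv n
    rw [← Real.rpow_natCast, ← Real.rpow_mul (by norm_num), ← Real.logb_le_iff_le_rpow (by norm_num) h1]
    rw [div_lt_iff₀ (by exact_mod_cast hn0)] at hn
    exact hn.le
  have hlt : 2 ^ h * t < 1 := by
    rw [Real.rpow_neg (by norm_num)] at ht
    have : (0:ℝ) < 2 ^ h := by positivity
    calc 2 ^ h * t < 2 ^ h * (2 ^ h)⁻¹ := mul_lt_mul_of_pos_left ht this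
      _ = 1 := mul_inv_cancel₀ this.ne'
  refine summable_of_isBigO_nat (summable_geometric_of_lt_one (by positivity) hlt) ?_
  refine Asymptotics.IsBigO.of_bound 1 ?_
  filter_upwards [hev] with n hn
  rw [Real.norm_of_nonneg (by positivity), Real.norm_of_nonneg (by positivity), one_mul, mul_pow]
  exact mul_le_mul_of_nonneg_right hn (by positivity)

lemma D_root (hk : 2 ≤ k) (hu : u ∈ SigSet k u v) (hv : v ∈ SigSet k u v)
    (hpos : 0 < entS k u v) : Dfun (kn u v) (2 ^ (-entS k u v)) ≤ 0 := by
  set r : ℝ := 2 ^ (-entS k u v) with hr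
  have hr0 : 0 < r := by positivity
  have hr1 : r < 1 := Real.rpow_lt_one_of_one_lt_of_neg (by norm_num) (by linarith)
  have hrinv : (2:ℝ) ^ entS k u v = r⁻¹ := by rw [hr, Real.rpow_neg (by norm_num), inv_inv]
  have bound : ∀ t, 0 ≤ t → t < r → Dfun (kn u v) t ≤ 1 - t / r := by
    intro t ht0 ht
    obtain ⟨t', h1, h2⟩ := exists_between ht
    have hlog : entS k u v < -Real.logb 2 t' := by
      have : Real.logb 2 t' < -entS k u v := by
        rw [Real.logb_lt_iff_lt_rpow (by norm_num) (by linarith)]; exact h2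
      linarith
    have hsum : Summable (fun n => (nWords k u v n : ℝ) * t ^ n) := by
      refine W_summable hv hlog ht0 ?_
      rwa [neg_neg, Real.rpow_logb (by norm_num) (by norm_num) (by linarith)]
    have hm := Dfun_mul (kn_abs hk hu hv) (kn_conv hu hv) ht0 (ht.trans hr1)
      (fun n => by exact_mod_cast one_le_nWords hv n) hsum
    have hq : t / r < 1 := by rw [div_lt_one hr0]; exact ht
    have hq0 : 0 ≤ t / r := by positivity
    have hle : (1 - t / r)⁻¹ ≤ ∑' n, (nWords k u v n : ℝ) * t ^ n := by
      rw [← tsum_geometric_of_lt_one hq0 hq]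
      refine (summable_geometric_of_lt_one hq0 hq).tsum_le_tsum (fun n => ?_) hsum
      have := W_lower hv n
      rw [hrinv] at this
      rw [div_eq_inv_mul, mul_pow]
      exact mul_le_mul_of_nonneg_right this (by positivity)
    have hp : 0 < 1 - t / r := by linarith
    have hS : 0 < ∑' n, (nWords k u v n : ℝ) * t ^ n := lt_of_lt_of_le (by positivity) hle
    rw [eq_div_of_mul_eq hS.ne' hm, one_div]
    exact inv_le_of_inv_le₀ hp hle
  have hc := (Dfun_cont (kn_abs hk hu hv) hr0.le hr1) r ⟨hr0.le, le_refl _⟩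
  have hc' : Tendsto (Dfun (kn u v)) (nhdsWithin r (Set.Ioo 0 r)) (nhds (Dfun (kn u v) r)) :=
    hc.mono_left (nhdsWithin_mono _ Set.Ioo_subset_Icc_self)
  have hl : Tendsto (fun t : ℝ => 1 - t / r) (nhdsWithin r (Set.Ioo 0 r)) (nhds (1 - r / r)) :=
    (Continuous.tendsto (by fun_prop) r).mono_left nhdsWithin_le_nhds
  have : (nhdsWithin r (Set.Ioo 0 r)).NeBot := by
    rw [nhdsWithin_Ioo_eq_nhdsLT hr0]; infer_instance
  have := le_of_tendsto_of_tendsto hc' hl (by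
    filter_upwards [self_mem_nhdsWithin] with t ht
    exact bound t ht.1.le ht.2)
  rwa [div_self hr0.ne', sub_self] at this

lemma D_mono (hk : 2 ≤ k) (hu : u ∈ SigSet k u v) (hv : v ∈ SigSet k u v) {h r ρ : ℝ}
    (hh : entS k u v < h) (hr : 0 ≤ r) (hrρ : r < ρ) (hρ : ρ < 2 ^ (-h)) (hρ1 : ρ < 1) :
    0 < Dfun (kn u v) ρ ∧ Dfun (kn u v) ρ ≤ Dfun (kn u v) r := by
  have s1 := W_summable hv hh hr (hrρ.trans hρ)
  have s2 := W_summable hv hh (hr.trans hrρ.le) hρ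
  have hW : ∀ n, (1:ℝ) ≤ nWords k u v n := fun n => by exact_mod_cast one_le_nWords hv n
  have m1 := Dfun_mul (kn_abs hk hu hv) (kn_conv hu hv) hr (hrρ.trans hρ1) hW s1
  have m2 := Dfun_mul (kn_abs hk hu hv) (kn_conv hu hv) (hr.trans hrρ.le) hρ1 hW s2
  have le : ∑' n, (nWords k u v n : ℝ) * r ^ n ≤ ∑' n, (nWords k u v n : ℝ) * ρ ^ n :=
    s1.tsum_le_tsum (fun n => mul_le_mul_of_nonneg_left (pow_le_pow_left₀ hr hrρ.le n)
      (by positivity)) s2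
  have p1 : 0 < ∑' n, (nWords k u v n : ℝ) * r ^ n := by
    refine lt_of_le_of_ne (tsum_nonneg fun n => by positivity) ?_
    intro h0; rw [← h0] at m1; simp at m1
  rw [eq_div_of_mul_eq p1.ne' m1, eq_div_of_mul_eq (p1.trans_le le).ne' m2]
  exact ⟨by have := p1.trans_le le; positivity, one_div_le_one_div_of_le p1 le⟩

end entropy

lemma nWords_congr {k : ℕ} {u v u' v' : ℕ → ℕ} (hu : u ∈ SigSet k u v) (hv : v ∈ SigSet k u v)
    (hu' : u' ∈ SigSet k u' v') (hv' : v' ∈ SigSet k u' v') {N : ℕ}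
    (h : ∀ m, m < N → u' m = u m ∧ v' m = v m) (n : ℕ) (hn : n ≤ N) :
    (nWords k u' v' n : ℝ) = nWords k u v n := by
  induction n using Nat.strong_induction_on with
  | _ n ih =>
    rw [nWords_rec hu hv, nWords_rec hu' hv']
    congr 1
    refine Finset.sum_congr rfl fun i hi => ?_
    rw [Finset.mem_range] at hi
    rw [(h i (by omega)).1, (h i (by omega)).2, ih (n-1-i) (by omega) (by omega)]

lemma kn_congr {u v u' v' : ℕ → ℕ} {N : ℕ}
    (h : ∀ m, m < N → u' m = u m ∧ v' m = v m) (n : ℕ) (hn : n < N) :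
    kn u' v' n = kn u v n := by
  cases n with
  | zero => rfl
  | succ n => simp only [kn]; rw [(h n (by omega)).1, (h n (by omega)).2]

lemma lower_part {k : ℕ} (hk : 2 ≤ k) {u v : ℕ → ℕ} (hu : u ∈ SigSet k u v)
    (hv : v ∈ SigSet k u v) {ε : ℝ} (hε : 0 < ε) :
    ∃ N : ℕ, ∀ u' v' : ℕ → ℕ, u' ∈ SigSet k u' v' → v' ∈ SigSet k u' v' →
      (∀ m, m < N → u' m = u m ∧ v' m = v m) → entS k u v - ε ≤ entS k u' v' := by
  by_cases hle : entS k u v ≤ ε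
  · exact ⟨0, fun u' v' _ hv' _ => by linarith [ent_nonneg hv']⟩
  push Not at hle
  have hpos : 0 < entS k u v := hε.trans hle
  set r : ℝ := 2 ^ (-entS k u v) with hr
  set s : ℝ := 2 ^ (-(entS k u v - ε)) with hs
  have hr0 : 0 < r := by positivity
  have hrs : r < s := Real.rpow_lt_rpow_of_exponent_lt (by norm_num) (by linarith)
  have hs1 : s < 1 := Real.rpow_lt_one_of_one_lt_of_neg (by norm_num) (by linarith)
  obtain ⟨ρ, h1, h2, h3⟩ := exists_Dfun_ne (kn_abs hk hu hv) rfl hr0 hrs hs1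
  have hroot : Dfun (kn u v) r ≤ 0 := D_root hk hu hv hpos
  have hρ1 := h2.trans hs1
  have hη : 0 < |Dfun (kn u v) ρ| / 2 := by positivity
  have ht : Tendsto (fun N : ℕ => 2 * (k:ℝ) * ρ ^ N) atTop (nhds (2 * (k:ℝ) * 0)) :=
    (tendsto_pow_atTop_nhds_zero_of_lt_one (hr0.trans h1).le hρ1).const_mul _
  rw [mul_zero] at ht
  obtain ⟨N, hN⟩ := (ht.eventually (gt_mem_nhds hη)).exists
  refine ⟨N, fun u' v' hu' hv' hag => ?_⟩
  by_contra! hcon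
  obtain ⟨m1, m2⟩ := D_mono hk hu' hv' hcon hr0.le h1 h2 hρ1
  have c1 := Dfun_close (kn_abs hk hu' hv') (kn_abs hk hu hv) (kn_congr hag)
    (hr0.trans h1).le hρ1
  have c2 := Dfun_close (kn_abs hk hu' hv') (kn_abs hk hu hv) (kn_congr hag)
    hr0.le (h1.trans hρ1)
  have c3 : 2 * (k:ℝ) * r ^ N ≤ 2 * (k:ℝ) * ρ ^ N :=
    mul_le_mul_of_nonneg_left (pow_le_pow_left₀ hr0.le h1.le N) (by positivity)
  rw [abs_le] at c1 c2
  have : |Dfun (kn u v) ρ| < 2 * (|Dfun (kn u v) ρ| / 2) := by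
    rw [abs_lt]; constructor <;> linarith
  linarith

lemma upper_part {k : ℕ} {u v : ℕ → ℕ} (hu : u ∈ SigSet k u v)
    (hv : v ∈ SigSet k u v) {ε : ℝ} (hε : 0 < ε) :
    ∃ N : ℕ, ∀ u' v' : ℕ → ℕ, u' ∈ SigSet k u' v' → v' ∈ SigSet k u' v' →
      (∀ m, m < N → u' m = u m ∧ v' m = v m) → entS k u' v' ≤ entS k u v + ε := by
  obtain ⟨N, hN, hN0⟩ := (((ent_tendsto hv).eventually
    (gt_mem_nhds (show entS k u v < entS k u v + ε by linarith))).and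
    (eventually_gt_atTop 0)).exists
  refine ⟨N, fun u' v' hu' hv' hag => ?_⟩
  have := ent_le hv' hN0.ne'
  rw [nWords_congr hu hv hu' hv' hag N le_rfl] at this
  linarith

/-- **Continuity of entropy in `(u,v)`.** Let `k ≥ 2` and let `u, v ∈ A^ℕ` satisfy
`u ≼ σⁿu ≼ v` and `u ≼ σⁿv ≼ v` for all `n ≥ 0`. For every `ε > 0` there exists `N`
such that for every pair `u′, v′ ∈ A^ℕ` satisfying the same conditions, if `u′` and `u`
(resp. `v′` and `v`) agree on the first `N` letters, then
`|h(Σ(u′,v′)) − h(Σ(u,v))| ≤ ε`. -/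
theorem entropy_continuous_in_uv (k : ℕ) (hk : 2 ≤ k) (u v : ℕ → ℕ)
    (hu : ∀ i, u i < k) (hv : ∀ i, v i < k)
    (hcond : ∀ n, lexLe u (shft^[n] u) ∧ lexLe (shft^[n] u) v ∧
                  lexLe u (shft^[n] v) ∧ lexLe (shft^[n] v) v) :
    ∀ ε : ℝ, 0 < ε → ∃ N : ℕ, ∀ u' v' : ℕ → ℕ,
      (∀ i, u' i < k) → (∀ i, v' i < k) →
      (∀ n, lexLe u' (shft^[n] u') ∧ lexLe (shft^[n] u') v' ∧
            lexLe u' (shft^[n] v') ∧ lexLe (shft^[n] v') v') →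
      (∀ m, m < N → u' m = u m ∧ v' m = v m) →
      |entS k u' v' - entS k u v| ≤ ε := by
  intro ε hε
  have hu1 : u ∈ SigSet k u v := ⟨hu, fun n => ⟨(hcond n).1, (hcond n).2.1⟩⟩
  have hv1 : v ∈ SigSet k u v := ⟨hv, fun n => ⟨(hcond n).2.2.1, (hcond n).2.2.2⟩⟩
  obtain ⟨N1, h1⟩ := lower_part hk hu1 hv1 hε
  obtain ⟨N2, h2⟩ := upper_part hu1 hv1 hε
  refine ⟨max N1 N2, fun u' v' hu' hv' hc hag => ?_⟩
  have hu2 : u' ∈ SigSet k u' v' := ⟨hu', fun n => ⟨(hc n).1, (hc n).2.1⟩⟩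
  have hv2 : v' ∈ SigSet k u' v' := ⟨hv', fun n => ⟨(hc n).2.2.1, (hc n).2.2.2⟩⟩
  have e1 := h1 u' v' hu2 hv2 fun m hm => hag m (lt_max_of_lt_left hm)
  have e2 := h2 u' v' hu2 hv2 fun m hm => hag m (lt_max_of_lt_right hm)
  rw [abs_le]; constructor <;> linarith
end

section
/- Entropy equality for the two periodic modifications. Let k ≥ 2, p ≥ 2, q ≥ 2; let a be a word of length p over A with a₀ = 0 and b a word of length q over A with b₀ = k−1; let u := a^∞ and v := b^∞ (periodic strings), and assume p is the minimal period of u and q is the minimal period of v; assume u ≼ σⁿu ≼ v and u ≼ σⁿv ≼ v for all n ≥ 0, and a_{p−1} ≥ 1, b_{q−1} ≤ k−2 (the last two hold automatically). Set a′ := a₀⋯a_{p−2}(a_{p−1}−1), b′ := b₀⋯b_{q−2}(b_{q−1}+1), u* := a′⌢b^∞ and v* := b′⌢a^∞ (⌢ is concatenation). If h(Σ(u,v)) > 0, then h(Σ(u,v)) = h(Σ(u*,v*)). -/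
open Filter Set

namespace EPM

variable {α β : Type*}

/-- drop the first `n` letters -/
def dr (n : ℕ) (x : ℕ → α) : ℕ → α := fun i => x (i + n)

/-- lexicographic order for a relation `r` on letters -/
def LX (r : α → α → Prop) (x y : ℕ → α) : Prop :=
  x = y ∨ ∃ m, (∀ i, i < m → x i = y i) ∧ r (x m) (y m)

/-- prepend a list to a sequence -/
def apL (w : List α) (x : ℕ → α) : ℕ → α :=
  fun n => if h : n < w.length then w[n] else x (n - w.length)

/-- prefix list -/
def pl (n : ℕ) (x : ℕ → α) : List α := (List.range n).map x

lemma dr_apply (n i : ℕ) (x : ℕ → α) : dr n x i = x (i + n) := rfl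

lemma dr_zero (x : ℕ → α) : dr 0 x = x := rfl

lemma dr_dr (m n : ℕ) (x : ℕ → α) : dr m (dr n x) = dr (n + m) x := by
  funext i; simp only [dr]; congr 1; omega

lemma shft_iter (n : ℕ) (x : ℕ → ℕ) : shft^[n] x = dr n x := by
  induction n generalizing x with
  | zero => rfl
  | succ n ih =>
    rw [Function.iterate_succ_apply, ih]
    funext i; simp only [dr, shft]; congr 1

lemma LX_refl (r : α → α → Prop) (x : ℕ → α) : LX r x x := Or.inl rfl

lemma LX_head {r : α → α → Prop} {x y : ℕ → α} (h : r (x 0) (y 0)) : LX r x y :=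
  Or.inr ⟨0, fun i hi => absurd hi (by omega), h⟩

lemma LX_second {r : α → α → Prop} {x y : ℕ → α} (h0 : x 0 = y 0) (h : r (x 1) (y 1)) :
    LX r x y :=
  Or.inr ⟨1, fun i hi => by obtain rfl : i = 0 := by omega
                            exact h0, h⟩

lemma agree_split {m : ℕ} {x y : ℕ → α} (h1 : ∀ i, i < m → x i = y i)
    (h2 : dr m x = dr m y) : x = y := by
  funext i
  by_cases hi : i < m
  · exact h1 i hi
  · have := congrFun h2 (i - m)
    simp only [dr] at this
    rwa [Nat.sub_add_cancel (by omega)] at this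

lemma LX_pre {r : α → α → Prop} {x y : ℕ → α} (m : ℕ) (h : ∀ i, i < m → x i = y i)
    (h2 : LX r (dr m x) (dr m y)) : LX r x y := by
  rcases h2 with h2 | ⟨k, hk, hr⟩
  · exact Or.inl (agree_split h h2)
  · refine Or.inr ⟨k + m, fun i hi => ?_, hr⟩
    by_cases him : i < m
    · exact h i him
    · have := hk (i - m) (by omega)
      simp only [dr] at this
      rwa [Nat.sub_add_cancel (by omega)] at this

lemma LX_pre' {r : α → α → Prop} (hirr : ∀ a, ¬ r a a) {x y : ℕ → α} (m : ℕ)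
    (h : ∀ i, i < m → x i = y i) (h2 : LX r x y) : LX r (dr m x) (dr m y) := by
  rcases h2 with h2 | ⟨k, hk, hr⟩
  · exact Or.inl (by rw [h2])
  · have hmk : m ≤ k := by
      by_contra hlt
      rw [h k (by omega)] at hr
      exact hirr _ hr
    refine Or.inr ⟨k - m, fun i hi => hk _ (by omega), ?_⟩
    simp only [dr]
    rwa [Nat.sub_add_cancel hmk]

lemma LX_cons {r : α → α → Prop} {x y : ℕ → α} (h0 : x 0 = y 0)
    (h2 : LX r (dr 1 x) (dr 1 y)) : LX r x y :=
  LX_pre 1 (fun i hi => by obtain rfl : i = 0 := by omega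
                           exact h0) h2

lemma LX_cons' {r : α → α → Prop} (hirr : ∀ a, ¬ r a a) {x y : ℕ → α} (h0 : x 0 = y 0)
    (h2 : LX r x y) : LX r (dr 1 x) (dr 1 y) :=
  LX_pre' hirr 1 (fun i hi => by obtain rfl : i = 0 := by omega
                                 exact h0) h2

lemma LX_head' {r : α → α → Prop} {x y : ℕ → α} (h : LX r x y) : x 0 = y 0 ∨ r (x 0) (y 0) := by
  rcases h with h | ⟨k, hk, hr⟩
  · left; rw [h]
  · rcases Nat.eq_zero_or_pos k with rfl | hk0
    · exact Or.inr hr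
    · exact Or.inl (hk 0 hk0)

lemma LX_trans {r : α → α → Prop} (htr : ∀ a b c, r a b → r b c → r a c) {x y z : ℕ → α}
    (h1 : LX r x y) (h2 : LX r y z) : LX r x z := by
  rcases h1 with rfl | ⟨k, hk, hr⟩
  · exact h2
  rcases h2 with rfl | ⟨l, hl, hs⟩
  · exact Or.inr ⟨k, hk, hr⟩
  rcases lt_trichotomy k l with h | h | h
  · exact Or.inr ⟨k, fun i hi => (hk i hi).trans (hl i (by omega)), by rw [← hl k h]; exact hr⟩
  · subst h
    exact Or.inr ⟨k, fun i hi => (hk i hi).trans (hl i hi), htr _ _ _ hr hs⟩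
  · exact Or.inr ⟨l, fun i hi => (hk i (by omega)).trans (hl i hi), by rw [hk l h]; exact hs⟩

lemma first_diff {x y : ℕ → α} (h : x ≠ y) : ∃ m, (∀ i, i < m → x i = y i) ∧ x m ≠ y m := by
  classical
  have : ∃ m, x m ≠ y m := by
    by_contra hc; push Not at hc; exact h (funext hc)
  exact ⟨Nat.find this, fun i hi => by simpa using Nat.find_min this hi, Nat.find_spec this⟩

lemma LX_total {r : α → α → Prop} (htri : ∀ a b, a ≠ b → r a b ∨ r b a) (x y : ℕ → α) :
    LX r x y ∨ ∃ m, (∀ i, i < m → y i = x i) ∧ r (y m) (x m) := by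
  by_cases h : x = y
  · exact Or.inl (Or.inl h)
  · obtain ⟨m, h1, h2⟩ := first_diff h
    rcases htri _ _ h2 with h3 | h3
    · exact Or.inl (Or.inr ⟨m, h1, h3⟩)
    · exact Or.inr ⟨m, fun i hi => (h1 i hi).symm, h3⟩

lemma LX_antisymm {r : α → α → Prop} (has : ∀ a b, r a b → ¬ r b a) {x y : ℕ → α}
    (h1 : LX r x y) (h2 : LX r y x) : x = y := by
  rcases h1 with h | ⟨k, hk, hr⟩
  · exact h
  rcases h2 with h | ⟨l, hl, hs⟩
  · exact h.symm
  have hirr : ∀ a, ¬ r a a := fun a h => has a a h h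
  rcases lt_trichotomy k l with h | h | h
  · rw [hl k h] at hr; exact absurd hr (hirr _)
  · subst h; exact absurd hs (has _ _ hr)
  · rw [hk l h] at hs; exact absurd hs (hirr _)

/-! ### lists prepended to sequences -/

lemma apL_lt {w : List α} {x : ℕ → α} {n : ℕ} (h : n < w.length) : apL w x n = w[n] := by
  simp [apL, h]

lemma apL_ge {w : List α} {x : ℕ → α} {n : ℕ} (h : w.length ≤ n) :
    apL w x n = x (n - w.length) := by
  simp [apL, not_lt.mpr h]

lemma apL_nil (x : ℕ → α) : apL [] x = x := by
  funext n; simp [apL]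

lemma apL_cons_zero (a : α) (w : List α) (x : ℕ → α) : apL (a :: w) x 0 = a := by
  simp [apL]

lemma apL_cons_succ (a : α) (w : List α) (x : ℕ → α) (n : ℕ) :
    apL (a :: w) x (n + 1) = apL w x n := by
  simp [apL]

lemma dr_one_apL_cons (a : α) (w : List α) (x : ℕ → α) : dr 1 (apL (a :: w) x) = apL w x := by
  funext n; exact apL_cons_succ a w x n

lemma apL_append (w w' : List α) (x : ℕ → α) : apL (w ++ w') x = apL w (apL w' x) := by
  induction w with
  | nil => simp [apL_nil]
  | cons a w ih =>
    funext n
    rcases n with _ | n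
    · simp [apL_cons_zero]
    · rw [List.cons_append, apL_cons_succ, apL_cons_succ, ih]

lemma dr_apL (w : List α) (x : ℕ → α) : dr w.length (apL w x) = x := by
  funext n
  simp only [dr]
  rw [apL_ge (by omega)]; congr 1; omega

lemma dr_apL_le (w : List α) (x : ℕ → α) {k : ℕ} (hk : k ≤ w.length) :
    dr k (apL w x) = apL (w.drop k) x := by
  conv_lhs => rw [← List.take_append_drop k w, apL_append]
  have : (w.take k).length = k := by simp [hk]
  conv_lhs => rw [← this, List.length_take, min_eq_left (by omega)]
  have h2 := dr_apL (w.take k) (apL (w.drop k) x)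
  rwa [this] at h2

lemma pl_length (n : ℕ) (x : ℕ → α) : (pl n x).length = n := by simp [pl]

lemma pl_succ (n : ℕ) (x : ℕ → α) : pl (n + 1) x = pl n x ++ [x n] := by
  simp [pl, List.range_succ]

lemma pl_add (m n : ℕ) (x : ℕ → α) : pl (m + n) x = pl m x ++ pl n (dr m x) := by
  induction n with
  | zero => simp [pl]
  | succ n ih =>
    rw [← Nat.add_assoc, pl_succ, ih, pl_succ, List.append_assoc]
    simp [dr, Nat.add_comm]

lemma apL_pl (n : ℕ) (x : ℕ → α) : apL (pl n x) (dr n x) = x := by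
  funext i
  by_cases h : i < n
  · rw [apL_lt (by simpa [pl] using h)]; simp [pl]
  · rw [apL_ge (by simpa [pl] using h), pl_length]; simp only [dr]; congr 1; omega

lemma pl_apL (w : List α) (x : ℕ → α) : pl w.length (apL w x) = w := by
  apply List.ext_getElem
  · simp [pl]
  · intro i h1 h2
    simp only [pl, List.getElem_map, List.getElem_range]
    exact apL_lt h2

lemma apL_inj_fix {w : List α} (hw : w ≠ []) {x y : ℕ → α} (hx : x = apL w x)
    (hy : y = apL w y) : x = y := by
  have hl : 0 < w.length := List.length_pos_iff.mpr hw
  funext n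
  induction n using Nat.strong_induction_on with
  | _ n ih =>
    rw [hx, hy]
    by_cases h : n < w.length
    · rw [apL_lt h, apL_lt h]
    · rw [apL_ge (by omega), apL_ge (by omega)]
      exact ih _ (by omega)

/-! ### substitutions -/

/-- infinite substitution: concatenation of the words `c (z i)` -/
def Sub [Inhabited α] (c : β → List α) (z : ℕ → β) (n : ℕ) : α :=
  if h : n < (c (z 0)).length then (c (z 0))[n]
  else if h0 : (c (z 0)).length = 0 then default
  else Sub c (dr 1 z) (n - (c (z 0)).length)
termination_by n
decreasing_by omega

lemma Sub_eq [Inhabited α] {c : β → List α} (hc : ∀ b, c b ≠ []) (z : ℕ → β) :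
    Sub c z = apL (c (z 0)) (Sub c (dr 1 z)) := by
  funext n
  rw [Sub]
  have hl : (c (z 0)).length ≠ 0 := by simpa using hc (z 0)
  by_cases h : n < (c (z 0)).length
  · simp [apL, h]
  · simp [apL, h, hl]

lemma Sub_pl [Inhabited α] {c : β → List α} (hc : ∀ b, c b ≠ []) (z : ℕ → β) (m : ℕ) :
    Sub c z = apL ((pl m z).flatMap c) (Sub c (dr m z)) := by
  induction m with
  | zero => simp [pl, apL_nil, dr_zero]
  | succ m ih =>
    rw [ih, pl_succ, List.flatMap_append, apL_append, Sub_eq hc (dr m z)]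
    simp [dr_dr, dr]

/-- start of the `m`-th block -/
def bl (c : β → List α) (z : ℕ → β) (m : ℕ) : ℕ := ((pl m z).flatMap c).length

lemma bl_succ (c : β → List α) (z : ℕ → β) (m : ℕ) :
    bl c z (m + 1) = bl c z m + (c (z m)).length := by
  simp [bl, pl_succ]

lemma dr_bl [Inhabited α] {c : β → List α} (hc : ∀ b, c b ≠ []) (z : ℕ → β) (m : ℕ) :
    dr (bl c z m) (Sub c z) = Sub c (dr m z) := by
  conv_lhs => rw [Sub_pl hc z m]
  exact dr_apL _ _

lemma bl_exists {c : β → List α} (hc : ∀ b, c b ≠ []) (z : ℕ → β) (n : ℕ) :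
    ∃ m k, k < (c (z m)).length ∧ n = bl c z m + k := by
  induction n with
  | zero => exact ⟨0, 0, List.length_pos_iff.mpr (hc _), by simp [bl, pl]⟩
  | succ n ih =>
    obtain ⟨m, k, hk, rfl⟩ := ih
    by_cases h : k + 1 < (c (z m)).length
    · exact ⟨m, k + 1, h, by omega⟩
    · exact ⟨m + 1, 0, List.length_pos_iff.mpr (hc _), by rw [bl_succ]; omega⟩

lemma dr_Sub [Inhabited α] {c : β → List α} (hc : ∀ b, c b ≠ []) (z : ℕ → β) (n : ℕ) :
    ∃ m k, k < (c (z m)).length ∧ n = bl c z m + k ∧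
      dr n (Sub c z) = apL ((c (z m)).drop k) (Sub c (dr (m + 1) z)) := by
  obtain ⟨m, k, hk, hn⟩ := bl_exists hc z n
  refine ⟨m, k, hk, hn, ?_⟩
  rw [hn, ← dr_dr, dr_bl hc, Sub_eq hc, dr_apL_le _ _ (by simp only [dr, Nat.zero_add]; omega), dr_dr]
  simp [dr]

lemma Sub_agree [Inhabited α] {c : β → List α} (hc : ∀ b, c b ≠ []) {z z' : ℕ → β} {m : ℕ}
    (h : ∀ i, i < m → z i = z' i) :
    bl c z m = bl c z' m ∧ ∀ i, i < bl c z m → Sub c z i = Sub c z' i := by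
  have hp : pl m z = pl m z' := by
    simp only [pl]
    apply List.map_congr_left
    intro a ha; exact h a (by simpa using ha)
  refine ⟨by simp [bl, hp], fun i hi => ?_⟩
  rw [Sub_pl hc z m, Sub_pl hc z' m, hp]
  have hi' : i < ((pl m z').flatMap c).length := by rw [← hp]; exact hi
  rw [apL_lt hi', apL_lt hi']

lemma Sub_at [Inhabited α] {c : β → List α} (hc : ∀ b, c b ≠ []) {hd : β → α}
    (hhd : ∀ b, ∃ t, c b = hd b :: t) (z : ℕ → β) (m : ℕ) :
    Sub c z (bl c z m) = hd (z m) := by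
  have h := congrFun (dr_bl hc z m) 0
  simp only [dr, Nat.zero_add] at h
  rw [h, Sub_eq hc]
  obtain ⟨t, ht⟩ := hhd (z m)
  have h0 : (dr m z) 0 = z m := by simp [dr]
  rw [h0, ht, apL_cons_zero]

lemma Sub_mono [Inhabited α] {c : β → List α} (hc : ∀ b, c b ≠ []) {hd : β → α}
    (hhd : ∀ b, ∃ t, c b = hd b :: t) {r : β → β → Prop} {s : α → α → Prop}
    (hrs : ∀ a b, r a b → s (hd a) (hd b)) {z z' : ℕ → β} (h : LX r z z') :
    LX s (Sub c z) (Sub c z') := by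
  rcases h with rfl | ⟨m, hm, hr⟩
  · exact LX_refl _ _
  · obtain ⟨h1, h2⟩ := Sub_agree hc hm
    refine Or.inr ⟨bl c z m, h2, ?_⟩
    rw [Sub_at hc hhd]
    rw [h1, Sub_at hc hhd]
    exact hrs _ _ hr

lemma Sub_reflect [Inhabited α] {c : β → List α} (hc : ∀ b, c b ≠ []) {hd : β → α}
    (hhd : ∀ b, ∃ t, c b = hd b :: t) (hinj : Function.Injective hd)
    {r : β → β → Prop} {s : α → α → Prop} (hirr : ∀ a, ¬ s a a)
    (hrs : ∀ a b, s (hd a) (hd b) → r a b) {z z' : ℕ → β}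
    (h : LX s (Sub c z) (Sub c z')) : LX r z z' := by
  by_cases hz : z = z'
  · exact Or.inl hz
  obtain ⟨m, hm, hne⟩ := first_diff hz
  obtain ⟨h1, h2⟩ := Sub_agree hc hm
  have h3 := LX_pre' hirr _ h2 h
  rw [dr_bl hc] at h3
  rw [h1, dr_bl hc] at h3
  have h4 := LX_head' h3
  have e : ∀ z : ℕ → β, Sub c (dr m z) 0 = hd (z m) := by
    intro z
    have := Sub_at hc hhd (dr m z) 0
    simpa [bl, pl, dr] using this
  rw [e, e] at h4
  rcases h4 with h4 | h4
  · exact absurd (hinj h4) hne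
  · exact Or.inr ⟨m, hm, hrs _ _ h4⟩

lemma Sub_inj [Inhabited α] {c : β → List α} (hc : ∀ b, c b ≠ []) {hd : β → α}
    (hhd : ∀ b, ∃ t, c b = hd b :: t) (hinj : Function.Injective hd) {z z' : ℕ → β}
    (h : Sub c z = Sub c z') : z = z' := by
  have h2 : LX (fun _ _ : β => False) z z' :=
    Sub_reflect (s := fun _ _ : α => False) hc hhd hinj (fun a h => h) (fun _ _ h => h) (Or.inl h)
  rcases h2 with h2 | ⟨_, _, h2⟩
  · exact h2
  · exact h2.elim

lemma Sub_parse [Inhabited α] {c : β → List α} (hc : ∀ b, c b ≠ []) (Q : (ℕ → α) → Prop)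
    (hQ : ∀ x, Q x → ∃ l x', x = apL (c l) x' ∧ Q x') (x : ℕ → α) (hx : Q x) :
    ∃ z, x = Sub c z := by
  haveI : Nonempty β := ⟨(hQ x hx).choose⟩
  choose! L N hL hN using hQ
  have key : ∀ n x, Q x → x n = Sub c (fun k => L (N^[k] x)) n := by
    intro n
    induction n using Nat.strong_induction_on with
    | _ n ih =>
      intro x hx
      rw [Sub_eq hc]
      have hd1 : dr 1 (fun k => L (N^[k] x)) = fun k => L (N^[k] (N x)) := by
        funext k; simp [dr]
      rw [hd1]
      conv_lhs => rw [hL x hx]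
      simp only [Function.iterate_zero, id]
      have hl : 0 < (c (L x)).length := List.length_pos_iff.mpr (hc _)
      by_cases h : n < (c (L x)).length
      · rw [apL_lt h, apL_lt h]
      · rw [apL_ge (by omega), apL_ge (by omega)]
        exact ih _ (by omega) _ (hN x hx)
  exact ⟨_, funext fun n => key n x hx⟩

lemma Sub_Sub {γ : Type*} [Inhabited α] [Inhabited β] {c : β → List α} (hc : ∀ b, c b ≠ [])
    {d : γ → List β} (hd : ∀ b, d b ≠ []) (z : ℕ → γ) :
    Sub c (Sub d z) = Sub (fun g => (d g).flatMap c) z := by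
  have hcd : ∀ g, (d g).flatMap c ≠ [] := by
    intro g h
    rw [List.flatMap_eq_nil_iff] at h
    obtain ⟨b, hb⟩ := List.exists_mem_of_ne_nil _ (hd g)
    exact hc b (h b hb)
  have step : ∀ z : ℕ → γ, Sub c (Sub d z) = apL ((d (z 0)).flatMap c) (Sub c (Sub d (dr 1 z))) := by
    intro z
    conv_lhs => rw [Sub_pl hc (Sub d z) (d (z 0)).length]
    rw [Sub_eq hd z, pl_apL, dr_apL]
  funext n
  induction n using Nat.strong_induction_on generalizing z with
  | _ n ih =>
    rw [step, Sub_eq hcd]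
    have hl : 0 < ((d (z 0)).flatMap c).length := List.length_pos_iff.mpr (hcd _)
    by_cases h : n < ((d (z 0)).flatMap c).length
    · rw [apL_lt h, apL_lt h]
    · rw [apL_ge (by omega), apL_ge (by omega)]
      exact ih _ (by omega) _

end EPM

namespace EPM

variable {α β : Type*}

/-! ### counting -/

/-- truncation to the first `n` letters -/
def pre [Inhabited α] (n : ℕ) (x : ℕ → α) : ℕ → α := fun i => if i < n then x i else default

/-- the number of prefixes of length `n` grows at most like `C * L ^ n` -/
def Grow [Inhabited α] (A : Set (ℕ → α)) (L : ℝ) : Prop :=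
  ∃ C : ℝ, 0 ≤ C ∧ ∀ n : ℕ, ∃ F : Finset (ℕ → α), (∀ x ∈ A, pre n x ∈ F) ∧ (F.card : ℝ) ≤ C * L ^ n

/-- subexponential growth -/
def Thin [Inhabited α] (A : Set (ℕ → α)) : Prop := ∀ L : ℝ, 1 < L → Grow A L

/-- concatenation -/
def cat (m : ℕ) (x z : ℕ → α) : ℕ → α := fun i => if i < m then x i else z (i - m)

lemma pre_congr [Inhabited α] {n : ℕ} {x y : ℕ → α} (h : ∀ i, i < n → x i = y i) :
    pre n x = pre n y := by
  funext i
  simp only [pre]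
  split_ifs with hi
  · exact h i hi
  · rfl

lemma pre_agree [Inhabited α] {n : ℕ} (x : ℕ → α) : ∀ i, i < n → pre n x i = x i := by
  intro i hi; simp [pre, hi]

lemma Grow_subset [Inhabited α] {A B : Set (ℕ → α)} {L : ℝ} (h : A ⊆ B) (hB : Grow B L) :
    Grow A L := by
  obtain ⟨C, hC, hF⟩ := hB
  refine ⟨C, hC, fun n => ?_⟩
  obtain ⟨F, h1, h2⟩ := hF n
  exact ⟨F, fun x hx => h1 x (h hx), h2⟩

lemma Grow_mono [Inhabited α] {A : Set (ℕ → α)} {L L' : ℝ} (h0 : 0 ≤ L) (h : L ≤ L')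
    (hA : Grow A L) : Grow A L' := by
  obtain ⟨C, hC, hF⟩ := hA
  refine ⟨C, hC, fun n => ?_⟩
  obtain ⟨F, h1, h2⟩ := hF n
  exact ⟨F, h1, h2.trans (by gcongr)⟩

lemma Grow_union [Inhabited α] {A B : Set (ℕ → α)} {L : ℝ} (hA : Grow A L) (hB : Grow B L) :
    Grow (A ∪ B) L := by
  classical
  obtain ⟨C, hC, hF⟩ := hA
  obtain ⟨C', hC', hF'⟩ := hB
  refine ⟨C + C', by positivity, fun n => ?_⟩
  obtain ⟨F, h1, h2⟩ := hF n
  obtain ⟨F', h1', h2'⟩ := hF' n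
  refine ⟨F ∪ F', fun x hx => ?_, ?_⟩
  · rcases hx with hx | hx
    · exact Finset.mem_union_left _ (h1 x hx)
    · exact Finset.mem_union_right _ (h1' x hx)
  · have : ((F ∪ F').card : ℝ) ≤ F.card + F'.card := by exact_mod_cast Finset.card_union_le F F'
    linarith [add_mul C C' (L ^ n)]

lemma Grow_singleton [Inhabited α] (x : ℕ → α) {L : ℝ} (h : 1 ≤ L) : Grow {x} L := by
  refine ⟨1, zero_le_one, fun n => ⟨{pre n x}, ?_, ?_⟩⟩
  · rintro y rfl; simp
  · simpa using one_le_pow₀ h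

lemma Grow_image [Inhabited α] [Inhabited β] {A : Set (ℕ → α)} {L : ℝ} (G : (ℕ → α) → (ℕ → β))
    (hG : ∀ x y n, (∀ i, i < n → x i = y i) → ∀ i, i < n → G x i = G y i) (hA : Grow A L) :
    Grow (G '' A) L := by
  classical
  obtain ⟨C, hC, hF⟩ := hA
  refine ⟨C, hC, fun n => ?_⟩
  obtain ⟨F, h1, h2⟩ := hF n
  refine ⟨F.image (fun w => pre n (G w)), ?_, ?_⟩
  · rintro _ ⟨x, hx, rfl⟩
    refine Finset.mem_image.mpr ⟨pre n x, h1 x hx, ?_⟩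
    exact pre_congr (hG _ _ n (pre_agree x))
  · exact (Nat.cast_le.mpr Finset.card_image_le).trans h2

lemma lin_le_pow {r : ℝ} (hr : 1 < r) : ∃ C : ℝ, 0 ≤ C ∧ ∀ n : ℕ, (n + 1 : ℝ) ≤ C * r ^ n := by
  have hd : 0 < r - 1 := by linarith
  refine ⟨1 + 1 / (r - 1), by positivity, fun n => ?_⟩
  have h1 : 1 + (n : ℝ) * (r - 1) ≤ r ^ n := by
    have := one_add_mul_le_pow (a := r - 1) (by linarith) n
    simpa using this
  have h2 : (n : ℝ) ≤ 1 / (r - 1) * r ^ n := by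
    rw [div_mul_eq_mul_div, le_div_iff₀ hd]; linarith
  have h3 : (1 : ℝ) ≤ r ^ n := one_le_pow₀ hr.le
  linarith [add_mul 1 (1 / (r - 1)) (r ^ n)]

lemma Grow_concat [Inhabited α] {A E B : Set (ℕ → α)} {L L' : ℝ} (h1 : 0 < L) (hL : L < L')
    (hA : Grow A L) (hE : Grow E L)
    (hB : ∀ y ∈ B, ∃ m x z, x ∈ A ∧ z ∈ E ∧ y = cat m x z) : Grow B L' := by
  classical
  obtain ⟨C, hC, hF⟩ := hA
  obtain ⟨C', hC', hF'⟩ := hE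
  choose F hF1 hF2 using hF
  choose F' hF1' hF2' using hF'
  have hr : 1 < L' / L := by rw [lt_div_iff₀ h1]; linarith
  obtain ⟨K, hK, hKn⟩ := lin_le_pow hr
  refine ⟨C * C' * K, by positivity, fun n => ?_⟩
  refine ⟨(Finset.range (n + 1)).biUnion fun m =>
    (F m ×ˢ F' (n - m)).image fun w => pre n (cat m w.1 w.2), ?_, ?_⟩
  · intro y hy
    obtain ⟨m, x, z, hx, hz, rfl⟩ := hB y hy
    rw [Finset.mem_biUnion]
    by_cases hm : m ≤ n
    · refine ⟨m, by simp; omega, Finset.mem_image.mpr ⟨(pre m x, pre (n - m) z), ?_, ?_⟩⟩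
      · exact Finset.mem_product.mpr ⟨hF1 m x hx, hF1' _ z hz⟩
      · apply pre_congr
        intro i hi
        simp only [cat]
        split_ifs with h
        · exact pre_agree x i h
        · exact pre_agree z _ (by omega)
    · refine ⟨n, by simp, Finset.mem_image.mpr ⟨(pre n x, pre (n - n) z), ?_, ?_⟩⟩
      · exact Finset.mem_product.mpr ⟨hF1 n x hx, hF1' _ z hz⟩
      · apply pre_congr
        intro i hi
        simp only [cat, hi, if_true]
        rw [if_pos (by omega)]
        exact pre_agree x i hi
  · calc (((Finset.range (n + 1)).biUnion fun m =>
        (F m ×ˢ F' (n - m)).image fun w => pre n (cat m w.1 w.2)).card : ℝ)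
        ≤ ∑ m ∈ Finset.range (n + 1), ((F m).card * (F' (n - m)).card : ℝ) := by
          have h : ((Finset.range (n + 1)).biUnion fun m =>
            (F m ×ˢ F' (n - m)).image fun w => pre n (cat m w.1 w.2)).card
            ≤ ∑ m ∈ Finset.range (n + 1), (F m).card * (F' (n - m)).card := by
            refine Finset.card_biUnion_le.trans (Finset.sum_le_sum fun m _ => ?_)
            rw [← Finset.card_product]
            exact Finset.card_image_le
          exact_mod_cast h
      _ ≤ ∑ m ∈ Finset.range (n + 1), C * C' * L ^ n := by
          refine Finset.sum_le_sum fun m hm => ?_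
          have hm' : m ≤ n := by simp at hm; omega
          calc ((F m).card * (F' (n - m)).card : ℝ) ≤ (C * L ^ m) * (C' * L ^ (n - m)) := by
                gcongr
                · exact hF2 m
                · exact hF2' _
            _ = C * C' * (L ^ m * L ^ (n - m)) := by ring
            _ = _ := by rw [← pow_add, Nat.add_sub_cancel' hm']
      _ = C * C' * ((n + 1) * L ^ n) := by simp; ring
      _ ≤ C * C' * (K * (L' / L) ^ n * L ^ n) := by
          gcongr
          exact hKn n
      _ = C * C' * K * L' ^ n := by
          rw [div_pow]
          field_simp

lemma Thin_subset [Inhabited α] {A B : Set (ℕ → α)} (h : A ⊆ B) (hB : Thin B) : Thin A :=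
  fun L hL => Grow_subset h (hB L hL)

lemma Thin_union [Inhabited α] {A B : Set (ℕ → α)} (hA : Thin A) (hB : Thin B) : Thin (A ∪ B) :=
  fun L hL => Grow_union (hA L hL) (hB L hL)

lemma Thin_singleton [Inhabited α] (x : ℕ → α) : Thin {x} :=
  fun L hL => Grow_singleton x hL.le

lemma Thin_image [Inhabited α] [Inhabited β] {A : Set (ℕ → α)} (G : (ℕ → α) → (ℕ → β))
    (hG : ∀ x y n, (∀ i, i < n → x i = y i) → ∀ i, i < n → G x i = G y i) (hA : Thin A) :
    Thin (G '' A) := fun L hL => Grow_image G hG (hA L hL)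

lemma Thin_concat [Inhabited α] {A E B : Set (ℕ → α)} (hA : Thin A) (hE : Thin E)
    (hB : ∀ y ∈ B, ∃ m x z, x ∈ A ∧ z ∈ E ∧ y = cat m x z) : Thin B := by
  intro L hL
  have h1 : 1 < (1 + L) / 2 := by linarith
  exact Grow_concat (L := (1 + L) / 2) (by linarith) (by linarith) (hA _ h1) (hE _ h1) hB

/-! ### renewal -/

lemma apL_injective (w : List α) : Function.Injective (apL w) := by
  intro x y h
  have := congrArg (dr w.length) h
  simpa [dr_apL] using this

lemma pre_apL [Inhabited α] (w : List α) (x : ℕ → α) {n : ℕ} (h : w.length ≤ n) :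
    pre n (apL w x) = apL w (pre (n - w.length) x) := by
  funext i
  simp only [pre, apL]
  by_cases hi : i < w.length
  · simp [hi, show i < n by omega]
  · by_cases hin : i < n
    · simp [hi, hin, show i - w.length < n - w.length by omega]
    · simp [hi, hin, show ¬ (i - w.length < n - w.length) by omega]

/-- prepend one letter -/
def cs (a : α) (x : ℕ → α) : ℕ → α
  | 0 => a
  | n + 1 => x n

lemma dr_cs (a : α) (x : ℕ → α) : dr 1 (cs a x) = x := rfl

lemma cs_zero (a : α) (x : ℕ → α) : cs a x 0 = a := rfl

lemma renewal [Inhabited α] {c : Bool → List α} {hd : Bool → α}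
    (hhd : ∀ b, ∃ t, c b = hd b :: t) (hinj : hd false ≠ hd true) {A : Set (ℕ → α)} {L : ℝ}
    (hL : 0 < L) (hA : Grow A L) (hs : ∀ z, Sub c z ∈ A) :
    (1 / L) ^ (c false).length + (1 / L) ^ (c true).length ≤ 1 := by
  classical
  by_contra hlt
  push Not at hlt
  have hc : ∀ b, c b ≠ [] := by
    intro b; obtain ⟨t, ht⟩ := hhd b; simp [ht]
  set l0 := (c false).length with hl0
  set l1 := (c true).length with hl1
  have hl0p : 0 < l0 := List.length_pos_iff.mpr (hc _)
  have hl1p : 0 < l1 := List.length_pos_iff.mpr (hc _)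
  have hcont : ContinuousAt (fun y : ℝ => y ^ l0 + y ^ l1) (1 / L) := by fun_prop
  have hev := hcont.eventually (lt_mem_nhds hlt)
  have hx0 : 0 < 1 / L := by positivity
  obtain ⟨y, hy0, hyx, hy⟩ : ∃ y, 0 < y ∧ y < 1 / L ∧ 1 < y ^ l0 + y ^ l1 := by
    obtain ⟨ε, hε, hball⟩ := Metric.eventually_nhds_iff.mp hev
    refine ⟨1 / L - min (ε / 2) (1 / L / 2), ?_, ?_, hball ?_⟩
    · have := min_le_right (ε / 2) (1 / L / 2); linarith
    · have : 0 < min (ε / 2) (1 / L / 2) := by positivity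
      linarith
    · have h1 : 0 < min (ε / 2) (1 / L / 2) := by positivity
      have h2 := min_le_left (ε / 2) (1 / L / 2)
      rw [Real.dist_eq, abs_lt]; constructor <;> linarith
  obtain ⟨C, hC, hF⟩ := hA
  choose F hF1 hF2 using hF
  set W : ℕ → Set (ℕ → α) := fun n => pre n '' (range (Sub c)) with hW
  have hWF : ∀ n, W n ⊆ (F n : Set (ℕ → α)) := by
    rintro n _ ⟨_, ⟨z, rfl⟩, rfl⟩
    exact hF1 n _ (hs z)
  have hWfin : ∀ n, (W n).Finite := fun n => (F n).finite_toSet.subset (hWF n)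
  have hWle : ∀ n, ((W n).ncard : ℝ) ≤ C * L ^ n := by
    intro n
    refine le_trans ?_ (hF2 n)
    have := Set.ncard_le_ncard (hWF n) (F n).finite_toSet
    rw [Set.ncard_coe_finset] at this
    exact_mod_cast this
  have hW1 : ∀ n, 1 ≤ (W n).ncard := by
    intro n
    rw [Nat.one_le_iff_ne_zero, Ne, Set.ncard_eq_zero (hWfin n)]
    exact Set.Nonempty.ne_empty ⟨_, ⟨_, ⟨fun _ => false, rfl⟩, rfl⟩⟩
  have hrec : ∀ n, l0 ≤ n → l1 ≤ n → (W (n - l0)).ncard + (W (n - l1)).ncard ≤ (W n).ncard := by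
    intro n h0 h1
    rw [← Set.ncard_image_of_injective (W (n - l0)) (apL_injective (c false)),
      ← Set.ncard_image_of_injective (W (n - l1)) (apL_injective (c true)),
      ← Set.ncard_union_eq ?_ ((hWfin _).image _) ((hWfin _).image _)]
    · apply Set.ncard_le_ncard _ (hWfin n)
      rintro _ (⟨_, ⟨_, ⟨z, rfl⟩, rfl⟩, rfl⟩ | ⟨_, ⟨_, ⟨z, rfl⟩, rfl⟩, rfl⟩)
      · refine ⟨_, ⟨cs false z, rfl⟩, ?_⟩
        rw [Sub_eq hc, dr_cs, cs_zero, pre_apL _ _ h0]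
      · refine ⟨_, ⟨cs true z, rfl⟩, ?_⟩
        rw [Sub_eq hc, dr_cs, cs_zero, pre_apL _ _ h1]
    · rw [Set.disjoint_left]
      rintro _ ⟨w, _, rfl⟩ ⟨w', _, h⟩
      have := congrFun h 0
      obtain ⟨t, ht⟩ := hhd false
      obtain ⟨t', ht'⟩ := hhd true
      rw [ht, ht', apL_cons_zero, apL_cons_zero] at this
      exact hinj this.symm
  set M := max l0 l1 with hM
  have hy1 : y < 1 ∨ 1 ≤ y := lt_or_ge _ _
  obtain ⟨δ, hδ, hδM⟩ : ∃ δ : ℝ, 0 < δ ∧ ∀ n, n < M → δ ≤ y ^ n := by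
    refine ⟨(min y 1) ^ M, by positivity, fun n hn => ?_⟩
    calc (min y 1) ^ M ≤ (min y 1) ^ n :=
          pow_le_pow_of_le_one (by positivity) (min_le_right _ _) hn.le
      _ ≤ y ^ n := by
          gcongr
          exact min_le_left _ _
  have hlow : ∀ n, δ ≤ (W n).ncard * y ^ n := by
    intro n
    induction n using Nat.strong_induction_on with
    | _ n ih =>
      by_cases hn : n < M
      · have h1 : (1 : ℝ) ≤ (W n).ncard := by exact_mod_cast hW1 n
        have h2 := hδM n hn
        have h3 : 0 < y ^ n := by positivity
        nlinarith
      · have h0 : l0 ≤ n := by omega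
        have h1 : l1 ≤ n := by omega
        have e0 := ih (n - l0) (by omega)
        have e1 := ih (n - l1) (by omega)
        have hr : ((W (n - l0)).ncard : ℝ) + (W (n - l1)).ncard ≤ (W n).ncard := by
          exact_mod_cast hrec n h0 h1
        calc δ ≤ δ * (y ^ l0 + y ^ l1) := by nlinarith
          _ = δ * y ^ l0 + δ * y ^ l1 := by ring
          _ ≤ ((W (n - l0)).ncard * y ^ (n - l0)) * y ^ l0
              + ((W (n - l1)).ncard * y ^ (n - l1)) * y ^ l1 := by gcongr
          _ = (W (n - l0)).ncard * (y ^ (n - l0) * y ^ l0)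
              + (W (n - l1)).ncard * (y ^ (n - l1) * y ^ l1) := by ring
          _ = ((W (n - l0)).ncard + (W (n - l1)).ncard) * y ^ n := by
              rw [← pow_add, ← pow_add, Nat.sub_add_cancel h0, Nat.sub_add_cancel h1]; ring
          _ ≤ _ := by gcongr
  have hLy : L * y < 1 := by
    rw [lt_div_iff₀ hL] at hyx; linarith
  have hLy0 : 0 ≤ L * y := by positivity
  have ht := (tendsto_pow_atTop_nhds_zero_of_lt_one hLy0 hLy).const_mul C
  rw [mul_zero] at ht
  obtain ⟨n, hn⟩ := (ht.eventually (gt_mem_nhds hδ)).exists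
  have := hlow n
  have h2 : ((W n).ncard : ℝ) * y ^ n ≤ C * (L * y) ^ n := by
    rw [mul_pow, ← mul_assoc]
    gcongr
    exact hWle n
  linarith

/-! ### entropy versus growth -/

lemma pre_finite (k : ℕ) (u v : ℕ → ℕ) (n : ℕ) : (pre n '' SigSet k u v).Finite := by
  have : (pre n '' SigSet k u v) ⊆
      range (fun f : Fin n → Fin k => fun i => if h : i < n then ((f ⟨i, h⟩ : Fin k) : ℕ) else 0) := by
    rintro _ ⟨x, hx, rfl⟩
    refine ⟨fun i => ⟨x i, hx.1 i⟩, ?_⟩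
    funext i
    by_cases h : i < n <;> simp [pre, h]
  exact (Set.finite_range _).subset this

lemma nWords_eq (k : ℕ) (u v : ℕ → ℕ) (n : ℕ) :
    nWords k u v n = (pre n '' SigSet k u v).ncard := by
  rw [nWords, ← Nat.card_coe_set_eq]
  refine Nat.card_congr (Equiv.ofBijective (fun w => ⟨fun i => if h : i < n then w.1 ⟨i, h⟩ else 0, ?_⟩) ?_)
  · obtain ⟨w, x, hx, hw⟩ := w
    refine ⟨x, hx, ?_⟩
    funext i
    by_cases h : i < n
    · simpa [pre, h] using hw ⟨i, h⟩
    · simp [pre, h]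
  · constructor
    · rintro ⟨w, hw⟩ ⟨w', hw'⟩ h
      simp only [Subtype.mk.injEq] at h ⊢
      funext i
      have := congrFun h i
      simpa using this
    · rintro ⟨_, x, hx, rfl⟩
      refine ⟨⟨fun i => x i, x, hx, fun _ => rfl⟩, ?_⟩
      apply Subtype.ext
      funext i
      by_cases h : i < n <;> simp [pre, h]

lemma nWords_le (k : ℕ) (u v : ℕ → ℕ) (n : ℕ) : nWords k u v n ≤ k ^ n := by
  rw [nWords]
  have : Nat.card (Fin n → Fin k) = k ^ n := by simp
  rw [← this]
  refine Nat.card_le_card_of_injective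
    (fun w => fun i => ⟨w.1 i, by obtain ⟨w, x, hx, hw⟩ := w; exact lt_of_eq_of_lt (hw i).symm (hx.1 _)⟩) ?_
  rintro ⟨w, hw⟩ ⟨w', hw'⟩ h
  simp only [Subtype.mk.injEq]
  funext i
  have := congrFun h i
  simpa using this

lemma nWords_of_Grow {k : ℕ} {u v : ℕ → ℕ} {L : ℝ} (h : Grow (SigSet k u v) L) :
    ∃ C : ℝ, 0 ≤ C ∧ ∀ n, (nWords k u v n : ℝ) ≤ C * L ^ n := by
  obtain ⟨C, hC, hF⟩ := h
  refine ⟨C, hC, fun n => ?_⟩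
  obtain ⟨F, h1, h2⟩ := hF n
  refine le_trans ?_ h2
  rw [nWords_eq]
  have : (pre n '' SigSet k u v).ncard ≤ ((F : Set (ℕ → ℕ))).ncard := by
    apply Set.ncard_le_ncard _ F.finite_toSet
    rintro _ ⟨x, hx, rfl⟩
    exact h1 x hx
  rw [Set.ncard_coe_finset] at this
  exact_mod_cast this

lemma Grow_of_nWords {k : ℕ} {u v : ℕ → ℕ} {L : ℝ} {C : ℝ} (hC : 0 ≤ C)
    (h : ∀ n, (nWords k u v n : ℝ) ≤ C * L ^ n) : Grow (SigSet k u v) L := by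
  refine ⟨C, hC, fun n => ⟨(pre_finite k u v n).toFinset, ?_, ?_⟩⟩
  · intro x hx; simpa using ⟨x, hx, rfl⟩
  · have := h n
    rwa [nWords_eq, Set.ncard_eq_toFinset_card _ (pre_finite k u v n)] at this

lemma ent_bdd (k : ℕ) (u v : ℕ → ℕ) : ∀ n : ℕ,
    Real.logb 2 (nWords k u v n) / (n : ℝ) ≤ max (Real.logb 2 k) 0 := by
  intro n
  rcases Nat.eq_zero_or_pos n with rfl | hn
  · simp
  rcases Nat.eq_zero_or_pos (nWords k u v n) with h | h
  · simp [h]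
  refine le_trans ?_ (le_max_left _ _)
  have hn' : (0 : ℝ) < n := by exact_mod_cast hn
  rw [div_le_iff₀ hn', mul_comm, ← Real.logb_pow]
  apply Real.logb_le_logb_of_le one_lt_two (by exact_mod_cast h)
  exact_mod_cast nWords_le k u v n

lemma ent_nonneg (k : ℕ) (u v : ℕ → ℕ) : ∀ n : ℕ,
    0 ≤ Real.logb 2 (nWords k u v n) / (n : ℝ) := by
  intro n
  rcases Nat.eq_zero_or_pos (nWords k u v n) with h | h
  · simp [h]
  · apply div_nonneg _ (Nat.cast_nonneg n)
    exact Real.logb_nonneg one_lt_two (by exact_mod_cast h)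

lemma ent_le_of_Grow {k : ℕ} {u v : ℕ → ℕ} {L : ℝ} (hL : 1 ≤ L) (h : Grow (SigSet k u v) L) :
    entS k u v ≤ Real.logb 2 L := by
  obtain ⟨C, hC, hw⟩ := nWords_of_Grow h
  set C' := max C 1 with hC'
  have hC1 : 1 ≤ C' := le_max_right _ _
  have ht : Tendsto (fun n : ℕ => Real.logb 2 C' / (n : ℝ) + Real.logb 2 L) atTop
      (nhds (0 + Real.logb 2 L)) :=
    (tendsto_const_div_atTop_nhds_zero_nat _).add_const _
  rw [zero_add] at ht
  rw [entS, ← ht.limsup_eq]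
  apply Filter.limsup_le_limsup
  · filter_upwards [eventually_gt_atTop 0] with n hn
    have hn' : (0 : ℝ) < n := by exact_mod_cast hn
    rcases Nat.eq_zero_or_pos (nWords k u v n) with h | h
    · simp only [h]
      have h1 : 0 ≤ Real.logb 2 C' := Real.logb_nonneg one_lt_two hC1
      have h2 : 0 ≤ Real.logb 2 L := Real.logb_nonneg one_lt_two hL
      simp
      positivity
    · rw [div_add' _ _ _ hn'.ne']
      apply div_le_div_of_nonneg_right _ hn'.le
      rw [mul_comm, ← Real.logb_pow, ← Real.logb_mul (by positivity) (by positivity)]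
      apply Real.logb_le_logb_of_le one_lt_two (by exact_mod_cast h)
      refine (hw n).trans ?_
      gcongr
      exact le_max_left _ _
  · exact (isBoundedUnder_of ⟨0, fun n => ent_nonneg k u v n⟩).isCoboundedUnder_le
  · exact ht.isBoundedUnder_le

lemma Grow_of_ent_lt {k : ℕ} {u v : ℕ → ℕ} {L : ℝ} (hL : 1 ≤ L)
    (h : entS k u v < Real.logb 2 L) : Grow (SigSet k u v) L := by
  have hev := Filter.eventually_lt_of_limsup_lt h
    (isBoundedUnder_of ⟨_, fun n => ent_bdd k u v n⟩)
  obtain ⟨N, hN⟩ := eventually_atTop.mp (hev.and (eventually_gt_atTop 0))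
  have hL0 : 0 < L := by linarith
  refine Grow_of_nWords (C := 1 + ∑ n ∈ Finset.range N, (nWords k u v n : ℝ)) (by positivity) ?_
  intro n
  have hLn : 1 ≤ L ^ n := one_le_pow₀ hL
  have hS : 0 ≤ ∑ n ∈ Finset.range N, (nWords k u v n : ℝ) := by positivity
  by_cases hn : n < N
  · have h1 : (nWords k u v n : ℝ) ≤ ∑ n ∈ Finset.range N, (nWords k u v n : ℝ) :=
      Finset.single_le_sum (f := fun n => (nWords k u v n : ℝ)) (fun i _ => by positivity)
        (Finset.mem_range.mpr hn)
    nlinarith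
  · obtain ⟨h1, h2⟩ := hN n (by omega)
    have hn' : (0 : ℝ) < n := by exact_mod_cast h2
    rw [div_lt_iff₀ hn', mul_comm, ← Real.logb_pow] at h1
    have h3 : (nWords k u v n : ℝ) ≤ L ^ n := by
      rcases Nat.eq_zero_or_pos (nWords k u v n) with h | h
      · rw [h]; simp; positivity
      · exact ((Real.logb_lt_logb_iff one_lt_two (by exact_mod_cast h) (by positivity)).mp h1).le
    nlinarith

end EPM

namespace EPM

variable {α β : Type*}

lemma LX_swap {r : α → α → Prop} {x y : ℕ → α} (h : LX r x y) : LX (fun a b => r b a) y x := by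
  rcases h with rfl | ⟨m, hm, hr⟩
  · exact LX_refl _ _
  · exact Or.inr ⟨m, fun i hi => (hm i hi).symm, hr⟩

lemma lexLe_iff (x y : ℕ → ℕ) : lexLe x y ↔ LX (· < ·) x y := Iff.rfl

lemma lexLe_iff_gt (x y : ℕ → ℕ) : lexLe x y ↔ LX (· > ·) y x :=
  ⟨fun h => LX_swap h, fun h => LX_swap h⟩

lemma mem_SigSet {k : ℕ} {u v x : ℕ → ℕ} : x ∈ SigSet k u v ↔
    (∀ i, x i < k) ∧ ∀ n, LX (· < ·) u (dr n x) ∧ LX (· < ·) (dr n x) v := by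
  simp only [SigSet, mem_ofPred_eq, shft_iter]
  exact Iff.rfl

lemma dr_SigSet {k : ℕ} {u v x : ℕ → ℕ} (h : x ∈ SigSet k u v) (m : ℕ) :
    dr m x ∈ SigSet k u v := by
  rw [mem_SigSet] at h ⊢
  refine ⟨fun i => h.1 _, fun n => ?_⟩
  rw [dr_dr]; exact h.2 _

lemma cat_dr (m : ℕ) (x : ℕ → α) : cat m x (dr m x) = x := by
  funext i
  simp only [cat, dr]
  split_ifs with h
  · rfl
  · congr 1; omega

lemma cat_agree {m : ℕ} {x y z : ℕ → α} (h : ∀ i, i < m → x i = y i) : cat m x z = cat m y z := by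
  funext i
  simp only [cat]
  split_ifs with hi
  · exact h i hi
  · rfl

lemma dr_cat (m : ℕ) (x z : ℕ → α) : dr m (cat m x z) = z := by
  funext i; simp [dr, cat]

lemma dr_cat_ge {m n : ℕ} (h : m ≤ n) (x z : ℕ → α) : dr n (cat m x z) = dr (n - m) z := by
  funext i; simp only [dr, cat]; rw [if_neg (by omega)]; congr 1; omega

lemma dr_cat_le {m n : ℕ} (h : n ≤ m) (x z : ℕ → α) :
    dr n (cat m x z) = cat (m - n) (dr n x) z := by
  funext i; simp only [dr, cat]
  by_cases hi : i + n < m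
  · rw [if_pos hi, if_pos (by omega)]
  · rw [if_neg hi, if_neg (by omega)]; congr 1; omega

lemma sandwich {r : α → α → Prop} (has : ∀ a b, r a b → ¬ r b a)
    {x y z : ℕ → α} {n : ℕ} (hxy : ∀ i, i < n → x i = y i) (h1 : LX r x z) (h2 : LX r z y) :
    ∀ i, i < n → z i = x i := by
  intro i
  induction i using Nat.strong_induction_on with
  | _ i ih =>
    intro hi
    have hirr : ∀ a, ¬ r a a := fun a h => has a a h h
    have e1 := LX_head' (LX_pre' hirr i (fun j hj => (ih j hj (by omega)).symm) h1)
    have e2 := LX_head' (LX_pre' hirr i (fun j hj => (ih j hj (by omega)).trans (hxy j (by omega))) h2)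
    simp only [dr, Nat.zero_add] at e1 e2
    rcases e1 with e1 | e1
    · exact e1.symm
    rcases e2 with e2 | e2
    · exact e2.trans (hxy i hi).symm
    · rw [← hxy i hi] at e2
      exact absurd e1 (has _ _ e2)

lemma branch {r : α → α → Prop} (has : ∀ a b, r a b → ¬ r b a) {us u z : ℕ → α} {p : ℕ}
    (hp : 1 ≤ p) (hag : ∀ i, i < p - 1 → us i = u i)
    (hadj : ∀ t, r (us (p - 1)) t → r t (u (p - 1)) → False)
    (h1 : LX r us z) (h2 : LX r z u) :
    (z = cat p u (dr p z) ∧ LX r (dr p z) (dr p u)) ∨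
    (z = cat p us (dr p z) ∧ LX r (dr p us) (dr p z)) := by
  have hirr : ∀ a, ¬ r a a := fun a h => has a a h h
  have hs := sandwich has hag h1 h2
  have e1 := LX_head' (LX_pre' hirr (p - 1) (fun j hj => (hs j hj).symm) h1)
  have e2 := LX_head' (LX_pre' hirr (p - 1) (fun j hj => (hs j hj).trans (hag j hj)) h2)
  simp only [dr, Nat.zero_add] at e1 e2
  have key : ∀ w : ℕ → α, (∀ i, i < p - 1 → w i = z i) → w (p - 1) = z (p - 1) →
      ∀ i, i < p → w i = z i := by
    intro w hw hw' i hi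
    by_cases h : i < p - 1
    · exact hw i h
    · obtain rfl : i = p - 1 := by omega
      exact hw'
  rcases e2 with e2 | e2
  · left
    have hk := key u (fun i hi => (hag i hi).symm.trans (hs i hi).symm) e2.symm
    refine ⟨?_, LX_pre' hirr p (fun i hi => (hk i hi).symm) h2⟩
    rw [cat_agree hk, cat_dr]
  · rcases e1 with e1 | e1
    · right
      have hk := key us (fun i hi => (hs i hi).symm) e1
      refine ⟨?_, LX_pre' hirr p (fun i hi => (hk i hi)) h1⟩
      rw [cat_agree hk, cat_dr]
    · exact absurd e2 (fun h => hadj _ e1 h)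

lemma pre_cat [Inhabited α] {n p : ℕ} (h : p ≤ n) (w z : ℕ → α) :
    pre n (cat p w z) = pre n (cat p w (pre (n - p) z)) := by
  apply pre_congr
  intro i hi
  simp only [cat]
  split_ifs with h1
  · rfl
  · exact (pre_agree z _ (by omega)).symm

lemma E_grow [Inhabited α] (E : Bool → Set (ℕ → α)) (P : Bool → ℕ) (hP : ∀ e, 1 ≤ P e)
    (w w' : Bool → ℕ → α) (hag : ∀ e i, i < P e - 1 → w' e i = w e i)
    (hE : ∀ e, ∀ z ∈ E e, (∃ z' ∈ E e, z = cat (P e) (w e) z') ∨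
      (∃ z' ∈ E (!e), z = cat (P e) (w' e) z'))
    {L : ℝ} (hL : 1 ≤ L) (hx : (1 / L) ^ P false + (1 / L) ^ P true ≤ 1) (e : Bool) :
    Grow (E e) L := by
  classical
  set x := 1 / L with hxd
  have hL0 : 0 < L := by linarith
  have hx0 : 0 < x := by positivity
  have hLx : ∀ m : ℕ, x ^ m * L ^ m = 1 := by
    intro m; rw [← mul_pow, hxd, one_div, inv_mul_cancel₀ hL0.ne', one_pow]
  set C := L ^ P false + L ^ P true with hC
  have hCe : ∀ e, 1 ≤ C * x ^ P e := by
    intro e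
    have h2 := hLx (P e)
    have h3 : L ^ P e ≤ C := by
      have : 0 < L ^ P false := by positivity
      have : 0 < L ^ P true := by positivity
      cases e <;> linarith
    have h4 : 0 < x ^ P e := by positivity
    nlinarith
  have main : ∀ n, ∃ F : Bool → Finset (ℕ → α), ∀ e, (∀ z ∈ E e, pre n z ∈ F e) ∧
      ((F e).card : ℝ) ≤ C * x ^ P e * L ^ n := by
    intro n
    induction n using Nat.strong_induction_on with
    | _ n ih =>
      have : ∀ e, ∃ F : Finset (ℕ → α), (∀ z ∈ E e, pre n z ∈ F) ∧
          (F.card : ℝ) ≤ C * x ^ P e * L ^ n := by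
        intro e
        by_cases hn : n < P e
        · refine ⟨{pre n (w e)}, ?_, ?_⟩
          · intro z hz
            rw [Finset.mem_singleton]
            apply pre_congr
            intro i hi
            rcases hE e z hz with ⟨z', _, rfl⟩ | ⟨z', _, rfl⟩
            · simp only [cat]; rw [if_pos (by omega)]
            · simp only [cat]; rw [if_pos (by omega)]; exact hag e i (by omega)
          · have h1 := hCe e
            have h2 : 1 ≤ L ^ n := one_le_pow₀ hL
            simp only [Finset.card_singleton, Nat.cast_one]
            nlinarith
        · obtain ⟨F, hF⟩ := ih (n - P e) (by have := hP e; omega)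
          refine ⟨(F e).image (fun z => pre n (cat (P e) (w e) z)) ∪
            (F (!e)).image (fun z => pre n (cat (P e) (w' e) z)), ?_, ?_⟩
          · intro z hz
            rcases hE e z hz with ⟨z', hz', rfl⟩ | ⟨z', hz', rfl⟩
            · apply Finset.mem_union_left
              exact Finset.mem_image.mpr ⟨_, (hF e).1 z' hz', (pre_cat (by omega) _ _).symm⟩
            · apply Finset.mem_union_right
              exact Finset.mem_image.mpr ⟨_, (hF (!e)).1 z' hz', (pre_cat (by omega) _ _).symm⟩
          · have h1 : ((((F e).image (fun z => pre n (cat (P e) (w e) z)) ∪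
              (F (!e)).image (fun z => pre n (cat (P e) (w' e) z))).card : ℕ) : ℝ)
              ≤ (F e).card + (F (!e)).card := by
              have := Finset.card_union_le ((F e).image (fun z => pre n (cat (P e) (w e) z)))
                ((F (!e)).image (fun z => pre n (cat (P e) (w' e) z)))
              have a1 := Finset.card_image_le (s := F e) (f := fun z => pre n (cat (P e) (w e) z))
              have a2 := Finset.card_image_le (s := F (!e)) (f := fun z => pre n (cat (P e) (w' e) z))
              exact_mod_cast this.trans (add_le_add a1 a2)
            refine h1.trans ?_
            have h2 := (hF e).2
            have h3 := (hF (!e)).2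
            have h4 : x ^ P e + x ^ P (!e) ≤ 1 := by
              cases e
              · simpa using hx
              · simpa [add_comm] using hx
            have h5 : L ^ n = L ^ (n - P e) * L ^ P e := by
              rw [← pow_add, Nat.sub_add_cancel (by omega)]
            have h6 : C * x ^ P e * L ^ n = C * L ^ (n - P e) := by
              rw [h5]
              calc C * x ^ P e * (L ^ (n - P e) * L ^ P e)
                  = C * L ^ (n - P e) * (x ^ P e * L ^ P e) := by ring
                _ = _ := by rw [hLx, mul_one]
            rw [h6]
            have h7 : 0 ≤ C * L ^ (n - P e) := by positivity
            nlinarith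
      choose F hF using this
      exact ⟨F, hF⟩
  refine ⟨C * x ^ P e, by positivity, fun n => ?_⟩
  obtain ⟨F, hF⟩ := main n
  exact ⟨F e, hF e⟩

lemma exit_ok {r : α → α → Prop} (htr : ∀ a b c, r a b → r b c → r a c) (hirr : ∀ a, ¬ r a a)
    {u v x : ℕ → α} {m : ℕ}
    (h1 : ∀ n, n < m → LX r u (dr n x) ∧ LX r (dr n x) v) (h2 : LX r (dr m x) u)
    (h3 : ∀ j, LX r u (dr j v)) (h4 : ∀ j, LX r u (dr j u)) (h5 : ∀ j, LX r (dr j u) v) (n : ℕ) :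
    LX r u (dr n (cat m x u)) ∧ LX r (dr n (cat m x u)) v := by
  by_cases hn : n < m
  · rw [dr_cat_le hn.le]
    obtain ⟨a1, a2⟩ := h1 n hn
    constructor
    · refine LX_trans htr a1 (LX_pre (m - n) ?_ ?_)
      · intro i hi; simp [cat, hi]
      · rw [dr_cat, dr_dr, Nat.add_sub_cancel' hn.le]; exact h2
    · by_cases hag : ∀ i, i < m - n → dr n x i = v i
      · refine LX_pre (m - n) ?_ ?_
        · intro i hi; simp [cat, hi]; exact hag i hi
        · rw [dr_cat]; exact h3 _
      · rcases a2 with a2 | ⟨i, hi, hr⟩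
        · exact absurd (fun i _ => congrFun a2 i) hag
        · have him : i < m - n := by
            by_contra hc
            exact hag fun j hj => hi j (by omega)
          refine Or.inr ⟨i, fun j hj => ?_, ?_⟩
          · simp only [cat]; rw [if_pos (by omega)]; exact hi j hj
          · simp only [cat]; rw [if_pos him]; exact hr
  · rw [dr_cat_ge (by omega)]
    exact ⟨h4 _, h5 _⟩

lemma upper_Grow (k p q : ℕ) (hp : 2 ≤ p) (hq : 2 ≤ q)
    (a b : ℕ → ℕ) (ha : ∀ i, i < p → a i < k) (hb : ∀ i, i < q → b i < k)
    (u v ustar vstar : ℕ → ℕ)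
    (hua : u = fun n => a (n % p)) (hvb : v = fun n => b (n % q))
    (hcond : ∀ n, lexLe u (shft^[n] u) ∧ lexLe (shft^[n] u) v ∧
                  lexLe u (shft^[n] v) ∧ lexLe (shft^[n] v) v)
    (hap : 1 ≤ a (p - 1)) (hbq : b (q - 1) ≤ k - 2)
    (hustar : ustar = wcat p (fun i => if i = p - 1 then a (p - 1) - 1 else a i) v)
    (hvstar : vstar = wcat q (fun i => if i = q - 1 then b (q - 1) + 1 else b i) u)
    {L L' : ℝ} (hL : 1 ≤ L) (hLL : L < L') (hG : Grow (SigSet k u v) L)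
    (hx : (1 / L) ^ p + (1 / L) ^ q ≤ 1) : Grow (SigSet k ustar vstar) L' := by
  have hpu : dr p u = u := by funext i; simp [dr, hua]
  have hqv : dr q v = v := by funext i; simp [dr, hvb]
  have hpus : dr p ustar = v := by funext i; simp [dr, hustar, wcat]
  have hqvs : dr q vstar = u := by funext i; simp [dr, hvstar, wcat]
  have huk : ∀ i, u i < k := fun i => by rw [hua]; exact ha _ (Nat.mod_lt _ (by omega))
  have hvk : ∀ i, v i < k := fun i => by rw [hvb]; exact hb _ (Nat.mod_lt _ (by omega))
  have c1 : ∀ n, LX (· < ·) u (dr n u) := fun n => by have := (hcond n).1; rwa [shft_iter] at this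
  have c2 : ∀ n, LX (· < ·) (dr n u) v := fun n => by have := (hcond n).2.1; rwa [shft_iter] at this
  have c3 : ∀ n, LX (· < ·) u (dr n v) := fun n => by have := (hcond n).2.2.1; rwa [shft_iter] at this
  have c4 : ∀ n, LX (· < ·) (dr n v) v := fun n => by have := (hcond n).2.2.2; rwa [shft_iter] at this
  have agu : ∀ i, i < p - 1 → ustar i = u i := by
    intro i hi
    simp only [hustar, wcat, hua]
    rw [if_pos (by omega), if_neg (by omega), Nat.mod_eq_of_lt (by omega)]
  have agv : ∀ i, i < q - 1 → vstar i = v i := by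
    intro i hi
    simp only [hvstar, wcat, hvb]
    rw [if_pos (by omega), if_neg (by omega), Nat.mod_eq_of_lt (by omega)]
  have eu : ustar (p - 1) + 1 = u (p - 1) := by
    simp only [hustar, wcat, hua]
    rw [if_pos (by omega), if_pos trivial, Nat.mod_eq_of_lt (by omega)]; omega
  have ev : vstar (q - 1) = v (q - 1) + 1 := by
    simp only [hvstar, wcat, hvb]
    rw [if_pos (by omega), if_pos trivial, Nat.mod_eq_of_lt (by omega)]
  set S := SigSet k ustar vstar with hS
  let E : Bool → Set (ℕ → ℕ) := fun e => bif e then {z | z ∈ S ∧ LX (· > ·) z v}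
    else {z | z ∈ S ∧ LX (· < ·) z u}
  let P : Bool → ℕ := fun e => bif e then q else p
  let w : Bool → ℕ → ℕ := fun e => bif e then v else u
  let w' : Bool → ℕ → ℕ := fun e => bif e then vstar else ustar
  have hEg : ∀ e, Grow (E e) L := by
    apply E_grow E P (by intro e; cases e <;> simp [P] <;> omega) w w'
    · intro e i; cases e
      · exact agu i
      · exact agv i
    · intro e z hz
      cases e
      · obtain ⟨hzS, hzu⟩ := hz
        have h1 := ((mem_SigSet.mp hzS).2 0).1
        rw [dr_zero] at h1
        rcases branch (r := (· < ·)) (fun a b h => by omega) (by omega) agu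
          (fun t h1 h2 => by omega) h1 hzu with ⟨h, h'⟩ | ⟨h, h'⟩
        · left
          rw [hpu] at h'
          exact ⟨dr p z, ⟨dr_SigSet hzS p, h'⟩, h⟩
        · right
          rw [hpus] at h'
          exact ⟨dr p z, ⟨dr_SigSet hzS p, LX_swap h'⟩, h⟩
      · obtain ⟨hzS, hzu⟩ := hz
        have h1 := LX_swap ((mem_SigSet.mp hzS).2 0).2
        rw [dr_zero] at h1
        rcases branch (r := (· > ·)) (fun a b h => by omega) (by omega) agv
          (fun t h1 h2 => by omega) h1 hzu with ⟨h, h'⟩ | ⟨h, h'⟩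
        · left
          rw [hqv] at h'
          exact ⟨dr q z, ⟨dr_SigSet hzS q, h'⟩, h⟩
        · right
          rw [hqvs] at h'
          exact ⟨dr q z, ⟨dr_SigSet hzS q, LX_swap h'⟩, h⟩
    · exact hL
    · exact hx
  have hE : Grow (E false ∪ E true) L := Grow_union (hEg _) (hEg _)
  have hcat : Grow {y | ∃ m x z, x ∈ SigSet k u v ∧ z ∈ E false ∪ E true ∧ y = cat m x z} L' :=
    Grow_concat (by linarith) hLL hG hE (fun y hy => hy)
  refine Grow_subset ?_ (Grow_union (Grow_mono (by linarith) hLL.le hG) hcat)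
  intro x hxS
  by_cases hxs : x ∈ SigSet k u v
  · exact Or.inl hxs
  right
  have hxS' := mem_SigSet.mp hxS
  have hex : ∃ n, ¬ (LX (· < ·) u (dr n x) ∧ LX (· < ·) (dr n x) v) := by
    by_contra hc
    push Not at hc
    exact hxs (mem_SigSet.mpr ⟨hxS'.1, hc⟩)
  classical
  set m := Nat.find hex with hm
  have hlt : ∀ n, n < m → LX (· < ·) u (dr n x) ∧ LX (· < ·) (dr n x) v := by
    intro n hn
    have := Nat.find_min hex hn
    rwa [not_not] at this
  have hspec := Nat.find_spec hex
  rw [← hm] at hspec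
  have htot : ∀ (s t : ℕ → ℕ), ¬ LX (· < ·) s t → LX (· < ·) t s := by
    intro s t h
    rcases LX_total (r := (· < ·)) (fun a b h => by omega) s t with h' | h'
    · exact absurd h' h
    · exact Or.inr h'
  have hck : ∀ s : ℕ → ℕ, (∀ i, s i < k) → ∀ i, cat m x s i < k := by
    intro s hs i; simp only [cat]; split_ifs
    · exact hxS'.1 _
    · exact hs _
  by_cases hu : LX (· < ·) u (dr m x)
  · have hv : ¬ LX (· < ·) (dr m x) v := fun h => hspec ⟨hu, h⟩
    have hv' := htot _ _ hv
    refine ⟨m, cat m x v, dr m x, mem_SigSet.mpr ⟨hck v hvk, fun n => ?_⟩,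
      Or.inr ⟨dr_SigSet hxS m, LX_swap hv'⟩, ?_⟩
    · have := exit_ok (r := (· > ·)) (u := v) (v := u) (x := x) (m := m) (fun a b c h1 h2 => by omega)
        (fun a h => by omega) (fun n hn => ⟨LX_swap (hlt n hn).2, LX_swap (hlt n hn).1⟩)
        (LX_swap hv') (fun j => LX_swap (c2 j)) (fun j => LX_swap (c4 j)) (fun j => LX_swap (c3 j)) n
      exact ⟨LX_swap this.2, LX_swap this.1⟩
    · rw [cat_agree (y := x) (fun i hi => by simp [cat, hi]), cat_dr]
  · have hu' := htot _ _ hu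
    refine ⟨m, cat m x u, dr m x, mem_SigSet.mpr ⟨hck u huk, fun n => ?_⟩,
      Or.inl ⟨dr_SigSet hxS m, hu'⟩, ?_⟩
    · exact exit_ok (r := (· < ·)) (u := u) (v := v) (x := x) (m := m) (fun a b c h1 h2 => by omega)
        (fun a h => by omega) hlt hu' c3 c1 c2 n
    · rw [cat_agree (y := x) (fun i hi => by simp [cat, hi]), cat_dr]

lemma lower_sub (k p q : ℕ) (hp : 2 ≤ p) (hq : 2 ≤ q)
    (a b : ℕ → ℕ) (u v ustar vstar : ℕ → ℕ)
    (hua : u = fun n => a (n % p)) (hvb : v = fun n => b (n % q))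
    (hap : 1 ≤ a (p - 1))
    (hustar : ustar = wcat p (fun i => if i = p - 1 then a (p - 1) - 1 else a i) v)
    (hvstar : vstar = wcat q (fun i => if i = q - 1 then b (q - 1) + 1 else b i) u) :
    SigSet k u v ⊆ SigSet k ustar vstar := by
  have h1 : LX (· < ·) ustar u := by
    refine Or.inr ⟨p - 1, fun i hi => ?_, ?_⟩
    · simp only [hustar, wcat, hua]
      rw [if_pos (by omega), if_neg (by omega), Nat.mod_eq_of_lt (by omega)]
    · simp only [hustar, wcat, hua]
      rw [if_pos (by omega), if_pos trivial, Nat.mod_eq_of_lt (by omega)]; omega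
  have h2 : LX (· < ·) v vstar := by
    refine Or.inr ⟨q - 1, fun i hi => ?_, ?_⟩
    · simp only [hvstar, wcat, hvb]
      rw [if_pos (by omega), if_neg (by omega), Nat.mod_eq_of_lt (by omega)]
    · simp only [hvstar, wcat, hvb]
      rw [if_pos (by omega), if_pos trivial, Nat.mod_eq_of_lt (by omega)]; omega
  have htr : ∀ a b c : ℕ, a < b → b < c → a < c := fun a b c h1 h2 => h1.trans h2
  intro x hx
  rw [mem_SigSet] at hx ⊢
  exact ⟨hx.1, fun n => ⟨LX_trans htr h1 (hx.2 n).1, LX_trans htr (hx.2 n).2 h2⟩⟩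

end EPM

namespace EPM

/-! ### binary sequences -/

/-- the order on `Bool` in which `e` is the least letter -/
def R (e a b : Bool) : Prop := a = e ∧ b = !e

/-- the lexicographic order in which `e` is the least letter -/
def Le (e : Bool) (x y : ℕ → Bool) : Prop := LX (R e) x y

/-- binary shift space -/
def Sg (U : Bool → ℕ → Bool) : Set (ℕ → Bool) := {x | ∀ e n, Le e (U e) (dr n x)}

lemma R_irr (e : Bool) : ∀ a, ¬ R e a a := by
  intro a h; obtain ⟨h1, h2⟩ := h; cases e <;> simp_all

lemma R_as (e : Bool) : ∀ a b, R e a b → ¬ R e b a := by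
  rintro a b ⟨h1, h2⟩ ⟨h3, h4⟩; cases e <;> simp_all

lemma R_tr (e : Bool) : ∀ a b c, R e a b → R e b c → R e a c := by
  rintro a b c ⟨h1, h2⟩ ⟨h3, h4⟩; cases e <;> simp_all

lemma R_tri (e : Bool) : ∀ a b, a ≠ b → R e a b ∨ R e b a := by
  intro a b h; cases e <;> cases a <;> cases b <;> simp_all [R]

lemma Le_trans {e : Bool} {x y z : ℕ → Bool} (h1 : Le e x y) (h2 : Le e y z) : Le e x z :=
  LX_trans (R_tr e) h1 h2

lemma Le_head {e : Bool} {x y : ℕ → Bool} (hx : x 0 = e) (hy : y 0 = !e) : Le e x y :=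
  LX_head ⟨hx, hy⟩

lemma Le_cons {e : Bool} {x y : ℕ → Bool} (h0 : x 0 = y 0) (h : Le e (dr 1 x) (dr 1 y)) : Le e x y :=
  LX_cons h0 h

lemma Le_cons' {e : Bool} {x y : ℕ → Bool} (h0 : x 0 = y 0) (h : Le e x y) :
    Le e (dr 1 x) (dr 1 y) := LX_cons' (R_irr e) h0 h

lemma Le_const {e : Bool} {x y : ℕ → Bool} (h : ∀ i, x i = e) : Le e x y := by
  by_cases hxy : x = y
  · exact Or.inl hxy
  · obtain ⟨m, h1, h2⟩ := first_diff hxy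
    refine Or.inr ⟨m, h1, h m, ?_⟩
    rw [h m] at h2
    cases e <;> cases hy : y m <;> simp_all

lemma not_Le {e : Bool} {x y : ℕ → Bool} (h : ¬ Le e x y) :
    ∃ m, (∀ i, i < m → y i = x i) ∧ R e (y m) (x m) := by
  rcases LX_total (R_tri e) x y with h' | h'
  · exact absurd h' h
  · exact h'

lemma Le_self (e : Bool) (x : ℕ → Bool) : Le e x x := LX_refl _ _

/-- a string starting with the least letter increases under the shift -/
lemma Le_shift {e : Bool} {x : ℕ → Bool} (h : x 0 = e) : Le e x (dr 1 x) := by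
  by_cases hx : ∀ i, x i = e
  · exact Le_const hx
  · push Not at hx
    classical
    have hsp := Nat.find_spec hx
    have hmin : ∀ i, i < Nat.find hx → x i = e := fun i hi => by simpa using Nat.find_min hx hi
    set m := Nat.find hx
    have hm : m ≠ 0 := by rintro h0; rw [h0] at hsp; exact hsp h
    refine Or.inr ⟨m - 1, fun i hi => ?_, ?_, ?_⟩
    · simp only [dr]; rw [hmin i (by omega), hmin (i + 1) (by omega)]
    · exact hmin _ (by omega)
    · simp only [dr]; rw [Nat.sub_add_cancel (by omega)]
      cases e <;> simp_all

lemma dr_Sg {U : Bool → ℕ → Bool} {x : ℕ → Bool} (h : x ∈ Sg U) (m : ℕ) : dr m x ∈ Sg U := by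
  intro e n; rw [dr_dr]; exact h e _

/-- the alternating sequence -/
def alt (e : Bool) : ℕ → Bool
  | 0 => e
  | n + 1 => !(alt e n)

lemma alt_zero (e : Bool) : alt e 0 = e := rfl

lemma alt_succ (e : Bool) (n : ℕ) : alt e (n + 1) = !(alt e n) := rfl

lemma alt_two (e : Bool) (n : ℕ) : alt e (n + 2) = alt e n := by simp [alt_succ]

lemma dr_two_alt (e : Bool) : dr 2 (alt e) = alt e := funext fun n => alt_two e n

lemma alt_even (e : Bool) (n : ℕ) : alt e (2 * n) = e := by
  induction n with
  | zero => rfl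
  | succ n ih => rw [Nat.mul_succ, alt_two, ih]

lemma alt_odd (e : Bool) (n : ℕ) : alt e (2 * n + 1) = !e := by
  rw [alt_succ, alt_even]

/-- hypotheses on the pair of periodic strings -/
structure Hyp (U : Bool → ℕ → Bool) (P : Bool → ℕ) : Prop where
  pos : ∀ e, 1 ≤ P e
  zero : ∀ e, U e 0 = e
  per : ∀ e, dr (P e) (U e) = U e
  mem : ∀ e, U e ∈ Sg U

/-- the conclusion of the binary theorem -/
def Concl (U : Bool → ℕ → Bool) (P : Bool → ℕ) : Prop :=
  Thin (Sg U) ∨ ∃ c : Bool → List Bool, (∀ e, ∃ t, c e = e :: t) ∧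
    (∀ e i, List.count i (c e) ≤ List.count i (pl (P e) (U e))) ∧ ∀ z, Sub c z ∈ Sg U

lemma per_mul {x : ℕ → Bool} {P : ℕ} (h : dr P x = x) (j : ℕ) : dr (j * P) x = x := by
  induction j with
  | zero => simp [dr_zero]
  | succ j ih => rw [Nat.succ_mul, ← dr_dr, ih, h]

lemma per_dr {α : Type*} {x : ℕ → α} {P : ℕ} (h : dr P x = x) (n : ℕ) :
    dr P (dr n x) = dr n x := by
  rw [dr_dr, Nat.add_comm, ← dr_dr, h]

/-- counts in one period do not change under the shift -/
lemma count_pl_dr {x : ℕ → Bool} {P : ℕ} (h : dr P x = x) (hP : 1 ≤ P) (i : Bool) :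
    List.count i (pl P (dr 1 x)) = List.count i (pl P x) := by
  have h1 : pl (1 + P) x = pl 1 x ++ pl P (dr 1 x) := pl_add 1 P x
  have h2 : pl (1 + P) x = pl P x ++ [x P] := by rw [Nat.add_comm, pl_succ]
  have h3 : x P = x 0 := by have := congrFun h 0; simpa [dr] using this
  have h4 : pl 1 x = [x 0] := by simp [pl]
  have := congrArg (List.count i) (h1.symm.trans h2)
  rw [List.count_append, List.count_append, h3, h4] at this
  omega

lemma mem_pl {α : Type*} {x : ℕ → α} {n i : ℕ} (h : i < n) : x i ∈ pl n x := by
  simp only [pl, List.mem_map, List.mem_range]; exact ⟨i, h, rfl⟩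

lemma exists_lt_per {x : ℕ → Bool} {P : ℕ} (h : dr P x = x) (hP : 1 ≤ P) {i : ℕ} {l : Bool}
    (hi : x i = l) : ∃ j, j < P ∧ x j = l := by
  induction i using Nat.strong_induction_on with
  | _ i ih =>
    by_cases hlt : i < P
    · exact ⟨i, hlt, hi⟩
    · refine ih (i - P) (by omega) ?_
      have := congrFun h (i - P)
      simp only [dr] at this
      rw [Nat.sub_add_cancel (by omega)] at this
      rw [← this, hi]

/-! ### reduction -/

/-- the elementary substitution -/
def th (f : Bool → Bool) (l : Bool) : List Bool := if f l then [l, !l] else [l]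

lemma th_ne (f : Bool → Bool) : ∀ l, th f l ≠ [] := by
  intro l; simp only [th]; split_ifs <;> simp

lemma th_hd (f : Bool → Bool) : ∀ l, ∃ t, th f l = id l :: t := by
  intro l; simp only [th]; split_ifs
  · exact ⟨[!l], rfl⟩
  · exact ⟨[], rfl⟩

lemma Sub_th_mono (f : Bool → Bool) {e : Bool} {x y : ℕ → Bool} (h : Le e x y) :
    Le e (Sub (th f) x) (Sub (th f) y) :=
  Sub_mono (th_ne f) (th_hd f) (fun _ _ h => h) h

lemma Sub_th_reflect (f : Bool → Bool) {e : Bool} {x y : ℕ → Bool}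
    (h : Le e (Sub (th f) x) (Sub (th f) y)) : Le e x y :=
  Sub_reflect (th_ne f) (th_hd f) Function.injective_id (R_irr e) (fun _ _ h => h) h

lemma Sub_th_zero (f : Bool → Bool) (x : ℕ → Bool) : Sub (th f) x 0 = x 0 := by
  have := Sub_at (th_ne f) (th_hd f) x 0
  simpa [bl, pl] using this

lemma bl_ge (f : Bool → Bool) (z : ℕ → Bool) (m : ℕ) : m ≤ bl (th f) z m := by
  induction m with
  | zero => omega
  | succ m ih =>
    rw [bl_succ]
    have := List.length_pos_iff.mpr (th_ne f (z m))
    omega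

lemma bl_gt (f : Bool → Bool) (z : ℕ → Bool) {m : ℕ} (hm : 1 ≤ m) (h : f (z 0) = true) :
    m < bl (th f) z m := by
  induction m, hm using Nat.le_induction with
  | base =>
    have : bl (th f) z 1 = bl (th f) z 0 + (th f (z 0)).length := bl_succ _ _ _
    rw [this]; simp [th, h]
  | succ m hm ih =>
    rw [bl_succ]
    have := List.length_pos_iff.mpr (th_ne f (z m))
    omega

lemma count_th (f : Bool → Bool) (i : Bool) (w : List Bool) :
    List.count i (w.flatMap (th f)) =
      List.count i w + (if f (!i) then List.count (!i) w else 0) := by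
  induction w with
  | nil => simp
  | cons a w ih =>
    rw [List.flatMap_cons, List.count_append, ih]
    cases i <;> cases a <;> cases h1 : f false <;> cases h2 : f true <;>
      simp only [th, h1, h2, List.count_cons, List.count_nil, Bool.not_true, Bool.not_false,
        beq_self_eq_true, if_true, if_false, Bool.false_eq_true, Bool.true_eq_false, reduceCtorEq,
        beq_iff_eq] <;> omega

lemma Sub_th_causal (f : Bool → Bool) : ∀ (x y : ℕ → Bool) n, (∀ i, i < n → x i = y i) →
    ∀ i, i < n → Sub (th f) x i = Sub (th f) y i := by
  intro x y n h i hi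
  exact (Sub_agree (th_ne f) h).2 i (lt_of_lt_of_le hi (bl_ge f x n))

section Reduction

variable {U : Bool → ℕ → Bool} {P : Bool → ℕ} {f : Bool → Bool} {V : Bool → ℕ → Bool}

/-- the desubstituted pair -/
structure Red (U : Bool → ℕ → Bool) (f : Bool → Bool) (V : Bool → ℕ → Bool) : Prop where
  one : ∀ e, f (!e) = true → U e 1 = e
  eq0 : ∀ e, f (!e) = false → U e = Sub (th f) (V e)
  eq1 : ∀ e, f (!e) = true → dr 1 (U e) = Sub (th f) (V e)

lemma Red.mem (hU : Hyp U P) (hV : Red U f V) (e : Bool) : Sub (th f) (V e) ∈ Sg U := by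
  cases h : f (!e)
  · rw [← hV.eq0 e h]; exact hU.mem e
  · rw [← hV.eq1 e h]; exact dr_Sg (hU.mem e) 1

lemma Red.zero (hU : Hyp U P) (hV : Red U f V) (e : Bool) : V e 0 = e := by
  rw [← Sub_th_zero f (V e)]
  cases h : f (!e)
  · rw [← hV.eq0 e h]; exact hU.zero e
  · rw [← hV.eq1 e h]; exact hV.one e h

lemma Red.le (hU : Hyp U P) (hV : Red U f V) (e : Bool) : Le e (U e) (Sub (th f) (V e)) := by
  cases h : f (!e)
  · rw [← hV.eq0 e h]; exact LX_refl _ _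
  · rw [← hV.eq1 e h]; exact Le_shift (hU.zero e)

lemma Red.forward (hU : Hyp U P) (hV : Red U f V) {y : ℕ → Bool} (hy : y ∈ Sg V) :
    Sub (th f) y ∈ Sg U := by
  intro e n
  obtain ⟨m, k, hk, hn, hd⟩ := dr_Sub (th_ne f) y n
  rcases Nat.eq_zero_or_pos k with rfl | hk0
  · rw [hn, Nat.add_zero, dr_bl (th_ne f)]
    exact Le_trans (hV.le hU e) (Sub_th_mono f (hy e m))
  · rw [hd]
    by_cases hf : f (y m) = true
    · have hth : th f (y m) = [y m, !(y m)] := by simp [th, hf]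
      rw [hth] at hk ⊢
      have hk1 : k = 1 := by simp at hk; omega
      subst hk1
      simp only [List.drop_succ_cons, List.drop_zero]
      by_cases hl : y m = e
      · apply Le_head (hU.zero e)
        rw [apL_cons_zero, hl]
      · have hl' : y m = !e := by cases hh : y m <;> cases e <;> simp_all
        rw [hl', Bool.not_not]
        rw [hl'] at hf
        apply Le_cons
        · rw [apL_cons_zero]; exact hU.zero e
        · rw [dr_one_apL_cons, apL_nil, hV.eq1 e hf]
          exact Sub_th_mono f (hy e (m + 1))
    · have hth : th f (y m) = [y m] := by simp [th, hf]
      rw [hth] at hk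
      simp at hk; omega

lemma Red.back (hU : Hyp U P) (hV : Red U f V) {y : ℕ → Bool} (hy : Sub (th f) y ∈ Sg U)
    {e : Bool} {m : ℕ} (hm : y m = !e) : Le e (V e) (dr (m + 1) y) := by
  cases h : f (!e)
  · have := hy e (bl (th f) y (m + 1))
    rw [dr_bl (th_ne f), hV.eq0 e h] at this
    exact Sub_th_reflect f this
  · have h1 := hy e (bl (th f) y m + 1)
    rw [← dr_dr, dr_bl (th_ne f), Sub_eq (th_ne f)] at h1
    have h0 : (dr m y) 0 = !e := by simpa [dr] using hm
    have hth : th f (!e) = [!e, e] := by simp [th, h]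
    rw [h0, hth, dr_one_apL_cons, dr_dr] at h1
    have h2 := Le_cons' (by rw [apL_cons_zero]; exact hU.zero e) h1
    rw [dr_one_apL_cons, apL_nil, hV.eq1 e h] at h2
    exact Sub_th_reflect f h2

lemma Red.back' (hU : Hyp U P) (hV : Red U f V) {y : ℕ → Bool} (hy : Sub (th f) y ∈ Sg U)
    {e : Bool} {m : ℕ} (hm : y m = !e) (n : ℕ) : Le e (V e) (dr (m + 1 + n) y) := by
  induction n with
  | zero => exact hV.back hU hy hm
  | succ n ih =>
    by_cases h : y (m + 1 + n) = e
    · refine Le_trans ih ?_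
      have := Le_shift (e := e) (x := dr (m + 1 + n) y) (by simpa [dr] using h)
      rwa [dr_dr] at this
    · have h' : y (m + 1 + n) = !e := by cases hh : y (m + 1 + n) <;> cases e <;> simp_all
      exact hV.back hU hy h'

lemma Red.per (hU : Hyp U P) (hV : Red U f V) (e : Bool) :
    dr (P e) (Sub (th f) (V e)) = Sub (th f) (V e) := by
  cases h : f (!e)
  · rw [← hV.eq0 e h]; exact hU.per e
  · rw [← hV.eq1 e h]; exact per_dr (hU.per e) 1

lemma Red.count (hU : Hyp U P) (hV : Red U f V) (e i : Bool) :
    List.count i (pl (P e) (Sub (th f) (V e))) = List.count i (pl (P e) (U e)) := by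
  cases h : f (!e)
  · rw [← hV.eq0 e h]
  · rw [← hV.eq1 e h]; exact count_pl_dr (hU.per e) (hU.pos e) i

lemma Red.boundary (hU : Hyp U P) (hV : Red U f V) (e : Bool) :
    ∃ m, P e = bl (th f) (V e) m := by
  obtain ⟨m, k, hk, hn⟩ := bl_exists (th_ne f) (V e) (P e)
  rcases Nat.eq_zero_or_pos k with rfl | hk0
  · exact ⟨m, hn⟩
  exfalso
  by_cases hf : f (V e m) = true
  · have hth : th f (V e m) = [V e m, !(V e m)] := by simp [th, hf]
    rw [hth] at hk
    have hk1 : k = 1 := by simp at hk; omega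
    subst hk1
    have e1 : dr (bl (th f) (V e) m) (Sub (th f) (V e)) = apL [V e m, !(V e m)] (Sub (th f) (dr (m + 1) (V e))) := by
      rw [dr_bl (th_ne f), Sub_eq (th_ne f), dr_dr]
      have : dr m (V e) 0 = V e m := by simp [dr]
      rw [this, hth]
    have a0 := congrFun e1 0
    have a1 := congrFun e1 1
    rw [apL_cons_succ, apL_cons_zero] at a1
    rw [apL_cons_zero] at a0
    simp only [dr, Nat.zero_add] at a0 a1
    have hp := congrFun (hV.per hU e) 0
    simp only [dr, Nat.zero_add, hn] at hp
    rw [Nat.add_comm, a1, Sub_th_zero, hV.zero hU e] at hp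
    have hl : V e m = !e := by cases hh : V e m <;> cases e <;> simp_all
    rw [hl] at hf a0
    rw [← hV.eq1 e hf] at a0
    have hp2 := congrFun (hU.per e) 0
    simp only [dr, Nat.zero_add, hn] at hp2 a0
    rw [hp2, hU.zero e] at a0
    cases e <;> simp at a0
  · have hth : th f (V e m) = [V e m] := by simp [th, hf]
    rw [hth] at hk
    simp at hk; omega

lemma Red.hyp (hU : Hyp U P) (hV : Red U f V) :
    ∃ P', Hyp V P' ∧ (∀ e, P' e ≤ P e) ∧ (∀ e, f e = true → P' e < P e) ∧
      ∀ e, pl (P e) (Sub (th f) (V e)) = (pl (P' e) (V e)).flatMap (th f) := by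
  choose P' hP' using hV.boundary hU
  have hpos : ∀ e, 1 ≤ P' e := by
    intro e
    by_contra hc
    have h0 : P' e = 0 := by omega
    have := hP' e
    rw [h0] at this
    have h1 := hU.pos e
    simp [bl, pl] at this
    omega
  have hper : ∀ e, dr (P' e) (V e) = V e := by
    intro e
    have := hV.per hU e
    rw [hP' e, dr_bl (th_ne f)] at this
    exact Sub_inj (th_ne f) (th_hd f) Function.injective_id this
  refine ⟨P', ⟨hpos, hV.zero hU, hper, ?_⟩, ?_, ?_, ?_⟩
  · intro e l n
    by_cases hex : ∃ i, V e i = !l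
    · obtain ⟨i, hi⟩ := hex
      have h1 := hV.back' hU (hV.mem hU e) hi (n + (i + 1) * P' e - (i + 1))
      have h2 : i + 1 ≤ (i + 1) * P' e := Nat.le_mul_of_pos_right _ (hpos e)
      have h3 : i + 1 + (n + (i + 1) * P' e - (i + 1)) = (i + 1) * P' e + n := by omega
      rw [h3, ← dr_dr, per_mul (hper e)] at h1
      exact h1
    · push Not at hex
      have hall : ∀ i, V e i = l := fun i => by
        have := hex i
        cases hh : V e i <;> cases l <;> simp_all
      have hel : e = l := by rw [← hV.zero hU e]; exact hall 0
      subst hel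
      exact Le_const hall
  · intro e; rw [hP' e]; exact bl_ge _ _ _
  · intro e he
    have h1 := bl_gt f (V e) (hpos e) (by rw [hV.zero hU e]; exact he)
    rw [← hP' e] at h1
    exact h1
  · intro e
    have h1 := pl_apL ((pl (P' e) (V e)).flatMap (th f)) (Sub (th f) (dr (P' e) (V e)))
    rw [← Sub_pl (th_ne f)] at h1
    rw [hP' e]; exact h1

lemma Red.thin (hU : Hyp U P) (hV : Red U f V) (h : Thin (Sg V)) :
    Thin {x | x ∈ Sg U ∧ ∃ y, x = Sub (th f) y} := by
  have hC : ∀ l : Bool, Thin ({fun _ => l} : Set (ℕ → Bool)) := fun l => Thin_singleton _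
  have hT : Thin (({fun _ => false} : Set (ℕ → Bool)) ∪ {fun _ => true}) := Thin_union (hC _) (hC _)
  have h1 : Thin {y | ∃ m x z, x ∈ (({fun _ => false} : Set (ℕ → Bool)) ∪ {fun _ => true}) ∧
      z ∈ Sg V ∧ y = cat m x z} := Thin_concat hT h (fun y hy => hy)
  have h2 : Thin {y | ∃ m x z, x ∈ (({fun _ => false} : Set (ℕ → Bool)) ∪ {fun _ => true}) ∧
      z ∈ {y | ∃ m x z, x ∈ (({fun _ => false} : Set (ℕ → Bool)) ∪ {fun _ => true}) ∧
      z ∈ Sg V ∧ y = cat m x z} ∧ y = cat m x z} := Thin_concat hT h1 (fun y hy => hy)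
  refine Thin_subset ?_ (Thin_image (Sub (th f)) (Sub_th_causal f) (Thin_union hT h2))
  rintro x ⟨hx, y, rfl⟩
  refine ⟨y, ?_, rfl⟩
  have hc : ∀ l : Bool, (fun _ => l) ∈ (({fun _ => false} : Set (ℕ → Bool)) ∪ {fun _ => true}) := by
    intro l; cases l <;> simp
  by_cases hy : ∀ i, y i = y 0
  · left
    have : y = fun _ => y 0 := funext hy
    rw [this]; exact hc _
  · right
    push Not at hy
    classical
    have hsp := Nat.find_spec hy
    have hmin : ∀ i, i < Nat.find hy → y i = y 0 := fun i hi => by simpa using Nat.find_min hy hi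
    set j := Nat.find hy
    refine ⟨j, fun _ => y 0, dr j y, hc _, ⟨1, fun _ => y j, dr (j + 1) y, hc _, ?_, ?_⟩, ?_⟩
    · intro e n
      rw [dr_dr]
      by_cases he : y j = !e
      · exact hV.back' hU hx he n
      · have h0 : y 0 = !e := by
          cases h1 : y j <;> cases h2 : y 0 <;> cases e <;> simp_all
        have := hV.back' hU hx h0 (j + n)
        rwa [show 0 + 1 + (j + n) = j + 1 + n by omega] at this
    · rw [← dr_dr, cat_agree (y := dr j y), cat_dr]
      intro i hi
      obtain rfl : i = 0 := by omega
      simp [dr]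
    · rw [cat_agree (y := y), cat_dr]
      intro i hi; exact (hmin i hi).symm

lemma Red.witness (hU : Hyp U P) (hV : Red U f V) {P' : Bool → ℕ}
    (hP : ∀ e, pl (P e) (Sub (th f) (V e)) = (pl (P' e) (V e)).flatMap (th f))
    (h : ∃ c : Bool → List Bool, (∀ e, ∃ t, c e = e :: t) ∧
    (∀ e i, List.count i (c e) ≤ List.count i (pl (P' e) (V e))) ∧ ∀ z, Sub c z ∈ Sg V) :
    ∃ c : Bool → List Bool, (∀ e, ∃ t, c e = e :: t) ∧
    (∀ e i, List.count i (c e) ≤ List.count i (pl (P e) (U e))) ∧ ∀ z, Sub c z ∈ Sg U := by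
  obtain ⟨c, h1, h2, h3⟩ := h
  have hc : ∀ b, c b ≠ [] := by
    intro b; obtain ⟨t, ht⟩ := h1 b; simp [ht]
  refine ⟨fun e => (c e).flatMap (th f), ?_, ?_, ?_⟩
  · intro e
    obtain ⟨t, ht⟩ := h1 e
    obtain ⟨s, hs⟩ := th_hd f e
    exact ⟨s ++ t.flatMap (th f), by simp only [ht, List.flatMap_cons, hs]; rfl⟩
  · intro e i
    rw [← hV.count hU e i, hP e, count_th, count_th]
    apply add_le_add (h2 e i)
    split_ifs
    · exact h2 e _
    · exact le_refl _
  · intro z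
    rw [← Sub_Sub (th_ne f) hc]
    exact hV.forward hU (h3 z)

end Reduction

end EPM

namespace EPM

lemma eqn {x e : Bool} (h : x ≠ e) : x = !e := by cases x <;> cases e <;> simp_all

lemma neqn {e : Bool} : (!e) ≠ e := by cases e <;> simp

lemma pl_cons {α : Type*} (n : ℕ) (x : ℕ → α) : pl (n + 1) x = x 0 :: pl n (dr 1 x) := by
  rw [Nat.add_comm, pl_add]; simp [pl]

lemma pl_congr {α : Type*} {n : ℕ} {x y : ℕ → α} (h : ∀ i, i < n → x i = y i) : pl n x = pl n y := by
  simp only [pl]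
  apply List.map_congr_left
  intro a ha; exact h a (by simpa using ha)

lemma alt_pos {N : Bool → ℕ} (hN : ∀ b, 1 ≤ N b) {g : Bool} (hg : ∀ b, alt b (N b - 1) = g)
    (z : ℕ → Bool) (n : ℕ) :
    dr n (Sub (fun b => pl (N b) (alt b)) z) 0 ≠ dr n (Sub (fun b => pl (N b) (alt b)) z) 1 ∨
    ∃ m, dr n (Sub (fun b => pl (N b) (alt b)) z) =
      apL [g] (Sub (fun b => pl (N b) (alt b)) (dr m z)) := by
  have hc : ∀ b, (fun b => pl (N b) (alt b)) b ≠ [] := by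
    intro b h
    have := congrArg List.length h
    simp only [pl_length, List.length_nil] at this
    have := hN b; omega
  obtain ⟨m, k, hk, hn, hd⟩ := dr_Sub hc z n
  simp only [pl_length] at hk
  rw [hd]
  by_cases h : k + 1 < N (z m)
  · left
    rw [apL_lt (by simp [pl_length]; omega), apL_lt (by simp [pl_length]; omega)]
    simp only [pl, List.getElem_drop, List.getElem_map, List.getElem_range]
    rw [Nat.add_zero, alt_succ]
    cases alt (z m) k <;> simp
  · right
    refine ⟨m + 1, ?_⟩
    have hk' : k = N (z m) - 1 := by omega
    have : (pl (N (z m)) (alt (z m))).drop k = [g] := by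
      rw [List.drop_eq_getElem_cons (by rw [pl_length]; exact hk), List.drop_eq_nil_of_le (by rw [pl_length]; omega)]
      simp only [pl, List.getElem_map, List.getElem_range]
      rw [hk', hg]
    simp only [this]

lemma count_alt (e : Bool) (i : ℕ) : List.count e (pl (2 * i + 1) (alt e)) = i + 1 ∧
    List.count (!e) (pl (2 * i + 1) (alt e)) = i := by
  induction i with
  | zero =>
    rw [pl_cons, alt_zero]
    cases e <;> simp [pl]
  | succ i ih =>
    have : pl (2 * (i + 1) + 1) (alt e) = pl (2 * i + 1) (alt e) ++ [!e, e] := by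
      rw [show 2 * (i + 1) + 1 = 2 * i + 1 + 1 + 1 by ring, pl_succ, pl_succ, alt_odd,
        show 2 * i + 1 + 1 = 2 * (i + 1) by ring, alt_even]
      simp
    rw [this, List.count_append, List.count_append, ih.1, ih.2]
    cases e <;> simp

lemma pl_alt_two (e : Bool) : pl 2 (alt e) = [e, !e] := by
  simp [pl, List.range_succ, alt]

lemma pl_alt_one (e : Bool) : pl 1 (alt e) = [e] := by
  simp [pl, alt]

lemma le_count_of_mem {i : Bool} {l : List Bool} (h : i ∈ l) : 1 ≤ List.count i l :=
  List.one_le_count_iff.mpr h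

lemma count_pair_le {e i : Bool} {l : List Bool} (h1 : e ∈ l) (h2 : (!e) ∈ l) :
    List.count i [e, !e] ≤ List.count i l := by
  by_cases h : i = e
  · subst h
    have := le_count_of_mem h1
    cases i <;> simpa using this
  · have := eqn h; subst this
    have := le_count_of_mem h2
    cases e <;> simpa using this

lemma count_single_le {e i : Bool} {l : List Bool} (h1 : e ∈ l) :
    List.count i [e] ≤ List.count i l := by
  by_cases h : i = e
  · subst h
    have := le_count_of_mem h1
    simpa using this
  · simp [List.count_cons, Ne.symm h]

lemma last_ne {U : Bool → ℕ → Bool} {P : Bool → ℕ} (hU : Hyp U P) {e : Bool}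
    (hnc : ¬ ∀ i, U e i = e) : U e (P e - 1) = !e := by
  by_contra hc
  have hl : U e (P e - 1) = e := by
    by_contra h; exact hc (eqn h)
  have hP := hU.pos e
  have h1 := hU.mem e e (P e - 1)
  have h2 := Le_shift (e := e) (x := dr (P e - 1) (U e)) (by simpa [dr] using hl)
  rw [dr_dr, Nat.sub_add_cancel hP, hU.per e] at h2
  have h3 : U e = dr (P e - 1) (U e) := LX_antisymm (R_as e) h1 h2
  apply hnc
  intro i
  have h4 : dr 1 (U e) = U e := by
    conv_lhs => rw [h3]
    rw [dr_dr, Nat.sub_add_cancel hP, hU.per e]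
  induction i with
  | zero => exact hU.zero e
  | succ i ih => exact (congrFun h4 i).trans ih

/-- the base case of the induction -/
lemma base_case {U : Bool → ℕ → Bool} {P : Bool → ℕ} (hU : Hyp U P) (h1 : ∀ e, U e 1 = e)
    (e : Bool) (m : ℕ) (hm : ∀ i, i < m → U e i = apL [e] (alt e) i)
    (hr : R e (U e m) (apL [e] (alt e) m)) : Concl U P := by
  right
  have memP : ∀ l, l ∈ pl (P l) (U l) := by
    intro l
    have := mem_pl (x := U l) (i := 0) (n := P l) (hU.pos l)
    rwa [hU.zero l] at this
  have memP' : ∀ l, (¬ ∀ i, U l i = l) → (!l) ∈ pl (P l) (U l) := by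
    intro l hl
    have := mem_pl (x := U l) (i := P l - 1) (n := P l) (by have := hU.pos l; omega)
    rwa [last_ne hU hl] at this
  by_cases hc1 : ∀ i, U (!e) i = !e
  · by_cases hc2 : ∀ i, U e i = e
    · refine ⟨fun b => [b], fun b => ⟨[], rfl⟩, fun b i => count_single_le (memP b), ?_⟩
      intro z l n
      by_cases hl : l = e
      · subst hl; exact Le_const hc2
      · have := eqn hl; subst this; exact Le_const hc1
    · let N : Bool → ℕ := fun b => if b = e then 2 else 1
      have hNe : N e = 2 := by simp [N]
      have hNe' : N (!e) = 1 := by simp [N, neqn]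
      have cases_b : ∀ b, b = e ∨ b = !e := fun b => by
        by_cases h : b = e
        · exact Or.inl h
        · exact Or.inr (eqn h)
      have hN : ∀ b, 1 ≤ N b := by
        intro b; rcases cases_b b with rfl | rfl
        · omega
        · omega
      refine ⟨fun b => pl (N b) (alt b), ?_, ?_, ?_⟩
      · intro b
        have := hN b
        obtain ⟨n, hn⟩ : ∃ n, N b = n + 1 := ⟨N b - 1, by omega⟩
        simp only [hn, pl_cons, alt_zero]
        exact ⟨_, rfl⟩
      · intro b i
        rcases cases_b b with rfl | rfl
        · simp only [hNe, pl_alt_two]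
          exact count_pair_le (memP _) (memP' _ hc2)
        · simp only [hNe', pl_alt_one]
          exact count_single_le (memP _)
      · intro z l n
        rcases cases_b l with rfl | rfl
        · have hg : ∀ b, alt b (N b - 1) = !l := by
            intro b; rcases cases_b b with rfl | rfl
            · rw [hNe]; rfl
            · rw [hNe']; rfl
          rcases alt_pos hN hg z n with h | ⟨m, h⟩
          · by_cases h0 : dr n (Sub (fun b => pl (N b) (alt b)) z) 0 = l
            · apply LX_second
              · rw [hU.zero, h0]
              · refine ⟨h1 l, ?_⟩
                rw [h0] at h
                exact eqn h.symm
            · exact Le_head (hU.zero l) (eqn h0)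
          · rw [h]
            exact Le_head (hU.zero l) (apL_cons_zero _ _ _)
        · exact Le_const hc1
  · -- the opposite string is not constant
    obtain ⟨hr1, hr2⟩ := hr
    have hm0 : m ≠ 0 := by
      rintro rfl; rw [apL_cons_zero] at hr2; exact neqn hr2.symm
    obtain ⟨m', rfl⟩ : ∃ m', m = m' + 1 := ⟨m - 1, by omega⟩
    rw [apL_cons_succ, apL_nil] at hr2
    obtain ⟨j, rfl⟩ : ∃ j, m' = 2 * j + 1 := by
      rcases Nat.even_or_odd' m' with ⟨j, rfl | rfl⟩
      · rw [alt_even] at hr2; exact absurd hr2.symm neqn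
      · exact ⟨j, rfl⟩
    set V := dr 1 (U e) with hV
    have hVi : ∀ i, i < 2 * j + 1 → V i = alt e i := by
      intro i hi
      have := hm (i + 1) (by omega)
      rwa [apL_cons_succ, apL_nil] at this
    have hVj : V (2 * j + 1) = e := hr1
    have hVper : dr (P e) V = V := per_dr (hU.per e) 1
    have hplV : pl (2 * j + 1) V = pl (2 * j + 1) (alt e) := pl_congr hVi
    -- a common verification
    have common : ∀ i : ℕ, (∀ t, List.count t (pl (2 * i + 1) (alt e)) ≤ List.count t (pl (P e) (U e))) →
        (∀ c : Bool → List Bool, (∀ b, ∃ t, c b = b :: t) → c e = pl (2 * i + 1) (alt e) →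
          ∀ z : ℕ → Bool, z 0 = e → Le e V (Sub c z)) →
        ∃ c : Bool → List Bool, (∀ e, ∃ t, c e = e :: t) ∧
    (∀ e i, List.count i (c e) ≤ List.count i (pl (P e) (U e))) ∧ ∀ z, Sub c z ∈ Sg U := by
      intro i hcount hle
      let N : Bool → ℕ := fun b => if b = e then 2 * i + 1 else 2
      have hNe : N e = 2 * i + 1 := by simp [N]
      have hNe' : N (!e) = 2 := by simp [N, neqn]
      have cases_b : ∀ b, b = e ∨ b = !e := fun b => by
        by_cases h : b = e
        · exact Or.inl h
        · exact Or.inr (eqn h)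
      have hN : ∀ b, 1 ≤ N b := by
        intro b; rcases cases_b b with rfl | rfl
        · omega
        · omega
      have hhd : ∀ b, ∃ t, (fun b => pl (N b) (alt b)) b = b :: t := by
        intro b
        have := hN b
        obtain ⟨n, hn⟩ : ∃ n, N b = n + 1 := ⟨N b - 1, by omega⟩
        simp only [hn, pl_cons, alt_zero]
        exact ⟨_, rfl⟩
      have hc : ∀ b, (fun b => pl (N b) (alt b)) b ≠ [] := by
        intro b; obtain ⟨t, ht⟩ := hhd b; rw [ht]; simp
      refine ⟨fun b => pl (N b) (alt b), hhd, ?_, ?_⟩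
      · intro b t
        rcases cases_b b with rfl | rfl
        · simp only [hNe]; exact hcount t
        · simp only [hNe', pl_alt_two]
          exact count_pair_le (memP _) (memP' _ hc1)
      · have hg : ∀ b, alt b (N b - 1) = e := by
          intro b; rcases cases_b b with rfl | rfl
          · rw [hNe, Nat.add_sub_cancel, alt_even]
          · rw [hNe']; simp [alt]
        intro z l n
        rcases alt_pos hN hg z n with h | ⟨m, h⟩
        · by_cases h0 : dr n (Sub (fun b => pl (N b) (alt b)) z) 0 = l
          · apply LX_second
            · rw [hU.zero, h0]
            · refine ⟨h1 l, ?_⟩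
              rw [h0] at h
              exact eqn h.symm
          · exact Le_head (hU.zero l) (eqn h0)
        · rw [h]
          rcases cases_b l with rfl | rfl
          · apply Le_cons
            · rw [apL_cons_zero, hU.zero]
            · rw [dr_one_apL_cons, apL_nil, ← hV]
              by_cases hz : z m = l
              · exact hle _ hhd (by simp [hNe]) _ (by simpa [dr] using hz)
              · apply Le_head
                · exact h1 l
                · have := Sub_at hc (hd := id) hhd (dr m z) 0
                  simp only [bl, pl, List.range_zero, List.map_nil, List.flatMap_nil,
                    List.length_nil, dr, Nat.zero_add, id] at this
                  rw [← eqn hz]; exact this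
          · apply Le_head (hU.zero _)
            rw [apL_cons_zero, Bool.not_not]
    -- when `V` is periodic with period block `w j`
    have same : V = apL (pl (2 * j + 1) (alt e)) V →
        ∀ c : Bool → List Bool, (∀ b, ∃ t, c b = b :: t) → c e = pl (2 * j + 1) (alt e) →
          ∀ z : ℕ → Bool, z 0 = e → Le e V (Sub c z) := by
      intro hfix c hhd hce z _
      have hc : ∀ b, c b ≠ [] := by
        intro b; obtain ⟨t, ht⟩ := hhd b; simp [ht]
      have hVS : V = Sub c (fun _ => e) := by
        apply apL_inj_fix (w := c e) (hc e)
        · rw [hce]; exact hfix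
        · exact Sub_eq hc _
      rw [hVS]
      exact Sub_mono (hd := id) hc hhd (r := R e) (fun _ _ h => h) (Le_const fun _ => rfl)
    by_cases hc2 : ∀ i, U e i = e
    · have hj : j = 0 := by
        by_contra hj
        have := hVi 1 (by omega)
        rw [show alt e 1 = !e from rfl] at this
        have h' : V 1 = e := hc2 _
        rw [h'] at this
        exact neqn this.symm
      subst hj
      apply common 0
      · intro t
        rw [show 2 * 0 + 1 = 1 from rfl, pl_alt_one]
        exact count_single_le (memP e)
      · apply same
        rw [show 2 * 0 + 1 = 1 from rfl, pl_alt_one]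
        funext i
        rcases i with _ | i
        · rw [apL_cons_zero]; exact hc2 _
        · rw [apL_cons_succ, apL_nil]
          exact (hc2 _).trans (hc2 _).symm
    by_cases hP : P e = 2 * j + 1
    · apply common j
      · intro t
        rw [← hplV, ← hP, hV, count_pl_dr (hU.per e) (hU.pos e)]
      · apply same
        have := apL_pl (P e) V
        rw [hVper, hP, hplV] at this
        exact this.symm
    · have hlast := last_ne hU hc2
      have hP2 : 2 ≤ P e := by
        have := hU.pos e
        by_contra hlt
        have h : P e - 1 = 0 := by omega
        rw [h, hU.zero e] at hlast
        exact neqn hlast.symm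
      have hVl : V (P e - 2) = !e := by
        rw [← hlast, hV]; simp only [dr]; congr 1; omega
      have hPbig : 2 * j + 4 ≤ P e := by
        by_contra hlt
        by_cases hp1 : P e - 2 = 2 * j + 1
        · rw [hp1, hVj] at hVl; exact neqn hVl.symm
        have hp2 : P e - 2 < 2 * j + 1 := by omega
        have h3 := hVi _ hp2
        rw [hVl] at h3
        rcases Nat.even_or_odd' (P e - 2) with ⟨t, ht | ht⟩
        · rw [ht, alt_even] at h3; exact neqn h3
        · have hPt : P e = 2 * (t + 1) + 1 := by omega
          have h4 := congrFun hVper 0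
          simp only [dr, Nat.zero_add] at h4
          have h5 := hVi (P e) (by omega)
          rw [h4, hPt, alt_odd, hVi 0 (by omega), alt_zero] at h5
          exact neqn h5.symm
      apply common (j + 1)
      · have hsplit : pl (P e) V = (pl (2 * j + 1) (alt e) ++ [e]) ++ pl (P e - (2 * j + 2)) (dr (2 * j + 2) V) := by
          have h22 : pl (2 * j + 2) V = pl (2 * j + 1) (alt e) ++ [e] := by
            rw [show 2 * j + 2 = 2 * j + 1 + 1 by ring, pl_succ, hVj, hplV]
          rw [← h22, ← pl_add]
          congr 1; omega
        have hmem : (!e) ∈ pl (P e - (2 * j + 2)) (dr (2 * j + 2) V) := by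
          have := mem_pl (x := dr (2 * j + 2) V) (i := P e - 2 - (2 * j + 2)) (n := P e - (2 * j + 2)) (by omega)
          rw [dr_apply, Nat.sub_add_cancel (by omega), hVl] at this
          exact this
        have hcm := le_count_of_mem hmem
        intro t
        rw [← count_pl_dr (hU.per e) (hU.pos e), ← hV, hsplit, List.count_append, List.count_append]
        by_cases ht : t = e
        · subst ht
          rw [(count_alt t _).1, (count_alt t _).1]
          simp
        · have := eqn ht; subst this
          rw [(count_alt e _).2, (count_alt e _).2]
          omega
      · intro c hhd hce z hz
        have hc : ∀ b, c b ≠ [] := by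
          intro b; obtain ⟨t, ht⟩ := hhd b; simp [ht]
        have hS : ∀ i, i < 2 * (j + 1) + 1 → Sub c z i = alt e i := by
          intro i hi
          rw [Sub_eq hc, hz, hce, apL_lt (by rw [pl_length]; exact hi)]
          simp [pl]
        refine Or.inr ⟨2 * j + 1, fun i hi => ?_, hVj, ?_⟩
        · rw [hVi i hi, hS i (by omega)]
        · rw [hS _ (by omega), alt_odd]

lemma next_ne {U : Bool → ℕ → Bool} {P : Bool → ℕ} (hU : Hyp U P) {e : Bool} (h1 : U e 1 = !e)
    {x : ℕ → Bool} (hx : x ∈ Sg U) {n : ℕ} (hn : x n = e) : x (n + 1) = !e := by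
  have h := Le_cons' (by rw [hU.zero]; simpa [dr] using hn.symm) (hx e n)
  rcases LX_head' h with h | h
  · simp only [dr, Nat.zero_add] at h
    rw [Nat.add_comm, ← h, h1]
  · simp only [dr, Nat.zero_add] at h
    rw [Nat.add_comm]; exact h.2

/-- the binary theorem -/
theorem binary (U : Bool → ℕ → Bool) (P : Bool → ℕ) (hU : Hyp U P) : Concl U P := by
  obtain ⟨n, hn⟩ : ∃ n, P false + P true = n := ⟨_, rfl⟩
  induction n using Nat.strong_induction_on generalizing U P with
  | _ n ih =>
  -- reduction step
  have step : ∀ (f : Bool → Bool) (V : Bool → ℕ → Bool), Red U f V → (∃ e, f e = true) →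
      (Thin {x | x ∈ Sg U ∧ ∃ y, x = Sub (th f) y} → Thin (Sg U)) → Concl U P := by
    intro f V hV ⟨e, he⟩ hth
    obtain ⟨P', hP', hle, hlt, hpl⟩ := hV.hyp hU
    have hsum : P' false + P' true < n := by
      have a1 := hle false
      have a2 := hle true
      have a3 := hlt e he
      cases e <;> omega
    rcases ih _ hsum V P' hP' rfl with h | h
    · exact Or.inl (hth (hV.thin hU h))
    · exact Or.inr (hV.witness hU hpl h)
  by_cases hA : ∃ e, U e 1 = !e
  · obtain ⟨e, he⟩ := hA
    by_cases hB : U (!e) 1 = e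
    · -- alternating
      left
      refine Thin_subset ?_ (Thin_union (Thin_singleton (alt false)) (Thin_singleton (alt true)))
      intro x hx
      have hall : ∀ l, U l 1 = !l := by
        intro l
        by_cases h : l = e
        · rw [h]; exact he
        · have := eqn h; subst this; simpa using hB
      have : x = alt (x 0) := by
        funext i
        induction i with
        | zero => rfl
        | succ i ih' => rw [next_ne hU (hall (x i)) hx rfl, alt_succ, ← ih']
      rw [this]
      cases x 0 <;> simp
    · have hB' : U (!e) 1 = !e := by
        by_contra h; exact hB (by have := eqn h; simpa using this)
      let f : Bool → Bool := fun l => l == e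
      have hfe : f e = true := by simp [f]
      have hfe' : f (!e) = false := by cases e <;> simp [f]
      have parse : ∀ x, x ∈ Sg U → ∃ y, x = Sub (th f) y := by
        intro x hx
        apply Sub_parse (th_ne f) (fun x => x ∈ Sg U) _ x hx
        intro x hx
        by_cases h0 : x 0 = e
        · refine ⟨e, dr 2 x, ?_, dr_Sg hx 2⟩
          have hth : th f e = [e, !e] := by simp [th, hfe]
          have h1 := next_ne hU he hx h0
          rw [hth]
          have := apL_pl 2 x
          rw [show pl 2 x = [x 0, x 1] by simp [pl, List.range_succ], h0, h1] at this
          exact this.symm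
        · refine ⟨!e, dr 1 x, ?_, dr_Sg hx 1⟩
          have hth : th f (!e) = [!e] := by simp [th, hfe']
          rw [hth]
          have := apL_pl 1 x
          rw [show pl 1 x = [x 0] by simp [pl], eqn h0] at this
          exact this.symm
      have hVx : ∀ l, ∃ y, (if f (!l) then dr 1 (U l) else U l) = Sub (th f) y := by
        intro l
        split_ifs
        · exact parse _ (dr_Sg (hU.mem l) 1)
        · exact parse _ (hU.mem l)
      choose V hV using hVx
      refine step f V ⟨?_, ?_, ?_⟩ ⟨e, hfe⟩ ?_
      · intro l hl
        by_cases h : l = e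
        · rw [h, hfe'] at hl; cases hl
        · have := eqn h; subst this; exact hB'
      · intro l hl
        have := hV l
        simpa [hl] using this
      · intro l hl
        have := hV l
        simpa [hl] using this
      · intro h
        exact Thin_subset (A := Sg U) (B := {x | x ∈ Sg U ∧ ∃ y, x = Sub (th f) y})
          (by intro x hx; exact ⟨hx, parse x hx⟩) h
  · have h1 : ∀ e, U e 1 = e := by
      intro e
      by_contra h
      exact hA ⟨e, eqn h⟩
    by_cases hD : ∃ e, ¬ Le e (apL [e] (alt e)) (U e)
    · obtain ⟨e, he⟩ := hD
      obtain ⟨m, hm, hr⟩ := not_Le he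
      exact base_case hU h1 e m hm hr
    · push Not at hD
      let f : Bool → Bool := fun _ => true
      have hth : ∀ l, th f l = [l, !l] := fun l => by simp [th, f]
      -- the tail after a double letter
      have dbl : ∀ x, x ∈ Sg U → ∀ n l, x n = l → Le l (alt l) (dr (n + 1) x) := by
        intro x hx n l hl
        have h2 := Le_trans (hD l) (hx l n)
        have h3 := Le_cons' (by rw [apL_cons_zero]; simpa [dr] using hl.symm) h2
        rwa [dr_one_apL_cons, apL_nil, dr_dr] at h3
      let Q : (ℕ → Bool) → Prop := fun z => z ∈ Sg U ∧ ∀ l, Le l (alt l) z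
      have parse : ∀ x, Q x → ∃ y, x = Sub (th f) y := by
        intro x hx
        apply Sub_parse (th_ne f) Q _ x hx
        rintro x ⟨hx, hq⟩
        have hx1 : x 1 = !(x 0) := by
          have h := Le_cons' (by rw [alt_zero]) (hq (x 0))
          rcases LX_head' h with h | h
          · simp only [dr, Nat.zero_add] at h
            rw [← h]; rfl
          · simp only [dr, Nat.zero_add] at h
            exact h.2
        refine ⟨x 0, dr 2 x, ?_, dr_Sg hx 2, ?_⟩
        · rw [hth]
          have := apL_pl 2 x
          rw [show pl 2 x = [x 0, x 1] by simp [pl, List.range_succ], hx1] at this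
          exact this.symm
        · intro l
          by_cases hl : l = x 0
          · subst hl
            have h := LX_pre' (R_irr _) 2 (fun i hi => by
              have : i = 0 ∨ i = 1 := by omega
              rcases this with rfl | rfl
              · rfl
              · rw [hx1]; rfl) (hq (x 0))
            rwa [dr_two_alt] at h
          · exact dbl x hx 1 l (by rw [hx1]; exact (eqn hl).symm)
      have QV : ∀ l, Q (dr 1 (U l)) := by
        intro l
        refine ⟨dr_Sg (hU.mem l) 1, fun t => ?_⟩
        by_cases ht : t = l
        · subst ht
          exact dbl _ (hU.mem t) 0 t (hU.zero t)
        · have := eqn ht; subst this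
          apply Le_head (alt_zero _)
          rw [Bool.not_not]; exact h1 l
      have hVx : ∀ l, ∃ y, dr 1 (U l) = Sub (th f) y := fun l => parse _ (QV l)
      choose V hV using hVx
      refine step f V ⟨fun l _ => h1 l, fun l hl => by simp [f] at hl, fun l _ => hV l⟩ ⟨true, rfl⟩ ?_
      intro h
      have hT : Thin (({alt false} : Set (ℕ → Bool)) ∪ {alt true}) :=
        Thin_union (Thin_singleton _) (Thin_singleton _)
      have hal : ∀ l, alt l ∈ (({alt false} : Set (ℕ → Bool)) ∪ {alt true}) := by
        intro l; cases l <;> simp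
      have h2 : Thin {y | ∃ m x z, x ∈ (({alt false} : Set (ℕ → Bool)) ∪ {alt true}) ∧
        z ∈ {x | x ∈ Sg U ∧ ∃ y, x = Sub (th f) y} ∧ y = cat m x z} :=
        Thin_concat hT h (fun y hy => hy)
      refine Thin_subset ?_ (Thin_union hT h2)
      intro x hx
      by_cases hx2 : ∀ i, x (i + 1) = !(x i)
      · left
        have : x = alt (x 0) := by
          funext i
          induction i with
          | zero => rfl
          | succ i ih' => rw [hx2, alt_succ, ← ih']
        rw [this]; exact hal _
      · right
        push Not at hx2
        classical
        have hsp := Nat.find_spec hx2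
        have hmin : ∀ i, i < Nat.find hx2 → x (i + 1) = !(x i) := fun i hi => by
          have := Nat.find_min hx2 hi
          rwa [not_not] at this
        set j := Nat.find hx2
        have hag : ∀ i, i < j + 1 → alt (x 0) i = x i := by
          intro i
          induction i with
          | zero => intro _; rfl
          | succ i ih' => intro hi; rw [alt_succ, ih' (by omega), hmin i (by omega)]
        have hq : Q (dr (j + 1) x) := by
          refine ⟨dr_Sg hx _, fun t => ?_⟩
          by_cases ht : t = x j
          · exact dbl x hx j t ht.symm
          · apply Le_head (alt_zero _)
            have : x (j + 1) = x j := by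
              have := eqn hsp; simpa using this
            simp only [dr, Nat.zero_add]
            rw [this, eqn ht, Bool.not_not]
        exact ⟨j + 1, alt (x 0), dr (j + 1) x, hal _, ⟨dr_Sg hx _, parse _ hq⟩, by
          rw [cat_agree hag, cat_dr]⟩

end EPM

namespace EPM

/-! ### the order on letters, larger alphabets -/

/-- the order on `ℕ` (`e = false`) and its opposite (`e = true`) -/
def rr (e : Bool) (a b : ℕ) : Prop := if e = true then b < a else a < b

lemma rr_irr (e : Bool) : ∀ a, ¬ rr e a a := by intro a; cases e <;> simp [rr]

lemma rr_as (e : Bool) : ∀ a b, rr e a b → ¬ rr e b a := by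
  intro a b; cases e <;> simp [rr] <;> omega

lemma rr_tr (e : Bool) : ∀ a b c, rr e a b → rr e b c → rr e a c := by
  intro a b c; cases e <;> simp [rr] <;> omega

lemma rr_tri (e : Bool) : ∀ a b, a ≠ b → rr e a b ∨ rr e b a := by
  intro a b; cases e <;> simp [rr] <;> omega

/-- the extreme letters -/
def epk (k : ℕ) (e : Bool) : ℕ := if e = true then k - 1 else 0

/-- the shift space written symmetrically -/
def SN (k : ℕ) (W : Bool → ℕ → ℕ) : Set (ℕ → ℕ) :=
  {x | (∀ i, x i < k) ∧ ∀ e n, LX (rr e) (W e) (dr n x)}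

lemma dr_SN {k : ℕ} {W : Bool → ℕ → ℕ} {x : ℕ → ℕ} (h : x ∈ SN k W) (m : ℕ) : dr m x ∈ SN k W := by
  refine ⟨fun i => h.1 _, fun e n => ?_⟩
  rw [dr_dr]; exact h.2 e _

/-- hypotheses on the pair of strings -/
structure HypN (k : ℕ) (W : Bool → ℕ → ℕ) (P : Bool → ℕ) : Prop where
  two : ∀ e, 2 ≤ P e
  zero : ∀ e, W e 0 = epk k e
  per : ∀ e, dr (P e) (W e) = W e
  mem : ∀ e, W e ∈ SN k W
  last : ∀ e, W e (P e - 1) ≠ W e 0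

/-- the conclusion -/
def Key (k : ℕ) (W : Bool → ℕ → ℕ) (P : Bool → ℕ) : Prop :=
  ∀ L : ℝ, 1 ≤ L → Grow (SN k W) L →
    Thin (SN k W) ∨ (1 / L) ^ P false + (1 / L) ^ P true ≤ 1

lemma pow_le_of_len {L : ℝ} (hL : 1 ≤ L) {P : Bool → ℕ} {m n : ℕ} (hm : m ≤ P false)
    (hn : n ≤ P true) (h : (1 / L) ^ m + (1 / L) ^ n ≤ 1) :
    (1 / L) ^ P false + (1 / L) ^ P true ≤ 1 := by
  have h0 : 0 ≤ 1 / L := by positivity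
  have h1 : 1 / L ≤ 1 := by rw [div_le_one (by linarith)]; exact hL
  have := pow_le_pow_of_le_one h0 h1 hm
  have := pow_le_pow_of_le_one h0 h1 hn
  linarith

lemma key_of_blocks {k : ℕ} {W : Bool → ℕ → ℕ} {P : Bool → ℕ} (c : Bool → List ℕ) (hd : Bool → ℕ)
    (hhd : ∀ b, ∃ t, c b = hd b :: t) (hinj : hd false ≠ hd true)
    (hlen : ∀ b, (c b).length ≤ P b) (hs : ∀ z, Sub c z ∈ SN k W) : Key k W P := by
  intro L hL hG
  right
  exact pow_le_of_len hL (hlen false) (hlen true) (renewal hhd hinj (by linarith) hG hs)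

lemma Sub_single (f : Bool → ℕ) (y : ℕ → Bool) : Sub (fun b => [f b]) y = fun n => f (y n) := by
  funext n
  induction n generalizing y with
  | zero => rw [Sub_eq (by simp)]; simp [apL]
  | succ n ih => rw [Sub_eq (by simp), apL_cons_succ, apL_nil, ih]; rfl

lemma key_four {k : ℕ} (hk : 4 ≤ k) {W : Bool → ℕ → ℕ} {P : Bool → ℕ} (h : HypN k W P) :
    Key k W P := by
  refine key_of_blocks (fun b => [if b = true then 2 else 1]) (fun b => if b = true then 2 else 1)
    (fun b => ⟨[], rfl⟩) (by simp) (fun b => by have := h.two b; simp; omega) (fun z => ?_)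
  rw [Sub_single]
  refine ⟨fun i => ?_, fun e n => LX_head ?_⟩
  · dsimp only; split_ifs <;> omega
  · rw [h.zero e]
    simp only [dr]
    cases e <;> simp [rr, epk] <;> split_ifs <;> omega

lemma len_le {c t : List Bool} (h : ∀ i, List.count i c ≤ List.count i t) : c.length ≤ t.length := by
  have hc : ∀ l : List Bool, l.length = List.count true l + List.count false l := by
    intro l
    induction l with
    | nil => rfl
    | cons a l ih => rw [List.length_cons, ih]; cases a <;> simp <;> omega
  rw [hc c, hc t]
  have := h true
  have := h false
  omega

lemma LX_toNat {e : Bool} {x y : ℕ → Bool} :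
    LX (rr e) (fun n => (x n).toNat) (fun n => (y n).toNat) ↔ Le e x y := by
  have hr : ∀ a b : Bool, rr e a.toNat b.toNat ↔ R e a b := by
    intro a b; cases e <;> cases a <;> cases b <;> simp [rr, R]
  have ht : ∀ a b : Bool, a.toNat = b.toNat ↔ a = b := by
    intro a b; cases a <;> cases b <;> simp
  constructor
  · rintro (h | ⟨m, h1, h2⟩)
    · left; funext i; exact (ht _ _).1 (congrFun h i)
    · exact Or.inr ⟨m, fun i hi => (ht _ _).1 (h1 i hi), (hr _ _).1 h2⟩
  · rintro (h | ⟨m, h1, h2⟩)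
    · left; rw [h]
    · exact Or.inr ⟨m, fun i hi => (ht _ _).2 (h1 i hi), (hr _ _).2 h2⟩

lemma key_two {W : Bool → ℕ → ℕ} {P : Bool → ℕ} (h : HypN 2 W P) : Key 2 W P := by
  set U : Bool → ℕ → Bool := fun e n => decide (W e n = 1) with hU
  have conv : ∀ x : ℕ → ℕ, (∀ i, x i < 2) → x = fun n => (decide (x n = 1)).toNat := by
    intro x hx; funext n
    have := hx n
    by_cases h1 : x n = 1
    · simp [h1]
    · simp [h1]; omega
  have hWU : ∀ e, W e = fun n => (U e n).toNat := fun e => conv _ (h.mem e).1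
  have hiff : ∀ y : ℕ → Bool, (fun n => (y n).toNat) ∈ SN 2 W ↔ y ∈ Sg U := by
    intro y
    constructor
    · intro hy e n
      have := hy.2 e n
      rw [hWU e] at this
      exact LX_toNat.1 this
    · intro hy
      refine ⟨fun i => by cases hyi : y i <;> simp [hyi], fun e n => ?_⟩
      rw [hWU e]
      exact LX_toNat.2 (hy e n)
  have hHyp : Hyp U P := by
    refine ⟨fun e => by have := h.two e; omega, fun e => ?_, fun e => ?_, fun e => ?_⟩
    · simp only [hU]; rw [h.zero e]; cases e <;> simp [epk]
    · funext n
      have := congrFun (h.per e) n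
      simp only [dr] at this
      simp only [hU, dr, this]
    · rw [← hiff, ← hWU e]; exact h.mem e
  rcases binary U P hHyp with hT | ⟨c, hc1, hc2, hc3⟩
  · intro L hL hG
    left
    refine Thin_subset ?_ (Thin_image (fun y n => (y n).toNat) ?_ hT)
    · intro x hx
      have := conv x hx.1
      refine ⟨fun n => decide (x n = 1), ?_, this.symm⟩
      rw [← hiff, ← this]; exact hx
    · intro x y n hxy i hi
      simp only [hxy i hi]
  · have hne : ∀ b, c b ≠ [] := fun b => by obtain ⟨t, ht⟩ := hc1 b; rw [ht]; simp
    have hlen : ∀ l : List Bool, (l.flatMap (fun b => [b.toNat])).length = l.length := by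
      intro l; induction l with
      | nil => rfl
      | cons a l ih => simp
    refine key_of_blocks (fun b => (c b).flatMap (fun b => [b.toNat])) (fun b => b.toNat) ?_ (by simp) ?_ ?_
    · intro b
      obtain ⟨t, ht⟩ := hc1 b
      exact ⟨_, by rw [ht, List.flatMap_cons]; rfl⟩
    · intro b
      rw [hlen]
      have := len_le (hc2 b)
      rwa [pl_length] at this
    · intro z
      rw [← Sub_Sub (c := fun b : Bool => [b.toNat]) (by simp) hne z, Sub_single, hiff]
      exact hc3 z

/-! ### three letters -/

lemma epk_three (e : Bool) : epk 3 e = if e = true then 2 else 0 := rfl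

lemma epk_cases {t : ℕ} (ht : t < 3) (e : Bool) : t = 1 ∨ t = epk 3 e ∨ t = epk 3 (!e) := by
  cases e <;> simp [epk] <;> omega

lemma rr_one (e : Bool) : rr e (epk 3 e) 1 := by cases e <;> simp [rr, epk]

lemma rr_one' (e : Bool) : rr e 1 (epk 3 (!e)) := by cases e <;> simp [rr, epk]

lemma rr_ep (e : Bool) : rr e (epk 3 e) (epk 3 (!e)) := by cases e <;> simp [rr, epk]

lemma rr_ep_of_ne {t : ℕ} (ht : t < 3) {e : Bool} (h : t ≠ epk 3 e) : rr e (epk 3 e) t := by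
  rcases epk_cases ht e with rfl | h' | rfl
  · exact rr_one e
  · exact absurd h' h
  · exact rr_ep e

/-- the case where one of the strings is beyond `e 1 1 1 ⋯` -/
lemma key_three_a {W : Bool → ℕ → ℕ} {P : Bool → ℕ} (h : HypN 3 W P) (e : Bool) (m : ℕ)
    (hm : ∀ i, i < m → W e i = cs (epk 3 e) (fun _ => 1) i)
    (hr : rr e (W e m) (cs (epk 3 e) (fun _ => 1) m)) : Key 3 W P := by
  have hm0 : m ≠ 0 := by
    rintro rfl
    rw [h.zero e] at hr
    exact rr_irr e _ hr
  obtain ⟨s, rfl⟩ : ∃ s, m = s + 1 := ⟨m - 1, by omega⟩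
  have hWm : W e (s + 1) = epk 3 e := by
    have h1 : rr e (W e (s + 1)) 1 := hr
    rcases epk_cases ((h.mem e).1 (s + 1)) e with h2 | h2 | h2
    · rw [h2] at h1; exact absurd h1 (rr_irr e 1)
    · exact h2
    · rw [h2] at h1; exact absurd h1 (rr_as e _ _ (rr_one' e))
  have hW1 : ∀ i, i < s → W e (i + 1) = 1 := fun i hi => hm (i + 1) (by omega)
  have hne1 : epk 3 e ≠ 1 := by cases e <;> simp [epk]
  have hper : ∀ i, W e (i + P e) = W e i := fun i => congrFun (h.per e) i
  have hPs : s + 1 ≤ P e := by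
    by_contra hlt
    have h2 := h.two e
    have h1 := hW1 (P e - 1) (by omega)
    have h3 := hper 0
    rw [Nat.zero_add, h.zero e] at h3
    rw [Nat.sub_add_cancel (by omega), h3] at h1
    exact hne1 h1
  have hPs2 : P e ≠ s + 2 := by
    intro h2
    have := h.last e
    rw [h2, h.zero e] at this
    exact this hWm
  -- length of the run of ones
  obtain ⟨i, hi, hlen⟩ : ∃ i, ((i = s ∧ P e = s + 1) ∨ i = s + 1) ∧ i + 1 ≤ P e := by
    by_cases h1 : P e = s + 1
    · exact ⟨s, Or.inl ⟨rfl, h1⟩, by omega⟩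
    · exact ⟨s + 1, Or.inr rfl, by omega⟩
  set d : Bool → List ℕ := fun b => if b = e then epk 3 e :: List.replicate i 1 else [1] with hd
  have hde : d e = epk 3 e :: List.replicate i 1 := by simp [hd]
  have hdn : ∀ b, b ≠ e → d b = [1] := fun b hb => by simp [hd, hb]
  set hdd : Bool → ℕ := fun b => if b = e then epk 3 e else 1 with hhdd
  have hhd : ∀ b, ∃ t, d b = hdd b :: t := by
    intro b
    by_cases hb : b = e
    · subst hb; exact ⟨List.replicate i 1, by rw [hde]; simp [hhdd]⟩
    · exact ⟨[], by rw [hdn b hb]; simp [hhdd, hb]⟩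
  have hne : ∀ b, d b ≠ [] := fun b => by obtain ⟨t, ht⟩ := hhd b; rw [ht]; simp
  refine key_of_blocks d hdd hhd ?_ ?_ ?_
  · cases e <;> simp [hhdd, epk]
  · intro b
    by_cases hb : b = e
    · subst hb; rw [hde]; simpa using hlen
    · rw [hdn b hb]; have := h.two b; simp; omega
  · intro z
    have claim : ∀ n, Sub d z n = 1 ∨ ∃ z', z' 0 = e ∧ dr n (Sub d z) = Sub d z' := by
      intro n
      obtain ⟨m', k', hk', hn, hdr⟩ := dr_Sub hne z n
      have h0 := congrFun hdr 0
      simp only [dr, Nat.zero_add] at h0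
      by_cases hb : z m' = e
      · rcases Nat.eq_zero_or_pos k' with rfl | hk0
        · right
          refine ⟨dr m' z, by simpa [dr] using hb, ?_⟩
          rw [hn, Nat.add_zero, dr_bl hne]
        · left
          rw [h0, hb, hde]
          obtain ⟨k'', rfl⟩ : ∃ k'', k' = k'' + 1 := ⟨k' - 1, by omega⟩
          rw [hb, hde] at hk'
          simp only [List.length_cons, List.length_replicate] at hk'
          rw [List.drop_succ_cons, apL_lt (by simp; omega)]
          simp
      · left
        rw [hdn _ hb] at hk' h0
        simp only [List.length_cons, List.length_nil] at hk'
        obtain rfl : k' = 0 := by omega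
        rw [h0]; simp [apL]
    have head : ∀ z', z' 0 = e → Sub d z' 0 = epk 3 e := by
      intro z' hz'
      rw [Sub_eq hne, hz', hde, apL_cons_zero]
    have vals : ∀ n, Sub d z n = 1 ∨ Sub d z n = epk 3 e := by
      intro n
      rcases claim n with h1 | ⟨z', h1, h2⟩
      · exact Or.inl h1
      · right
        have := congrFun h2 0
        simp only [dr, Nat.zero_add] at this
        rw [this, head z' h1]
    refine ⟨fun n => ?_, fun l n => ?_⟩
    · rcases vals n with h1 | h1 <;> rw [h1]
      · norm_num
      · cases e <;> simp [epk]
    · by_cases hl : l = e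
      · subst hl
        rcases claim n with h1 | ⟨z', h1, h2⟩
        · apply LX_head
          simp only [dr, Nat.zero_add]
          rw [h1, h.zero]; exact rr_one l
        · rw [h2]
          rcases hi with ⟨rfl, hPe⟩ | rfl
          · have hW : W l = Sub d (fun _ => l) := by
              have e1 : W l = apL (d l) (W l) := by
                have hpl : pl (P l) (W l) = d l := by
                  rw [hPe, Nat.add_comm, pl_add, hde]
                  have : pl 1 (W l) = [epk 3 l] := by simp [pl, h.zero]
                  rw [this]
                  simp only [List.cons_append, List.nil_append, List.cons.injEq, true_and]
                  rw [List.eq_replicate_iff]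
                  refine ⟨pl_length _ _, ?_⟩
                  intro b hb
                  simp only [pl, List.mem_map, List.mem_range] at hb
                  obtain ⟨t, ht, rfl⟩ := hb
                  exact hW1 t ht
                conv_lhs => rw [← apL_pl (P l) (W l), h.per l, hpl]
              exact apL_inj_fix (hne l) e1 (Sub_eq hne _)
            rw [hW]
            refine Sub_mono hne hhd (r := R l) ?_ (Le_const (fun _ => rfl))
            rintro a b ⟨rfl, rfl⟩
            simp only [hhdd, if_true]
            rw [if_neg neqn]
            exact rr_one a
          · refine Or.inr ⟨s + 1, fun j hj => ?_, ?_⟩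
            · rw [Sub_eq hne, h1, hde]
              rcases j with _ | j
              · rw [apL_cons_zero, h.zero]
              · rw [apL_cons_succ, apL_lt (by simp; omega), hW1 j (by omega)]; simp
            · rw [hWm, Sub_eq hne, h1, hde, apL_cons_succ, apL_lt (by simp)]
              simp only [List.getElem_replicate]
              exact rr_one l
      · apply LX_head
        have hl' := eqn hl
        subst hl'
        simp only [dr, Nat.zero_add]
        rw [h.zero]
        rcases vals n with h1 | h1 <;> rw [h1]
        · exact rr_one _
        · have := rr_ep (!e); rwa [Bool.not_not] at this

end EPM

namespace EPM

/-- discrete derivative of a binary sequence -/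
def D (y : ℕ → Bool) (n : ℕ) : ℕ := if y n = y (n + 1) then 1 else epk 3 (y (n + 1))

/-- one step of the derivative -/
def Dl (s t : Bool) : ℕ := if s = t then 1 else epk 3 t

lemma D_dl (y : ℕ → Bool) (n : ℕ) : D y n = Dl (y n) (y (n + 1)) := rfl

/-- integration -/
def Int3 (b : Bool) (x : ℕ → ℕ) : ℕ → Bool
  | 0 => b
  | n + 1 => if x n = 0 then false else if x n = 2 then true else Int3 b x n

lemma D_lt (y : ℕ → Bool) (n : ℕ) : D y n < 3 := by
  simp only [D, epk]; split_ifs <;> norm_num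

lemma D_dr (y : ℕ → Bool) (m : ℕ) : D (dr m y) = dr m (D y) := by
  funext n
  simp only [D_dl, dr]
  rw [show n + 1 + m = n + m + 1 by omega]

lemma D_eq_ep {y : ℕ → Bool} {n : ℕ} {e : Bool} (h : D y n = epk 3 e) :
    y n = (!e) ∧ y (n + 1) = e := by
  simp only [D, epk] at h
  cases h1 : y n <;> cases h2 : y (n + 1) <;> cases e <;> simp_all

lemma D_step {y y' : ℕ → Bool} {n : ℕ} (h0 : y n = y' n) (h : D y n = D y' n) :
    y (n + 1) = y' (n + 1) := by
  simp only [D, epk] at h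
  cases h1 : y n <;> cases h2 : y (n + 1) <;> cases h3 : y' (n + 1) <;> simp_all

lemma D_inj_upto {y y' : ℕ → Bool} {m : ℕ} (h0 : y 0 = y' 0) (h : ∀ i, i < m → D y i = D y' i) :
    ∀ i, i ≤ m → y i = y' i := by
  intro i
  induction i with
  | zero => intro _; exact h0
  | succ i ih => intro hi; exact D_step (ih (by omega)) (h i (by omega))

lemma D_inj {y y' : ℕ → Bool} (h0 : y 0 = y' 0) (h : D y = D y') : y = y' := by
  funext i
  exact D_inj_upto (m := i) h0 (fun j _ => congrFun h j) i le_rfl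

lemma D_mono {e : Bool} {y y' : ℕ → Bool} (h0 : y 0 = y' 0) (h : Le e y y') :
    LX (rr e) (D y) (D y') := by
  rcases h with rfl | ⟨m, hm, hr1, hr2⟩
  · exact LX_refl _ _
  rcases m with _ | m
  · rw [h0, hr2] at hr1; exact absurd hr1 neqn
  refine Or.inr ⟨m, fun i hi => ?_, ?_⟩
  · simp only [D]; rw [hm i (by omega), hm (i + 1) (by omega)]
  · have := hm m (by omega)
    simp only [D]
    rw [hr1, hr2, this]
    cases e <;> cases y' m <;> simp [rr, epk]

lemma D_reflect {e : Bool} {y y' : ℕ → Bool} (h0 : y 0 = y' 0)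
    (h : LX (rr e) (D y) (D y')) : Le e y y' := by
  rcases h with h | ⟨m, hm, hr⟩
  · exact Or.inl (D_inj h0 h)
  · have h1 := D_inj_upto h0 hm
    have h2 := h1 m le_rfl
    refine Or.inr ⟨m + 1, fun i hi => h1 i (by omega), ?_⟩
    simp only [D] at hr
    rw [h2] at hr
    cases e <;> cases h3 : y' m <;> cases h4 : y (m + 1) <;> cases h5 : y' (m + 1) <;>
      simp_all [rr, epk, R]

lemma Int3_D (y : ℕ → Bool) : Int3 (y 0) (D y) = y := by
  funext n
  induction n with
  | zero => rfl
  | succ n ih =>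
    rw [Int3, ih, D_dl]
    generalize y n = s
    generalize y (n + 1) = t
    cases s <;> cases t <;> simp [Dl, epk]

/-- the remaining case for three letters -/
lemma key_three_b {W : Bool → ℕ → ℕ} {P : Bool → ℕ} (h : HypN 3 W P)
    (hB : ∀ e, LX (rr e) (cs (epk 3 e) (fun _ => 1)) (W e)) : Key 3 W P := by
  have hB' : ∀ e, LX (rr e) (fun _ => 1) (dr 1 (W e)) := by
    intro e
    have := LX_cons' (rr_irr e) (by rw [h.zero e, cs_zero]) (hB e)
    rwa [dr_cs] at this
  -- integration of elements of the shift space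
  have integ : ∀ x ∈ SN 3 W, ∀ b, LX (rr b) (fun _ => 1) x → D (Int3 b x) = x := by
    intro x hx b hb
    have notep : ∀ n e, LX (rr e) (fun _ => 1) (dr n x) → x n ≠ epk 3 e := by
      intro n e h1 h2
      rcases LX_head' h1 with h3 | h3
      · simp only [dr, Nat.zero_add] at h3
        rw [h2] at h3
        cases e <;> simp [epk] at h3
      · simp only [dr, Nat.zero_add] at h3
        rw [h2] at h3
        exact rr_as e _ _ h3 (rr_one e)
    have inv : ∀ n, LX (rr (Int3 b x n)) (fun _ => 1) (dr n x) := by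
      intro n
      induction n with
      | zero => exact hb
      | succ n ih =>
        set e := Int3 b x n with he
        have hne := notep n e ih
        rcases epk_cases (hx.1 n) e with h1 | h1 | h1
        · have : Int3 b x (n + 1) = e := by rw [Int3, h1]; simp [he]
          rw [this]
          have h2 := LX_cons' (rr_irr e) (by simp [dr, h1]) ih
          rw [dr_dr] at h2
          exact h2
        · exact absurd h1 hne
        · have : Int3 b x (n + 1) = !e := by
            rw [Int3, h1]; cases e <;> simp [epk]
          rw [this]
          have h2 := LX_cons' (rr_irr (!e)) (by rw [h.zero]; simp [dr, h1]) (hx.2 (!e) n)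
          rw [dr_dr] at h2
          exact LX_trans (rr_tr _) (hB' (!e)) h2
    funext n
    have hne := notep n _ (inv n)
    have hlt := hx.1 n
    simp only [D]
    rw [Int3]
    cases h1 : Int3 b x n
    · rw [h1] at hne
      simp only [epk] at hne ⊢
      by_cases h2 : x n = 2
      · simp [h2]
      · have : x n = 1 := by simp at hne; omega
        simp [this]
    · rw [h1] at hne
      simp only [epk] at hne ⊢
      by_cases h2 : x n = 0
      · simp [h2]
      · have : x n = 1 := by simp at hne; omega
        simp [this]
  have tot : ∀ x : ℕ → ℕ, ∃ b, LX (rr b) (fun _ => 1) x := by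
    intro x
    rcases LX_total (rr_tri false) (fun _ => 1) x with h1 | ⟨m, h1, h2⟩
    · exact ⟨false, h1⟩
    · refine ⟨true, Or.inr ⟨m, fun i hi => (h1 i hi).symm, ?_⟩⟩
      simpa [rr] using h2
  set U : Bool → ℕ → Bool := fun e => Int3 e (dr 1 (W e)) with hU
  have hU0 : ∀ e, U e 0 = e := fun e => rfl
  have hDU : ∀ e, D (U e) = dr 1 (W e) := fun e => integ _ (dr_SN (h.mem e) 1) e (hB' e)
  have hWD : ∀ e, W e = D (cs (!e) (U e)) := by
    intro e
    apply agree_split (m := 1)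
    · intro i hi
      obtain rfl : i = 0 := by omega
      rw [h.zero]
      simp only [D, cs, hU0]
      rw [if_neg neqn]
    · rw [← D_dr, dr_cs, hDU]
  have hlast : ∀ e, U e (P e - 1) = (!e) ∧ U e (P e) = e := by
    intro e
    have h2 := h.two e
    have h1 := congrFun (hDU e) (P e - 1)
    have h3 := congrFun (h.per e) 0
    simp only [dr, Nat.zero_add] at h1 h3
    rw [Nat.sub_add_cancel (by omega), h3, h.zero] at h1
    have := D_eq_ep h1
    rwa [Nat.sub_add_cancel (by omega)] at this
  have hper : ∀ e, dr (P e) (U e) = U e := by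
    intro e
    apply D_inj
    · simp only [dr, Nat.zero_add]; rw [(hlast e).2, hU0]
    · rw [D_dr, hDU, per_dr (h.per e)]
  have S1 : ∀ y ∈ Sg U, D y ∈ SN 3 W := by
    intro y hy
    refine ⟨D_lt y, fun e n => ?_⟩
    by_cases h1 : D y n = epk 3 e
    · obtain ⟨h2, h3⟩ := D_eq_ep h1
      rw [hWD e, ← D_dr]
      have h0 : cs (!e) (U e) 0 = dr n y 0 := by simp [cs, dr, h2]
      apply D_mono h0
      apply Le_cons h0
      rw [dr_cs, dr_dr]
      exact hy e _
    · apply LX_head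
      rw [h.zero]
      simp only [dr, Nat.zero_add]
      exact rr_ep_of_ne (D_lt y n) h1
  have S2 : ∀ y, D y ∈ SN 3 W → ∀ e n, y n = (!e) → ∀ j, Le e (U e) (dr (n + j) y) := by
    intro y hy e n hn j
    induction j with
    | zero => exact Le_head (hU0 e) (by simpa [dr] using hn)
    | succ j ih =>
      by_cases h1 : y (n + (j + 1)) = e
      · by_cases h2 : y (n + j) = e
        · have := Le_shift (e := e) (x := dr (n + j) y) (by simpa [dr] using h2)
          rw [dr_dr] at this
          exact Le_trans ih this
        · have h2' := eqn h2
          have h3 : LX (rr e) (W e) (dr (n + j) (D y)) := hy.2 e _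
          rw [hWD e, ← D_dr] at h3
          have h0 : cs (!e) (U e) 0 = dr (n + j) y 0 := by simp [cs, dr, h2']
          have h4 := Le_cons' h0 (D_reflect h0 h3)
          rw [dr_cs, dr_dr] at h4
          exact h4
      · exact Le_head (hU0 e) (by simpa [dr] using eqn h1)
  have hmem : ∀ e, U e ∈ Sg U := by
    intro l e n
    have hy : D (U l) ∈ SN 3 W := by rw [hDU]; exact dr_SN (h.mem l) 1
    obtain ⟨j, hj, hj'⟩ : ∃ j, j ≤ P l ∧ U l j = !e := by
      by_cases hl : l = e
      · subst hl; exact ⟨P l - 1, by omega, (hlast l).1⟩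
      · exact ⟨0, by omega, by rw [hU0]; exact eqn hl⟩
    have h1 := S2 _ hy e j hj' (P l - j + n)
    rw [show j + (P l - j + n) = P l + n by omega, ← dr_dr, hper l] at h1
    exact h1
  have hHyp : Hyp U P := ⟨fun e => by have := h.two e; omega, hU0, hper, hmem⟩
  rcases binary U P hHyp with hT | ⟨c, hc1, hc2, hc3⟩
  · intro L hL hG
    left
    have hC : Thin (({fun _ => false} : Set (ℕ → Bool)) ∪ {fun _ => true}) :=
      Thin_union (Thin_singleton _) (Thin_singleton _)
    have hCm : ∀ b : Bool, (fun _ => b) ∈ (({fun _ => false} : Set (ℕ → Bool)) ∪ {fun _ => true}) := by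
      intro b; cases b <;> simp
    have hT2 : Thin {y | ∃ m x z, x ∈ (({fun _ => false} : Set (ℕ → Bool)) ∪ {fun _ => true}) ∧
        z ∈ Sg U ∧ y = cat m x z} := Thin_concat hC hT (fun y hy => hy)
    have hTT : Thin {y | D y ∈ SN 3 W} := by
      refine Thin_subset ?_ (Thin_union hC hT2)
      intro y hy
      have hy : D y ∈ SN 3 W := hy
      by_cases hcst : ∀ i, y i = y 0
      · left
        have : y = fun _ => y 0 := funext hcst
        rw [this]; exact hCm _
      · right
        push Not at hcst
        classical
        have hsp := Nat.find_spec hcst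
        have hmin : ∀ i, i < Nat.find hcst → y i = y 0 := fun i hi => by
          simpa using Nat.find_min hcst hi
        set j := Nat.find hcst
        refine ⟨j, fun _ => y 0, dr j y, hCm _, ?_, ?_⟩
        · intro e n
          rw [dr_dr]
          by_cases he : e = y 0
          · exact S2 y hy e j (by rw [he]; exact eqn hsp) n
          · have := S2 y hy e 0 (by rw [eqn he, Bool.not_not]) (j + n)
            rwa [Nat.zero_add] at this
        · rw [cat_agree (y := y) (fun i hi => (hmin i hi).symm), cat_dr]
    have caus : ∀ b, ∀ x y : ℕ → Bool, ∀ n, (∀ i, i < n → x i = y i) → ∀ i, i < n →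
        D (cs b x) i = D (cs b y) i := by
      intro b x y n hxy i hi
      have h1 : cs b x i = cs b y i := by
        rcases i with _ | i
        · rfl
        · exact hxy i (by omega)
      have h2 : cs b x (i + 1) = cs b y (i + 1) := hxy i hi
      rw [D_dl, D_dl, h1, h2]
    refine Thin_subset ?_ (Thin_union (Thin_image (fun y => D (cs false y)) (caus false) hTT)
      (Thin_image (fun y => D (cs true y)) (caus true) hTT))
    intro x hx
    obtain ⟨b, hb⟩ := tot x
    have h1 := integ x hx b hb
    set y := Int3 b x with hy
    have h2 : y = cs b (dr 1 y) := by
      funext i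
      rcases i with _ | i
      · rfl
      · rfl
    have h3 : dr 1 y ∈ {y | D y ∈ SN 3 W} := by
      change D (dr 1 y) ∈ SN 3 W
      rw [D_dr, h1]; exact dr_SN hx 1
    have h4 : D (cs b (dr 1 y)) = x := by rw [← h2, h1]
    cases b
    · exact Or.inl ⟨_, h3, h4⟩
    · exact Or.inr ⟨_, h3, h4⟩
  · intro L hL hG
    right
    have caus : ∀ b, ∀ x y : ℕ → ℕ, ∀ n, (∀ i, i < n → x i = y i) → ∀ i, i < n →
        Int3 b x i = Int3 b y i := by
      intro b x y n hxy i
      induction i with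
      | zero => intro _; rfl
      | succ i ih =>
        intro hi
        rw [Int3, Int3, hxy i (by omega), ih (by omega)]
    have hGS : Grow (Sg U) L := by
      refine Grow_subset ?_ (Grow_union (Grow_image (Int3 false) (caus false) hG)
        (Grow_image (Int3 true) (caus true) hG))
      intro y hy
      have h1 := S1 y hy
      have h2 := Int3_D y
      cases hb : y 0
      · rw [hb] at h2; exact Or.inl ⟨_, h1, h2⟩
      · rw [hb] at h2; exact Or.inr ⟨_, h1, h2⟩
    have hl : ∀ b, (c b).length ≤ P b := by
      intro b
      have := len_le (hc2 b)
      rwa [pl_length] at this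
    exact pow_le_of_len hL (hl false) (hl true)
      (renewal (hd := fun b => b) hc1 (by simp) (by linarith) hGS hc3)

lemma key_all {k : ℕ} (hk : 2 ≤ k) {W : Bool → ℕ → ℕ} {P : Bool → ℕ} (h : HypN k W P) :
    Key k W P := by
  rcases Nat.lt_or_ge k 4 with h4 | h4
  · rcases Nat.lt_or_ge k 3 with h3 | h3
    · obtain rfl : k = 2 := by omega
      exact key_two h
    · obtain rfl : k = 3 := by omega
      by_cases hB : ∀ e, LX (rr e) (cs (epk 3 e) (fun _ => 1)) (W e)
      · exact key_three_b h hB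
      · push Not at hB
        obtain ⟨e, he⟩ := hB
        rcases LX_total (rr_tri e) (cs (epk 3 e) (fun _ => 1)) (W e) with h1 | ⟨m, h1, h2⟩
        · exact absurd h1 he
        · exact key_three_a h e m h1 h2
  · exact key_four h4 h

end EPM

namespace EPM

lemma SN_eq (k : ℕ) (u v : ℕ → ℕ) : SN k (fun e => if e = true then v else u) = SigSet k u v := by
  ext x
  rw [mem_SigSet]
  have h1 : ∀ y, LX (rr false) u y ↔ LX (· < ·) u y := by
    intro y
    have : rr false = (· < ·) := by funext a b; simp [rr]
    rw [this]
  have h2 : ∀ y, LX (rr true) v y ↔ LX (· < ·) y v := by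
    intro y
    have : rr true = (fun a b => b < a) := by funext a b; simp [rr]
    rw [this]
    exact ⟨fun h => LX_swap h, fun h => LX_swap h⟩
  constructor
  · intro hx
    refine ⟨hx.1, fun n => ⟨?_, ?_⟩⟩
    · exact (h1 _).1 (by simpa using hx.2 false n)
    · exact (h2 _).1 (by simpa using hx.2 true n)
  · intro hx
    refine ⟨hx.1, fun e n => ?_⟩
    cases e
    · simpa using (h1 _).2 (hx.2 n).1
    · simpa using (h2 _).2 (hx.2 n).2

lemma key_sig (k p q : ℕ) (hk : 2 ≤ k) (hp : 2 ≤ p) (hq : 2 ≤ q)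
    (a b : ℕ → ℕ) (ha : ∀ i, i < p → a i < k) (hb : ∀ i, i < q → b i < k)
    (ha0 : a 0 = 0) (hb0 : b 0 = k - 1) (u v : ℕ → ℕ)
    (hua : u = fun n => a (n % p)) (hvb : v = fun n => b (n % q))
    (hcond : ∀ n, lexLe u (shft^[n] u) ∧ lexLe (shft^[n] u) v ∧
                  lexLe u (shft^[n] v) ∧ lexLe (shft^[n] v) v)
    (hap : 1 ≤ a (p - 1)) (hbq : b (q - 1) ≤ k - 2) {L : ℝ} (hL : 1 ≤ L)
    (hG : Grow (SigSet k u v) L) :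
    Thin (SigSet k u v) ∨ (1 / L) ^ p + (1 / L) ^ q ≤ 1 := by
  have hu : u ∈ SigSet k u v :=
    ⟨fun i => by rw [hua]; exact ha _ (Nat.mod_lt _ (by omega)), fun n => ⟨(hcond n).1, (hcond n).2.1⟩⟩
  have hv : v ∈ SigSet k u v :=
    ⟨fun i => by rw [hvb]; exact hb _ (Nat.mod_lt _ (by omega)),
      fun n => ⟨(hcond n).2.2.1, (hcond n).2.2.2⟩⟩
  have hH : HypN k (fun e => if e = true then v else u) (fun e => if e = true then q else p) := by
    refine ⟨?_, ?_, ?_, ?_, ?_⟩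
    · intro e; cases e <;> simpa
    · intro e; cases e
      · simp [epk, hua, ha0]
      · simp [epk, hvb, hb0]
    · intro e; cases e
      · simp only [Bool.false_eq_true, if_false]; funext n; simp [dr, hua]
      · simp only [if_true]; funext n; simp [dr, hvb]
    · intro e; rw [SN_eq]; cases e
      · simpa using hu
      · simpa using hv
    · intro e; cases e
      · simp only [Bool.false_eq_true, if_false, hua]
        rw [Nat.mod_eq_of_lt (by omega), Nat.zero_mod]; omega
      · simp only [if_true, hvb]
        rw [Nat.mod_eq_of_lt (by omega), Nat.zero_mod]; omega
  have := key_all hk hH L hL (by rw [SN_eq]; exact hG)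
  rw [SN_eq] at this
  simpa using this

end EPM

/-- **Entropy equality for the two periodic modifications.** Let `k ≥ 2`, `p, q ≥ 2`,
let `a` be a word of length `p` with `a₀ = 0` and `b` a word of length `q` with
`b₀ = k−1`; let `u = a^∞`, `v = b^∞`, with `p`, `q` the minimal periods of `u`, `v`;
assume `u ≼ σⁿu ≼ v` and `u ≼ σⁿv ≼ v` for all `n ≥ 0`, `a_{p−1} ≥ 1` and
`b_{q−1} ≤ k−2`. Set `a′ = a₀⋯a_{p−2}(a_{p−1}−1)`, `b′ = b₀⋯b_{q−2}(b_{q−1}+1)`,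
`u* = a′ ⌢ b^∞`, `v* = b′ ⌢ a^∞`. If `h(Σ(u,v)) > 0`, then
`h(Σ(u,v)) = h(Σ(u*,v*))`. -/
theorem entropy_periodic_modifications (k p q : ℕ) (hk : 2 ≤ k) (hp : 2 ≤ p) (hq : 2 ≤ q)
    (a b : ℕ → ℕ) (ha : ∀ i, i < p → a i < k) (hb : ∀ i, i < q → b i < k)
    (ha0 : a 0 = 0) (hb0 : b 0 = k - 1)
    (u v ustar vstar : ℕ → ℕ)
    (hua : u = fun n => a (n % p)) (hvb : v = fun n => b (n % q))
    (hpmin : ∀ m, 1 ≤ m → m < p → shft^[m] u ≠ u)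
    (hqmin : ∀ m, 1 ≤ m → m < q → shft^[m] v ≠ v)
    (hcond : ∀ n, lexLe u (shft^[n] u) ∧ lexLe (shft^[n] u) v ∧
                  lexLe u (shft^[n] v) ∧ lexLe (shft^[n] v) v)
    (hap : 1 ≤ a (p - 1)) (hbq : b (q - 1) ≤ k - 2)
    (hustar : ustar = wcat p (fun i => if i = p - 1 then a (p - 1) - 1 else a i) v)
    (hvstar : vstar = wcat q (fun i => if i = q - 1 then b (q - 1) + 1 else b i) u) :
    0 < entS k u v → entS k u v = entS k ustar vstar := by
  intro hpos
  have hlog : ∀ s : ℝ, Real.logb 2 ((2 : ℝ) ^ s) = s := fun s =>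
    Real.logb_rpow (by norm_num) (by norm_num)
  have hone : ∀ s : ℝ, 0 ≤ s → (1 : ℝ) ≤ (2 : ℝ) ^ s := fun s hs =>
    Real.one_le_rpow (by norm_num) hs
  have hgr : ∀ (u' v' : ℕ → ℕ) (s : ℝ), 0 ≤ s → entS k u' v' < s →
      EPM.Grow (SigSet k u' v') ((2 : ℝ) ^ s) := fun u' v' s hs h =>
    EPM.Grow_of_ent_lt (hone s hs) (by rw [hlog]; exact h)
  have hen : ∀ (u' v' : ℕ → ℕ) (s : ℝ), 0 ≤ s → EPM.Grow (SigSet k u' v') ((2 : ℝ) ^ s) →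
      entS k u' v' ≤ s := fun u' v' s hs h => by
    have := EPM.ent_le_of_Grow (hone s hs) h
    rwa [hlog] at this
  have hsub := EPM.lower_sub k p q hp hq a b u v ustar vstar hua hvb hap hustar hvstar
  apply le_antisymm
  · by_contra hlt
    push Not at hlt
    set s := max ((entS k u v + entS k ustar vstar) / 2) (entS k u v / 2) with hs
    have h1 : entS k ustar vstar < s := lt_of_lt_of_le (by linarith) (le_max_left _ _)
    have h2 : s < entS k u v := max_lt (by linarith) (by linarith)
    have h3 : 0 ≤ s := le_trans (by linarith) (le_max_right _ _)
    have h4 := hen u v s h3 (EPM.Grow_subset hsub (hgr _ _ s h3 h1))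
    linarith
  · apply le_of_forall_pos_le_add
    intro ε hε
    set s := entS k u v + ε / 2 with hs
    have h0 : 0 ≤ s := by linarith
    have hG := hgr u v s h0 (by linarith)
    rcases EPM.key_sig k p q hk hp hq a b ha hb ha0 hb0 u v hua hvb hcond hap hbq (hone s h0) hG with
      hT | hx
    · exfalso
      have h1 := hen u v (entS k u v / 2) (by linarith)
        (hT _ (Real.one_lt_rpow (by norm_num) (by linarith)))
      linarith
    · have hLL : (2 : ℝ) ^ s < (2 : ℝ) ^ (entS k u v + ε) :=
        Real.rpow_lt_rpow_of_exponent_lt (by norm_num) (by linarith)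
      exact hen ustar vstar (entS k u v + ε) (by linarith)
        (EPM.upper_Grow k p q hp hq a b ha hb u v ustar vstar hua hvb hcond hap hbq hustar hvstar
          (hone s h0) hLL hG hx)
end
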